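/- Let r ≥ 2 and let 1 ≤ d_1 ≤ ⋯ ≤ d_r be integers. Let Z ⊆ W_{r,d_1}×⋯×W_{r,d_r} be the set of tuples (F_1,…,F_r) with dim V(F_1,…,F_r) ≥ 1, let D ⊆ W_{r,d_1}×⋯×W_{r,d_r} be the set of tuples with dim V(F_1,…,F_{r−1}) ≥ 2, and let L be the set of tuples (F_1,…,F_r) such that V(F_1,…,F_r) contains a line of ℙ^r. Then the Zariski closure of Z \ D has a unique irreducible component of maximal dimension, and this component equals L; in particular, that component consists of tuples of homogeneous forms all vanishing on some common line. -/

import Mathlib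

open MvPolynomial

noncomputable section

variable (K : Type*) [Field K] (M : Type*) [AddCommGroup M] [Module K M]

/-- Evaluation of a polynomial in the linear functionals of `M` at a point `v : M`.
These are precisely the polynomial functions on the affine space `M`. -/
def polyEval (p : MvPolynomial (M →ₗ[K] K) K) (v : M) : K :=
  MvPolynomial.eval (fun φ : M →ₗ[K] K => φ v) p

lemma polyEval_mul (p q : MvPolynomial (M →ₗ[K] K) K) (v : M) :
    polyEval K M (p * q) v = polyEval K M p v * polyEval K M q v :=
  map_mul (MvPolynomial.eval fun φ : M →ₗ[K] K => φ v) p q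

/-- The collection of Zariski-closed subsets of the affine space `M`:
common zero loci of families of polynomial functions. -/
def zariskiCloseds : Set (Set M) :=
  {s | ∃ S : Set (MvPolynomial (M →ₗ[K] K) K), s = {v | ∀ p ∈ S, polyEval K M p v = 0}}

/-- The Zariski topology on an affine space (vector space) `M` over `K`. -/
def zariskiTopology : TopologicalSpace M := by
  refine TopologicalSpace.ofClosed (zariskiCloseds K M) ⟨{1}, ?_⟩ ?_ ?_
  · ext v
    simp [polyEval]
  · intro A hA
    choose S hS using fun a : A => hA a.2
    refine ⟨⋃ a : A, S a, ?_⟩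
    ext v
    simp only [Set.mem_sInter, Set.mem_setOf_eq, Set.mem_iUnion]
    constructor
    · rintro h p ⟨a, hp⟩
      have := h a a.2
      rw [hS a] at this
      exact this p hp
    · intro h t ht
      have : v ∈ {w | ∀ p ∈ S ⟨t, ht⟩, polyEval K M p w = 0} :=
        fun p hp => h p ⟨⟨t, ht⟩, hp⟩
      rw [← hS ⟨t, ht⟩] at this
      exact this
  · rintro s ⟨S₁, rfl⟩ t ⟨S₂, rfl⟩
    refine ⟨Set.image2 (· * ·) S₁ S₂, ?_⟩
    ext v
    simp only [Set.mem_union, Set.mem_setOf_eq]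
    constructor
    · rintro (h | h) p ⟨p₁, h₁, p₂, h₂, rfl⟩
      · show polyEval K M (p₁ * p₂) v = 0
        rw [polyEval_mul, h p₁ h₁, zero_mul]
      · show polyEval K M (p₁ * p₂) v = 0
        rw [polyEval_mul, h p₂ h₂, mul_zero]
    · intro h
      by_contra hc
      push_neg at hc
      obtain ⟨⟨p₁, h₁, hv₁⟩, ⟨p₂, h₂, hv₂⟩⟩ := hc
      have h12 := h (p₁ * p₂) ⟨p₁, h₁, p₂, h₂, rfl⟩
      rw [polyEval_mul] at h12
      exact mul_ne_zero hv₁ hv₂ h12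

/-- The dimension of a subset of affine space: the Krull dimension of its Zariski closure. -/
def dimSet {M : Type*} [TopologicalSpace M] (s : Set M) : WithBot ℕ∞ :=
  topologicalKrullDim ↥(closure s)

/-- `vdimGE r n F m` says that the common projective vanishing locus
`V(F 0, …, F (n-1)) ⊆ ℙ^r` has dimension at least `m` (with `dim ∅ = -∞`).
This is encoded via the Krull dimension of the homogeneous coordinate ring of the
affine cone: `dim V(F) ≥ m` iff the cone has Krull dimension at least `max m 0 + 1`. -/
def vdimGE {K : Type*} [Field K] (r n : ℕ) (F : Fin n → MvPolynomial (Fin (r + 1)) K)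
    (m : ℤ) : Prop :=
  ((m.toNat + 1 : ℕ) : WithBot ℕ∞) ≤
    ringKrullDim (MvPolynomial (Fin (r + 1)) K ⧸ Ideal.span (Set.range F))

end

noncomputable section Statement0

open MvPolynomial

variable (K : Type*) [Field K]

/-- The affine space `W_{r, d 0} × ⋯ × W_{r, d (n-1)}` of `n`-tuples of homogeneous
forms of degrees `d 0, …, d (n-1)` in the variables `x_0, …, x_r`. -/
abbrev tupleSpace (r n : ℕ) (d : Fin n → ℕ) : Type _ :=
  (i : Fin n) → ↥(homogeneousSubmodule (Fin (r + 1)) K (d i))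

/-- The Zariski topology on the affine space of tuples of forms. -/
instance (r n : ℕ) (d : Fin n → ℕ) : TopologicalSpace (tupleSpace K r n d) :=
  zariskiTopology K _

/-- The forms `F 0, …, F (n-1)` all vanish on a common line of `ℙ^r`, i.e. their common
vanishing locus contains the projectivization of a 2-dimensional linear subspace of
`K^{r+1}` spanned by linearly independent vectors `v, w`. -/
def vanishOnCommonLine {r n : ℕ} {d : Fin n → ℕ} (F : tupleSpace K r n d) : Prop :=
  ∃ v w : Fin (r + 1) → K, LinearIndependent K ![v, w] ∧
    ∀ i : Fin n, ∀ s t : K,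
      MvPolynomial.eval (fun j => s * v j + t * w j) (F i : MvPolynomial (Fin (r + 1)) K) = 0

end Statement0

/-!
Let `C` be an irreducible closed set in which `Z \ D` is dense, let `F` be its generic tuple and let
`c` be a generic point of a component, of positive projective dimension, of the common zero locus of
the `F_i`. Let `b` be the dimension of the smallest linear space containing `c` which is defined
over the algebraic closure of the field generated by the coefficients of `F`. All dimensions are
transcendence degrees, i.e. ranks in the matroid of algebraic independence.

If `b ≤ 1`, this linear space is a line on which all the `F_i` vanish, so `C ⊆ L`. If `b ≥ 2`,
consider the zero loci of `F_1, …, F_i` through `c` one form at a time. If adding `F_i` does not cut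
down the dimension, then `F_i` vanishes on the whole previous locus, and this imposes as many
conditions on the coefficients of `F_i` as there are linearly independent monomials of degree `d_i`
in `c`. By the linear Cauchy–Davenport inequality there are at least `b d_i + 1` of them. Starting
from a linear space of dimension `b`, which depends on at most `(r - b) (b + 1)` parameters, the
dimension is cut down at most `b - 1` times, and not by `F_r` because `F` avoids `D`. As the degrees
increase, the resulting bound on the dimension of `C` is smaller than
`dim L = ∑ i, dim W_{r, d_i} - ∑ i, (d_i + 1) + 2 (r - 1)`.

Conversely `L` is irreducible, being the closure of the image of an incidence variety, and it lies
in the closure of `Z \ D` because the dimension of a zero locus is upper semicontinuous and `L`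
contains an explicit tuple of powers of variables outside `D`.
-/

open MvPolynomial

noncomputable section

section CauchyDavenport

open Module

variable {E L : Type*} [Field E] [Field L] [Algebra E L]

lemma finrank_map_mulLeft {u : L} (hu : u ≠ 0) (V : Submodule E L) :
    finrank E (V.map (LinearMap.mulLeft E u)) = finrank E V :=
  (Submodule.equivMapOfInjective _ (mul_right_injective₀ hu) V).finrank_eq.symm

lemma exists_algebraMap_eq_of_isIntegral [IsAlgClosed E] {x : L} (hx : IsIntegral E x) :
    ∃ e, algebraMap E L e = x :=
  minpoly.mem_range_of_degree_eq_one E x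
    (IsAlgClosed.degree_eq_one_of_irreducible E (minpoly.irreducible hx))

/-- The second component of the Dyson transform of `(A, B)` along `u`; the first one is
`A ⊔ u B`. -/
def dysonRight (u : L) (A B : Submodule E L) : Submodule E L :=
  (A ⊓ B.map (LinearMap.mulLeft E u)).map (LinearMap.mulLeft E u⁻¹)

lemma mem_dysonRight {u : L} (hu : u ≠ 0) {A B : Submodule E L} {x : L} :
    x ∈ dysonRight u A B ↔ u * x ∈ A ∧ x ∈ B := by
  constructor
  · rintro ⟨_, ⟨hyA, z, hz, rfl⟩, rfl⟩
    simpa [hu] using And.intro hyA hz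
  · rintro ⟨hA, hB⟩
    exact ⟨u * x, ⟨hA, x, hB, rfl⟩, by simp [hu]⟩

lemma sup_mul_dysonRight_le {u : L} (hu : u ≠ 0) (A B : Submodule E L) :
    (A ⊔ B.map (LinearMap.mulLeft E u)) * dysonRight u A B ≤ A * B := by
  rw [Submodule.mul_le]
  intro m hm y hy
  obtain ⟨p, hp, _, ⟨z, hz, rfl⟩, rfl⟩ := Submodule.mem_sup.1 hm
  obtain ⟨huy, hyB⟩ := (mem_dysonRight hu).1 hy
  have hsplit : (p + LinearMap.mulLeft E u z) * y = p * y + u * y * z := by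
    rw [LinearMap.mulLeft_apply]
    ring
  rw [hsplit]
  exact add_mem (Submodule.mul_mem_mul hp hyB) (Submodule.mul_mem_mul huy hz)

lemma finrank_sup_add_finrank_dysonRight {u : L} (hu : u ≠ 0) (A B : Submodule E L)
    [FiniteDimensional E A] [FiniteDimensional E B] :
    finrank E ↥(A ⊔ B.map (LinearMap.mulLeft E u)) + finrank E (dysonRight u A B) =
      finrank E A + finrank E B := by
  rw [dysonRight, finrank_map_mulLeft (inv_ne_zero hu), Submodule.finrank_sup_add_finrank_inf_eq,
    finrank_map_mulLeft hu]

lemma le_span_singleton_of_forall_mul_inv_mul_mem [IsAlgClosed E] {A B : Submodule E L}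
    [FiniteDimensional E A] (hA : A ≠ ⊥) {b₀ : L} (hb₀ : b₀ ≠ 0)
    (h : ∀ a ∈ A, ∀ b ∈ B, a * b₀⁻¹ * b ∈ A) : B ≤ E ∙ b₀ := by
  intro b hb
  have hint : IsIntegral E (b₀⁻¹ * b) := by
    refine isIntegral_of_smul_mem_submodule (N := A) hA (Module.Finite.iff_fg.1 ‹_›) _ fun a ha ↦ ?_
    rw [smul_eq_mul, mul_comm, ← mul_assoc]
    exact h a ha b hb
  obtain ⟨e, he⟩ := exists_algebraMap_eq_of_isIntegral hint
  refine Submodule.mem_span_singleton.2 ⟨e, ?_⟩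
  rw [Algebra.smul_def, he]
  field_simp

instance finiteDimensional_mul (A B : Submodule E L) [FiniteDimensional E A]
    [FiniteDimensional E B] : FiniteDimensional E ↥(A * B) :=
  Module.Finite.iff_fg.2 ((Module.Finite.iff_fg.1 ‹_›).mul (Module.Finite.iff_fg.1 ‹_›))

/-- The linear Cauchy–Davenport inequality. If no Dyson transform makes `B` smaller, then `A` is
stable under `b₀⁻¹ B`, whose elements are then integral over `E`, so that `B` is a line. -/
theorem finrank_add_finrank_le_finrank_mul_add_one [IsAlgClosed E] (A B : Submodule E L)
    [FiniteDimensional E A] [FiniteDimensional E B] (hA : A ≠ ⊥) (hB : B ≠ ⊥) :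
    finrank E A + finrank E B ≤ finrank E ↥(A * B) + 1 := by
  induction hn : finrank E B using Nat.strong_induction_on generalizing A B with
  | _ n ih =>
    subst hn
    obtain ⟨b₀, hb₀, hb₀'⟩ := Submodule.exists_mem_ne_zero_of_ne_bot hB
    by_cases hstable : ∀ a ∈ A, ∀ b ∈ B, a * b₀⁻¹ * b ∈ A
    · have hB1 : finrank E B ≤ 1 :=
        (Submodule.finrank_mono (le_span_singleton_of_forall_mul_inv_mul_mem hA hb₀' hstable)).trans
          (finrank_span_singleton hb₀').le
      have hle : A.map (LinearMap.mulLeft E b₀) ≤ A * B := by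
        rintro _ ⟨x, hx, rfl⟩
        rw [LinearMap.mulLeft_apply, mul_comm b₀ x]
        exact Submodule.mul_mem_mul hx hb₀
      have hrank := Submodule.finrank_mono hle
      rw [finrank_map_mulLeft hb₀'] at hrank
      omega
    · push Not at hstable
      obtain ⟨a, ha, b₁, hb₁, hb₁'⟩ := hstable
      have ha₀ : a ≠ 0 := by
        rintro rfl
        simp at hb₁'
      have hu : a * b₀⁻¹ ≠ 0 := mul_ne_zero ha₀ (inv_ne_zero hb₀')
      have hle : dysonRight (a * b₀⁻¹) A B ≤ B := fun x hx ↦ ((mem_dysonRight hu).1 hx).2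
      have hlt : dysonRight (a * b₀⁻¹) A B < B :=
        lt_of_le_of_ne hle fun h ↦ hb₁' ((mem_dysonRight hu).1 (h ▸ hb₁)).1
      have hb₀mem : b₀ ∈ dysonRight (a * b₀⁻¹) A B :=
        (mem_dysonRight hu).2 ⟨by simpa [hb₀'] using ha, hb₀⟩
      have := Submodule.finiteDimensional_of_le hle
      have hih := ih _ (Submodule.finrank_lt_finrank_of_lt hlt)
        (A ⊔ B.map (LinearMap.mulLeft E (a * b₀⁻¹))) _
        (ne_bot_of_le_ne_bot hA le_sup_left) (Submodule.ne_bot_iff _ |>.2 ⟨b₀, hb₀mem, hb₀'⟩) rfl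
      have hprod := Submodule.finrank_mono (sup_mul_dysonRight_le hu A B)
      rw [finrank_sup_add_finrank_dysonRight hu] at hih
      omega

theorem mul_add_one_le_finrank_pow [IsAlgClosed E] (V : Submodule E L) [FiniteDimensional E V]
    {b : ℕ} (hb : b + 1 ≤ finrank E V) (d : ℕ) :
    b * d + 1 ≤ finrank E ↥(V ^ d) := by
  have hV : V ≠ ⊥ := by
    rintro rfl
    simp at hb
  induction d with
  | zero =>
    rw [pow_zero, Submodule.one_eq_span, finrank_span_singleton (one_ne_zero (α := L))]
    simp
  | succ d ih =>
    have hVd : V ^ d ≠ ⊥ := by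
      intro h
      rw [h] at ih
      simp at ih
    have : FiniteDimensional E ↥(V ^ d) :=
      Module.Finite.iff_fg.2 ((Module.Finite.iff_fg.1 ‹_›).pow d)
    have hCD := finrank_add_finrank_le_finrank_mul_add_one (V ^ d) V hVd hV
    rw [pow_succ, mul_add_one]
    omega

end CauchyDavenport

section Specialization

lemma exists_algHom_apply_ne_zero {E R : Type*} [Field E] [IsAlgClosed E] [CommRing R] [IsDomain R]
    [Algebra E R] [Algebra.FiniteType E R] {a : R} (ha : a ≠ 0) : ∃ ε : R →ₐ[E] E, ε a ≠ 0 := by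
  have := isJacobsonRing_of_finiteType (A := E) (B := R)
  have hjac : a ∉ (⊥ : Ideal R).jacobson := by
    rwa [← Ideal.radical_eq_jacobson, Ideal.radical_bot_of_isReduced]
  obtain ⟨m, hm, ham⟩ : ∃ m : Ideal R, m.IsMaximal ∧ a ∉ m := by
    simpa [Ideal.jacobson, Ideal.mem_sInf] using hjac
  let _ : Field (R ⧸ m) := Ideal.Quotient.field m
  have : Algebra.FiniteType E (R ⧸ m) :=
    .of_surjective (Ideal.Quotient.mkₐ E m) (Ideal.Quotient.mkₐ_surjective E m)
  have : Module.Finite E (R ⧸ m) := finite_of_finite_type_of_isJacobsonRing E (R ⧸ m)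
  let e : E ≃ₐ[E] R ⧸ m := .ofBijective (Algebra.ofId E _)
    (IsAlgClosed.algebraMap_bijective_of_isIntegral (k := E) (K := R ⧸ m))
  refine ⟨(e.symm : R ⧸ m →ₐ[E] E).comp (Ideal.Quotient.mkₐ E m), ?_⟩
  simpa [Ideal.Quotient.eq_zero_iff_mem] using ham

/-- If every element not killed by `ψ` stays nonzero under `φ`, then `φ` factors through the local
ring of `ker ψ`, which is dominated by a valuation ring. -/
theorem exists_valuationSubring_mem_nonunits_iff {B F k : Type*} [CommRing B] [Field F]
    [CommRing k] [IsDomain k] (φ : B →+* F) (ψ : B →+* k) (h : ∀ b, ψ b ≠ 0 → φ b ≠ 0) :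
    ∃ V : ValuationSubring F, ∀ b, φ b ∈ V ∧ (φ b ∈ V.nonunits ↔ ψ b = 0) := by
  have hP : (RingHom.ker ψ).IsPrime := RingHom.ker_isPrime ψ
  let f : Localization.AtPrime (RingHom.ker ψ) →+* F :=
    IsLocalization.lift (M := (RingHom.ker ψ).primeCompl) (g := φ) fun y ↦ (h y.1 y.2).isUnit
  obtain ⟨V, hV, hloc⟩ := IsLocalRing.exists_factor_valuationRing f
  let fV : Localization.AtPrime (RingHom.ker ψ) →+* V := f.codRestrict V.toSubring hV
  have hf b : (fV (algebraMap B _ b) : F) = φ b :=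
    IsLocalization.lift_eq (M := (RingHom.ker ψ).primeCompl) _ b
  refine ⟨V, fun b ↦ ⟨hf b ▸ (fV _).2, ?_⟩⟩
  have hunit : IsUnit (fV (algebraMap B _ b)) ↔ b ∈ (RingHom.ker ψ).primeCompl :=
    ⟨fun hu ↦ (IsLocalization.AtPrime.isUnit_to_map_iff _ _ b).1 (hloc.map_nonunit _ hu),
      fun hb ↦ ((IsLocalization.AtPrime.isUnit_to_map_iff _ _ b).2 hb).map fV⟩
  rw [← hf b, V.coe_mem_nonunits_iff, IsLocalRing.mem_maximalIdeal, mem_nonunits_iff, hunit,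
    Ideal.mem_primeCompl_iff, not_not, RingHom.mem_ker]

lemma mem_valuationSubring_of_isAlgebraic {F : Type*} [Field F] (V : ValuationSubring F)
    (S : Subring F) (hS : ∀ x ∈ S, x ∈ V ∧ (x ≠ 0 → x⁻¹ ∈ V)) {x : F} (hx : IsAlgebraic S x) :
    x ∈ V := by
  obtain ⟨p, hp, hpx⟩ := hx
  have hlead : (p.leadingCoeff : F) ≠ 0 := by simpa using hp
  let ι : S →+* V := S.subtype.codRestrict V.toSubring fun s ↦ (hS s s.2).1
  have hleadV : (p.map ι).leadingCoeff = ι p.leadingCoeff :=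
    Polynomial.leadingCoeff_map_of_leadingCoeff_ne_zero _
      fun h ↦ hlead (congrArg Subtype.val h)
  have hint : IsIntegral V x := by
    refine ⟨Polynomial.C ⟨_, (hS _ p.leadingCoeff.2).2 hlead⟩ * p.map ι,
      Polynomial.monic_C_mul_of_mul_leadingCoeff_eq_one ?_, ?_⟩
    · rw [hleadV]
      exact Subtype.ext (inv_mul_cancel₀ hlead)
    · rw [Polynomial.eval₂_mul, Polynomial.eval₂_map]
      exact mul_eq_zero_of_right _ hpx
  obtain ⟨y, rfl⟩ := IsIntegrallyClosed.isIntegral_iff.1 hint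
  exact y.2

variable {E F ι : Type*} [Field E] [Field F] [Algebra E F]

/-- A specialization `ε` of `A` extends to a place of `F` that is trivial on the field generated by
a family algebraically independent over `A`. -/
lemma exists_valuationSubring_of_algebraicIndependent {J : ι → F} (A : Subalgebra E F)
    (hJ : AlgebraicIndependent A J) (ε : A →ₐ[E] E) :
    ∃ V : ValuationSubring F, (∀ x, IsAlgebraic (Algebra.adjoin E (Set.range J)) x → x ∈ V) ∧
      ∀ a : A, algebraMap E F (ε a) - a ∈ V.nonunits := by
  let φ : MvPolynomial ι A →+* F := (aeval J : MvPolynomial ι A →ₐ[A] F).toRingHom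
  let ψ : MvPolynomial ι A →+* MvPolynomial ι E := MvPolynomial.map ε.toRingHom
  have hφ : Function.Injective φ := hJ
  obtain ⟨V, hV⟩ := exists_valuationSubring_mem_nonunits_iff φ ψ fun b hb h ↦
    hb (by rw [(map_eq_zero_iff φ hφ).1 h, map_zero])
  have hunits : ∀ x ∈ Algebra.adjoin E (Set.range J), x ∈ V ∧ (x ≠ 0 → x⁻¹ ∈ V) := by
    intro x hx
    rw [Algebra.adjoin_range_eq_range_aeval] at hx
    obtain ⟨p, rfl⟩ := hx
    have hφp : φ (MvPolynomial.map (algebraMap E A) p) = aeval J p :=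
      MvPolynomial.aeval_map_algebraMap A J p
    have hψp : ψ (MvPolynomial.map (algebraMap E A) p) = p := by
      have hε : ε.toRingHom.comp (algebraMap E A) = RingHom.id E := by
        ext x
        simp
      change MvPolynomial.map _ _ = _
      rw [MvPolynomial.map_map, hε, MvPolynomial.map_id]
    obtain ⟨hmem, hnon⟩ := hV (MvPolynomial.map (algebraMap E A) p)
    rw [hψp, hφp] at hnon
    refine ⟨hφp ▸ hmem, fun hne ↦ by_contra fun hinv ↦ hne ?_⟩
    change aeval J p = 0
    rw [hnon.1 (V.mem_nonunits_iff_or.2 (Or.inr hinv)), map_zero]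
  refine ⟨V, fun x hx ↦ mem_valuationSubring_of_isAlgebraic V
    (Algebra.adjoin E (Set.range J)).toSubring hunits hx, fun a ↦ ?_⟩
  have hφa : φ (C (algebraMap E A (ε a) - a)) = algebraMap E F (ε a) - a := by
    change aeval J (C _) = _
    rw [MvPolynomial.aeval_C, map_sub, ← IsScalarTower.algebraMap_apply]
    rfl
  rw [← hφa, (hV _).2]
  change MvPolynomial.map _ (C _) = _
  rw [MvPolynomial.map_C]
  simp

/-- Linear disjointness over an algebraically closed field: specialize the `e k` to constants by a
place that is trivial on the `m k`. -/
theorem eq_zero_of_sum_mul_eq_zero_of_algebraicIndependent [IsAlgClosed E] {κ : Type*} [Fintype κ]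
    {A : Subalgebra E F} (hA : A.FG) {J : ι → F} {e m : κ → F} (hJ : AlgebraicIndependent A J)
    (he : ∀ k, e k ∈ A) (hm : ∀ k, IsAlgebraic (Algebra.adjoin E (Set.range J)) (m k))
    (hli : LinearIndependent E m) (h0 : ∑ k, e k * m k = 0) : e = 0 := by
  by_contra hne
  obtain ⟨k₀, hk₀⟩ := Function.ne_iff.1 hne
  have : Algebra.FiniteType E A := A.fg_iff_finiteType.1 hA
  let e' : κ → A := fun k ↦ ⟨e k, he k⟩
  have he' : e' k₀ ≠ 0 := fun h ↦ hk₀ (congrArg Subtype.val h)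
  obtain ⟨ε, hε⟩ := exists_algHom_apply_ne_zero (E := E) he'
  obtain ⟨V, hV, hεV⟩ := exists_valuationSubring_of_algebraicIndependent _ hJ ε
  let y : F := ∑ k, algebraMap E F (ε (e' k)) * m k
  have hy_alg : IsAlgebraic (Algebra.adjoin E (Set.range J)) y :=
    Finset.sum_induction _ _ (fun _ _ ↦ IsAlgebraic.add) isAlgebraic_zero fun k _ ↦
      (isAlgebraic_algebraMap
        (algebraMap E (Algebra.adjoin E (Set.range J)) (ε (e' k)))).mul (hm k)
  have hy_nonunit : y ∈ V.nonunits := by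
    have hy : y = ∑ k, (algebraMap E F (ε (e' k)) - e k) * m k := by
      simp only [y, sub_mul, Finset.sum_sub_distrib, h0, sub_zero]
    rw [hy]
    refine sum_mem fun k _ ↦ ?_
    rw [V.mem_nonunits_iff, map_mul]
    exact mul_lt_one_of_lt_of_le (hεV (e' k)) ((V.valuation_le_one_iff _).2 (hV _ (hm k)))
  have hy_zero : y = 0 :=
    (V.mem_nonunits_iff_or.1 hy_nonunit).resolve_right (not_not.2 (hV _ hy_alg.inv))
  refine hε (Fintype.linearIndependent_iff.1 hli (fun k ↦ ε (e' k)) ?_ k₀)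
  simpa only [Algebra.smul_def] using hy_zero

end Specialization

section RelativeRank

variable {α : Type*} {M : Matroid α}

theorem disjoint_and_indep_union_of_encard_le_eRk {B I : Set α} (hB : B.Finite) (hI : I.Finite)
    (h : B.encard + I.encard ≤ M.eRk (B ∪ I)) : Disjoint B I ∧ M.Indep (B ∪ I) := by
  have hcard : B.encard + I.encard = (B ∪ I).encard :=
    (h.trans (M.eRk_le_encard _)).antisymm (Set.encard_union_le B I)
  refine ⟨?_, ?_⟩
  · have hinter := Set.encard_union_add_encard_inter B I
    rw [hcard] at hinter
    rw [Set.disjoint_iff_inter_eq_empty, ← Set.encard_eq_zero]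
    exact ENat.add_right_injective_of_ne_top (Set.encard_ne_top_iff.2 (hB.union hI))
      (hinter.trans (add_zero _).symm)
  · rw [M.indep_iff_eRk_eq_encard_of_finite (hB.union hI)]
    exact (M.eRk_le_encard _).antisymm (hcard ▸ h)

/-- The same finite set `I` computes the rank of `C` relative to `S` and relative to `T`. -/
theorem exists_isBasis_indep_union_of_eRk_le {S T C : Set α} (hST : S ⊆ T)
    (hT : T ⊆ M.E) (hC : C ⊆ M.E) (hfin : M.eRk (T ∪ C) ≠ ⊤)
    (h : M.eRk (S ∪ C) + M.eRk T ≤ M.eRk (T ∪ C) + M.eRk S) :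
    ∃ I B : Set α, C ⊆ M.closure (S ∪ I) ∧ M.IsBasis B T ∧ Disjoint B I ∧ M.Indep (B ∪ I) := by
  have hfinOf {X : Set α} (hX : X ⊆ T ∪ C) : M.eRk X ≠ ⊤ := ne_top_of_le_ne_top hfin (M.eRk_mono hX)
  obtain ⟨B₀, hB₀⟩ := M.exists_isBasis S (hST.trans hT)
  obtain ⟨B₁, hB₁, hB₀₁⟩ := hB₀.indep.subset_isBasis_of_subset
    (hB₀.subset.trans Set.subset_union_left) (Set.union_subset (hST.trans hT) hC)
  obtain ⟨B, hB⟩ := M.exists_isBasis T hT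
  have hS := hfinOf (hST.trans Set.subset_union_left)
  have hcardI : (B₁ \ B₀).encard + M.eRk S = M.eRk (S ∪ C) := by
    rw [← hB₀.encard_eq_eRk, ← hB₁.encard_eq_eRk]
    exact Set.encard_sdiff_add_encard_of_subset hB₀₁
  have hB₁I : B₁ ⊆ S ∪ (B₁ \ B₀) := fun x hx ↦
    (em (x ∈ B₀)).imp (fun hx₀ ↦ hB₀.subset hx₀) fun hx₀ ↦ ⟨hx, hx₀⟩
  have hCI : C ⊆ M.closure (S ∪ (B₁ \ B₀)) :=
    Set.subset_union_right.trans (hB₁.subset_closure.trans (M.closure_subset_closure hB₁I))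
  have hspan : M.eRk (T ∪ C) ≤ M.eRk (B ∪ (B₁ \ B₀)) := by
    have hTcl : T ⊆ M.closure (B ∪ (B₁ \ B₀)) :=
      hB.subset_closure.trans (M.closure_subset_closure Set.subset_union_left)
    have hICl : B₁ \ B₀ ⊆ M.closure (B ∪ (B₁ \ B₀)) := M.subset_closure_of_subset'
      Set.subset_union_right (Set.sdiff_subset.trans hB₁.indep.subset_ground)
    rw [← M.eRk_closure_eq (B ∪ (B₁ \ B₀))]
    exact M.eRk_mono (Set.union_subset hTcl (hCI.trans
      (M.closure_subset_closure_of_subset_closure (Set.union_subset (hST.trans hTcl) hICl))))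
  have hcard : B.encard + (B₁ \ B₀).encard ≤ M.eRk (B ∪ (B₁ \ B₀)) := by
    refine le_trans ?_ hspan
    rw [hB.encard_eq_eRk, ← ENat.add_le_add_iff_right hS, add_assoc, hcardI, add_comm (M.eRk T)]
    exact h
  have hBfin : B.Finite := Set.encard_ne_top_iff.1 <| by
    rw [hB.encard_eq_eRk]
    exact hfinOf Set.subset_union_left
  have hB₁fin : B₁.Finite := Set.encard_ne_top_iff.1 <| by
    rw [hB₁.encard_eq_eRk]
    exact hfinOf (Set.union_subset_union_left C hST)
  obtain ⟨hdisj, hindep⟩ := disjoint_and_indep_union_of_encard_le_eRk hBfin hB₁fin.sdiff hcard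
  exact ⟨B₁ \ B₀, B, hCI, hB, hdisj, hindep⟩

end RelativeRank

section RelAlgClosure

open AlgebraicIndependent IntermediateField.algebraAdjoinAdjoin

variable (K : Type*) {F : Type*} [Field K] [Field F] [Algebra K F]

/-- The relative algebraic closure in `F` of the subfield generated by `K` and `S`. -/
def relAlgClosure (S : Set F) : IntermediateField K F :=
  (algebraicClosure (IntermediateField.adjoin K S) F).restrictScalars K

instance [IsAlgClosed F] (S : Set F) : IsAlgClosed (relAlgClosure K S) :=
  IsAlgClosure.isAlgClosed (R := IntermediateField.adjoin K S)
    (K := algebraicClosure (IntermediateField.adjoin K S) F)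

variable {K}

theorem mem_matroid_closure_iff {S : Set F} {x : F} :
    x ∈ (matroid K F).closure S ↔ IsAlgebraic (Algebra.adjoin K S) x := by
  rw [matroid_closure_eq]
  rfl

theorem mem_relAlgClosure_iff {S : Set F} {x : F} :
    x ∈ relAlgClosure K S ↔ x ∈ (matroid K F).closure S := by
  rw [mem_matroid_closure_iff,
    IsFractionRing.isAlgebraic_iff (Algebra.adjoin K S) (IntermediateField.adjoin K S) F]
  exact mem_algebraicClosure_iff

theorem subset_relAlgClosure (S : Set F) : S ⊆ relAlgClosure K S := fun _ hx ↦
  mem_relAlgClosure_iff.2 ((matroid K F).mem_closure_of_mem hx)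

theorem relAlgClosure_mono {S T : Set F} (h : S ⊆ T) : relAlgClosure K S ≤ relAlgClosure K T :=
  fun _ hx ↦ mem_relAlgClosure_iff.2
    ((matroid K F).closure_subset_closure h (mem_relAlgClosure_iff.1 hx))

theorem adjoin_subset_matroid_closure (S : Set F) :
    (Algebra.adjoin K S : Set F) ⊆ (matroid K F).closure S := fun _ hx ↦
  mem_relAlgClosure_iff.1 (Algebra.adjoin_le (S := (relAlgClosure K S).toSubalgebra)
    (subset_relAlgClosure S) hx)

theorem adjoin_relAlgClosure_subset {S T U : Set F} (hST : S ⊆ T) (hU : U ⊆ relAlgClosure K T) :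
    (Algebra.adjoin (relAlgClosure K S) U : Set F) ⊆ relAlgClosure K T := fun x hx ↦ by
  induction hx using Algebra.adjoin_induction with
  | mem x hx => exact hU hx
  | algebraMap r => exact relAlgClosure_mono hST r.2
  | add x y _ _ hx hy => exact add_mem hx hy
  | mul x y _ _ hx hy => exact mul_mem hx hy

theorem algebraicIndependent_of_isBasis_of_indep_union {B I T : Set F}
    (hB : (matroid K F).IsBasis B T) (hd : Disjoint B I) (hi : (matroid K F).Indep (B ∪ I))
    (A : Subring F) (hA : (A : Set F) ⊆ (matroid K F).closure T) :
    AlgebraicIndependent A ((↑) : I → F) := by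
  classical
  have hsum : AlgebraicIndependent K (Sum.elim ((↑) : I → F) ((↑) : B → F)) := by
    rw [matroid_indep_iff] at hi
    convert hi.comp (fun x : I ⊕ B ↦ (Equiv.Set.union hd).symm x.swap)
      ((Equiv.injective _).comp (Equiv.sumComm I B).injective) using 1
    funext x
    rcases x with x | x <;> simp
  have hI : AlgebraicIndependent (Algebra.adjoin K B) ((↑) : I → F) := by
    have h := (AlgebraicIndependent.sumElim_iff.1 hsum).2
    rwa [Subtype.range_coe] at h
  let A' := Subalgebra.algebraicClosure (Algebra.adjoin K B) F
  let g : A →+* A' := A.subtype.codRestrict A' fun x ↦ by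
    have hx := hA x.2
    rwa [← hB.closure_eq_closure, mem_matroid_closure_iff] at hx
  let _ : Algebra A A' := g.toAlgebra
  have : IsScalarTower A A' F := IsScalarTower.of_algebraMap_eq fun x ↦ rfl
  exact (hI.extendScalars A').restrictScalars (K := A') fun a b hab ↦
    Subtype.ext (congrArg (fun z : A' ↦ (z : F)) hab)

theorem isAlgebraic_of_forall_exists_algebraMap_eq {R S : Type*} [CommRing R] [CommRing S]
    [Algebra R F] [Algebra S F] (hR : Function.Injective (algebraMap R F))
    (h : ∀ r : R, ∃ s : S, algebraMap S F s = algebraMap R F r) {x : F} (hx : IsAlgebraic R x) :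
    IsAlgebraic S x := by
  obtain ⟨p, hp, hpx⟩ := hx
  obtain ⟨q, hq⟩ : p.map (algebraMap R F) ∈ Polynomial.lifts (algebraMap S F) := by
    rw [Polynomial.lifts_iff_coeff_lifts]
    exact fun n ↦ by rw [Polynomial.coeff_map]; exact h _
  refine ⟨q, ?_, ?_⟩
  · rintro rfl
    rw [map_zero] at hq
    exact hp ((Polynomial.map_eq_zero_iff hR).1 hq.symm)
  · change q.map (algebraMap S F) = _ at hq
    rw [Polynomial.aeval_def, ← Polynomial.eval_map, hq, Polynomial.eval_map]
    exact hpx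

theorem isAlgebraic_adjoin_relAlgClosure {S I : Set F} {x : F}
    (hx : x ∈ (matroid K F).closure (S ∪ I)) :
    IsAlgebraic (Algebra.adjoin (relAlgClosure K S) I) x := by
  have hle : Algebra.adjoin K (S ∪ I) ≤
      (Algebra.adjoin (relAlgClosure K S) I).restrictScalars K :=
    Algebra.adjoin_le (Set.union_subset
      (fun y hy ↦ (Algebra.adjoin _ I).algebraMap_mem
        (⟨y, subset_relAlgClosure S hy⟩ : relAlgClosure K S))
      Algebra.subset_adjoin)
  exact isAlgebraic_of_forall_exists_algebraMap_eq Subtype.val_injective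
    (fun y ↦ ⟨⟨y, hle y.2⟩, rfl⟩) (mem_matroid_closure_iff.1 hx)

end RelAlgClosure

section RankDrop

open AlgebraicIndependent Module

variable {F : Type*} [Field F]

/-- Choosing a basis `m k`, `k ∉ W`, of the span of the `m k`, the relation `∑ f k * m k = 0`
becomes one between the linearly independent `m k`, `k ∉ W`; its coefficients vanish by linear
disjointness, which expresses each `f k`, `k ∉ W`, through `f '' W`. -/
theorem exists_finset_mem_span_image {E τ ι : Type*} [Field E] [IsAlgClosed E] [Algebra E F]
    [Fintype τ] {f m : τ → F} {J : ι → F}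
    (hm : ∀ k, IsAlgebraic (Algebra.adjoin E (Set.range J)) (m k))
    (hJ : AlgebraicIndependent (Algebra.adjoin E (Set.range f)) J) (h0 : ∑ k, f k * m k = 0) :
    ∃ W : Finset τ, W.card + finrank E (Submodule.span E (Set.range m)) = Fintype.card τ ∧
      ∀ k, f k ∈ Submodule.span E (f '' W) := by
  classical
  obtain ⟨b, -, -, hspan, hli⟩ :=
    exists_linearIndepOn_extension (linearIndepOn_empty E m) (Set.empty_subset Set.univ)
  replace hspan : Submodule.span E (Set.range m) =
      Submodule.span E (Set.range fun j : b ↦ m j) := by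
    rw [← Set.image_eq_range]
    refine le_antisymm (Submodule.span_le.2 (Set.image_univ ▸ hspan))
      (Submodule.span_mono (Set.image_subset_range m b))
  choose c hc using fun k ↦
    (Submodule.mem_span_range_iff_exists_fun E).1
      (hspan ▸ Submodule.subset_span (Set.mem_range_self k))
  let e : b → F := fun j ↦ f j + ∑ k ∈ b.toFinsetᶜ, c k j • f k
  have he0 : ∑ j, e j * m j = 0 := by
    have hcompl : ∑ k ∈ b.toFinsetᶜ, f k * m k =
        ∑ j : b, (∑ k ∈ b.toFinsetᶜ, c k j • f k) * m j := by
      simp only [Finset.sum_mul]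
      rw [Finset.sum_comm]
      refine Finset.sum_congr rfl fun k _ ↦ ?_
      rw [← hc k, Finset.mul_sum]
      exact Finset.sum_congr rfl fun j _ ↦ by rw [mul_smul_comm, smul_mul_assoc]
    simp only [e, add_mul, Finset.sum_add_distrib]
    rw [← hcompl, ← h0, ← Finset.sum_add_sum_compl b.toFinset,
      Finset.sum_set_coe (f := fun k ↦ f k * m k)]
  have hf (k : τ) : f k ∈ Algebra.adjoin E (Set.range f) := Algebra.subset_adjoin ⟨k, rfl⟩
  have he : e = 0 := eq_zero_of_sum_mul_eq_zero_of_algebraicIndependent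
    ⟨(Set.finite_range f).toFinset, by rw [Set.Finite.coe_toFinset]⟩ hJ
    (fun j ↦ add_mem (hf j) (sum_mem fun k _ ↦ Subalgebra.smul_mem _ (hf k) _))
    (fun j ↦ hm j) hli he0
  refine ⟨b.toFinsetᶜ, ?_, fun k ↦ ?_⟩
  · have hrank : finrank E (Submodule.span E (Set.range m)) = b.toFinset.card := by
      rw [hspan, finrank_span_eq_card hli, Set.toFinset_card]
    rw [hrank, Finset.card_compl_add_card]
  · by_cases hk : k ∈ b
    · have hek : f k = -∑ k' ∈ b.toFinsetᶜ, c k' ⟨k, hk⟩ • f k' :=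
        eq_neg_of_add_eq_zero_left (congrFun he ⟨k, hk⟩)
      rw [hek]
      exact neg_mem (sum_mem fun k' hk' ↦
        Submodule.smul_mem _ _ (Submodule.subset_span ⟨k', hk', rfl⟩))
    · exact Submodule.subset_span ⟨k, by simpa using hk, rfl⟩

variable {K : Type*} [Field K] [Algebra K F]

/-- If adjoining the `f k` to `S` does not lower the transcendence degree of `C`, a relation
`∑ f k * m k = 0` with coefficients `m k` in `K[C]` costs as many degrees of freedom of the
`f k` as the `m k` span over the algebraic closure of `K(S)`. -/
theorem eRk_union_range_add_finrank_span_le [IsAlgClosed F] {τ : Type*} [Fintype τ] {S C : Set F}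
    {f m : τ → F} (hfin : (matroid K F).eRk (S ∪ Set.range f ∪ C) ≠ ⊤)
    (h : (matroid K F).eRk (S ∪ C) + (matroid K F).eRk (S ∪ Set.range f) ≤
      (matroid K F).eRk (S ∪ Set.range f ∪ C) + (matroid K F).eRk S)
    (hm : ∀ k, m k ∈ Algebra.adjoin K C) (h0 : ∑ k, f k * m k = 0) :
    (matroid K F).eRk (S ∪ Set.range f) +
        finrank (relAlgClosure K S) (Submodule.span (relAlgClosure K S) (Set.range m)) ≤
      (matroid K F).eRk S + Fintype.card τ := by
  obtain ⟨I, B, hC, hB, hdisj, hindep⟩ := exists_isBasis_indep_union_of_eRk_le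
    Set.subset_union_left (Set.subset_univ _) (Set.subset_univ C) hfin h
  have hmI (k : τ) : m k ∈ (matroid K F).closure (S ∪ I) :=
    (matroid K F).closure_subset_closure_of_subset_closure hC
      (adjoin_subset_matroid_closure C (hm k))
  have hadjoin : (Algebra.adjoin (relAlgClosure K S) (Set.range f) : Set F) ⊆
      (matroid K F).closure (S ∪ Set.range f) := fun x hx ↦ mem_relAlgClosure_iff.1 <|
    adjoin_relAlgClosure_subset Set.subset_union_left
      (Set.subset_union_right.trans (subset_relAlgClosure _)) hx
  obtain ⟨W, hW, hfW⟩ := exists_finset_mem_span_image (E := relAlgClosure K S) (f := f) (m := m)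
    (J := ((↑) : I → F))
    (fun k ↦ by
      rw [Subtype.range_coe]
      exact isAlgebraic_adjoin_relAlgClosure (hmI k))
    (algebraicIndependent_of_isBasis_of_indep_union hB hdisj hindep
      (Algebra.adjoin (relAlgClosure K S) (Set.range f)).toSubring hadjoin) h0
  have hclW : S ∪ Set.range f ⊆ (matroid K F).closure (S ∪ f '' W) := by
    refine Set.union_subset
      (Set.subset_union_left.trans ((matroid K F).subset_closure _)) ?_
    rintro _ ⟨k, rfl⟩
    exact mem_relAlgClosure_iff.1 (adjoin_relAlgClosure_subset Set.subset_union_left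
      (Set.subset_union_right.trans (subset_relAlgClosure _))
      (Algebra.span_le_adjoin _ _ (hfW k)))
  calc _ ≤ (matroid K F).eRk (S ∪ f '' W) + finrank (relAlgClosure K S)
          (Submodule.span (relAlgClosure K S) (Set.range m)) := by
        gcongr
        exact ((matroid K F).eRk_mono hclW).trans (by rw [(matroid K F).eRk_closure_eq])
    _ ≤ (matroid K F).eRk S + W.card + finrank (relAlgClosure K S)
          (Submodule.span (relAlgClosure K S) (Set.range m)) := by
        gcongr
        refine ((matroid K F).eRk_union_le_eRk_add_encard _ _).trans ?_
        gcongr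
        exact (Set.encard_image_le _ _).trans (Set.encard_coe_eq_coe_finsetCard W).le
    _ = _ := by rw [add_assoc, ← Nat.cast_add, hW]

end RankDrop

section RankChain

theorem chain_inequality {n b : ℕ} {d w : Fin n → ℤ} {ρ δ : ℕ → ℤ} {D : ℤ}
    (hdD : ∀ i, d i ≤ D) (hρ : ∀ i : Fin n, ρ (i + 1) ≤ ρ i + w i)
    (hδ : ∀ i : Fin n, δ (i + 1) ≤ δ i)
    (hdrop : ∀ i : Fin n, δ (i + 1) = δ i → ρ (i + 1) + (b * d i + 1) ≤ ρ i + w i)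
    (hd : ∀ i, 1 ≤ d i) (hb : 1 ≤ b) :
    ρ n + ∑ i, (d i + 1) + (b - 1) * n ≤ ρ 0 + ∑ i, w i + (δ 0 - δ n) * (D + b) := by
  induction n with
  | zero => simp
  | succ n ih =>
    have hn := ih (fun i ↦ hdD i.castSucc) (fun i ↦ hρ i.castSucc) (fun i ↦ hδ i.castSucc)
      (fun i ↦ hdrop i.castSucc) fun i ↦ hd i.castSucc
    have hdDn := hdD (Fin.last n)
    have hdn := hd (Fin.last n)
    have hρn := hρ (Fin.last n)
    have hδn := hδ (Fin.last n)
    have hdropn := hdrop (Fin.last n)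
    simp only [Fin.val_last] at hρn hδn hdropn
    rw [Fin.sum_univ_castSucc, Fin.sum_univ_castSucc]
    push_cast
    by_cases heq : δ (n + 1) = δ n
    · have := hdropn heq
      rw [heq]
      nlinarith
    · have : 1 ≤ δ n - δ (n + 1) := by omega
      nlinarith

theorem chain_inequality_of_two_le {n b : ℕ} (hb : 2 ≤ b) {d w : Fin (n + 1) → ℤ} {ρ δ : ℕ → ℤ}
    (hd : ∀ i, 1 ≤ d i) (hmono : Monotone d) (hρ : ∀ i : Fin (n + 1), ρ (i + 1) ≤ ρ i + w i)
    (hδ : ∀ i : Fin (n + 1), δ (i + 1) ≤ δ i)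
    (hdrop : ∀ i : Fin (n + 1), δ (i + 1) = δ i → ρ (i + 1) + (b * d i + 1) ≤ ρ i + w i)
    (hρ₀ : ρ 0 ≤ (n + 1 - b) * (b + 1)) (hδ₀ : δ 0 ≤ b + 1) (hδn : δ n ≤ 2)
    (hδ_last : 2 ≤ δ (n + 1)) :
    ρ (n + 1) + ∑ i, (d i + 1) + 1 ≤ ∑ i, w i + 2 * n := by
  have hd_last := hd (Fin.last n)
  have hchain := chain_inequality (d := fun i ↦ d (Fin.castSucc i)) (w := fun i ↦ w i.castSucc)
    (fun i ↦ hmono (Fin.le_last i.castSucc)) (fun i ↦ hρ i.castSucc)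
    (fun i ↦ hδ i.castSucc) (fun i ↦ hdrop i.castSucc) (fun i ↦ hd i.castSucc) (by omega)
  have hδ_le := hδ (Fin.last n)
  have hdrop_last := hdrop (Fin.last n)
  simp only [Fin.val_last] at hδ_le hdrop_last
  have hδn_eq : δ n = 2 := by omega
  have hlast := hdrop_last (by omega)
  rw [Fin.sum_univ_castSucc, Fin.sum_univ_castSucc (f := w)]
  rw [hδn_eq] at hchain
  have hmul : (δ 0 - 2) * (d (Fin.last n) + b) ≤ (b - 1) * (d (Fin.last n) + b) :=
    mul_le_mul_of_nonneg_right (by omega) (by omega)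
  nlinarith

variable {α : Type*} {M : Matroid α}

theorem eRk_union_union_add_eRk_le (S R C : Set α) :
    M.eRk (S ∪ R ∪ C) + M.eRk S ≤ M.eRk (S ∪ C) + M.eRk (S ∪ R) := by
  have hunion : S ∪ R ∪ C ⊆ (S ∪ C) ∪ (S ∪ R) := by
    rintro x ((hx | hx) | hx) <;> simp [hx]
  rw [add_comm]
  exact (add_le_add (M.eRk_mono (Set.subset_inter Set.subset_union_left Set.subset_union_left))
    (M.eRk_mono hunion)).trans (M.eRk_inter_add_eRk_union_le (S ∪ C) (S ∪ R))

theorem eRk_union_union_le_add {A C : Set α} (hA : A.Finite) (S : Set α) {m : ℕ∞}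
    (h : M.eRk (A ∪ C) ≤ M.eRk A + m) : M.eRk (A ∪ S ∪ C) ≤ M.eRk (A ∪ S) + m := by
  have hfin : M.eRk A ≠ ⊤ := ne_top_of_le_ne_top hA.encard_lt_top.ne (M.eRk_le_encard A)
  rw [← ENat.add_le_add_iff_right hfin]
  refine (eRk_union_union_add_eRk_le A S C).trans ((add_le_add_left h _).trans_eq ?_)
  ring

/-- `S₀` together with those members of the family `R` whose index is less than `j`. -/
def partialUnion {n : ℕ} (S₀ : Set α) (R : Fin n → Set α) (j : ℕ) : Set α :=
  S₀ ∪ ⋃ i : Fin n, ⋃ _ : i.1 < j, R i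

theorem partialUnion_zero {n : ℕ} (S₀ : Set α) (R : Fin n → Set α) :
    partialUnion S₀ R 0 = S₀ := by
  simp [partialUnion]

theorem partialUnion_succ {n : ℕ} (S₀ : Set α) (R : Fin n → Set α) (j : Fin n) :
    partialUnion S₀ R (j + 1) = partialUnion S₀ R j ∪ R j := by
  ext x
  simp only [partialUnion, Set.mem_union, Set.mem_iUnion, Nat.lt_succ_iff_lt_or_eq,
    ← Fin.ext_iff, exists_prop, or_and_right, exists_or, exists_eq_left, or_assoc]

theorem partialUnion_self {n : ℕ} (S₀ : Set α) (R : Fin n → Set α) :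
    partialUnion S₀ R n = S₀ ∪ ⋃ i, R i := by
  simp [partialUnion]

theorem partialUnion_castSucc {n : ℕ} (S₀ : Set α) (R : Fin (n + 1) → Set α) :
    partialUnion S₀ R n = S₀ ∪ ⋃ i : Fin n, R i.castSucc := by
  ext x
  simp [partialUnion, Fin.exists_fin_succ']

theorem finite_partialUnion {n : ℕ} {S₀ : Set α} {R : Fin n → Set α} (hS₀ : S₀.Finite)
    (hR : ∀ i, (R i).Finite) (j : ℕ) : (partialUnion S₀ R j).Finite :=
  hS₀.union (Set.finite_iUnion fun i ↦ Set.finite_iUnion fun _ ↦ hR i)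

theorem exists_eRk_eq_natCast {X : Set α} (hX : X.Finite) : ∃ k : ℕ, M.eRk X = k :=
  ⟨_, (ENat.natCast_toNat (ne_top_of_le_ne_top hX.encard_lt_top.ne (M.eRk_le_encard X))).symm⟩

/-- Adjoin `R 0, …, R n` to `S₀` one after the other: whenever the rank of `C` relative to what has
been adjoined does not drop, `hdrop` bounds the rank gained by `w i - (b * d i + 1)`; it can drop
at most `b - 1` times. -/
theorem eRk_partialUnion_add_le {n b : ℕ} (hb : 2 ≤ b) (hbn : b ≤ n + 1) {S₀ C : Set α}
    {R : Fin (n + 1) → Set α} {d w : Fin (n + 1) → ℕ} (hd : ∀ i, 1 ≤ d i) (hmono : Monotone d)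
    (hS₀fin : S₀.Finite) (hCfin : C.Finite) (hRfin : ∀ i, (R i).Finite)
    (hw : ∀ i, (R i).encard ≤ w i)
    (hdrop : ∀ i : Fin (n + 1),
      M.eRk (partialUnion S₀ R i ∪ C) + M.eRk (partialUnion S₀ R i ∪ R i) ≤
        M.eRk (partialUnion S₀ R i ∪ R i ∪ C) + M.eRk (partialUnion S₀ R i) →
      M.eRk (partialUnion S₀ R i ∪ R i) + ((b * d i + 1 : ℕ) : ℕ∞) ≤
        M.eRk (partialUnion S₀ R i) + w i)
    (hS₀ : M.eRk S₀ ≤ ((n + 1 - b) * (b + 1) : ℕ))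
    (hS₀C : M.eRk (S₀ ∪ C) ≤ M.eRk S₀ + (b + 1 : ℕ))
    (hn : M.eRk (partialUnion S₀ R n ∪ C) ≤ M.eRk (partialUnion S₀ R n) + 2)
    (hlast : M.eRk (partialUnion S₀ R (n + 1)) + 2 ≤ M.eRk (partialUnion S₀ R (n + 1) ∪ C)) :
    M.eRk (partialUnion S₀ R (n + 1)) + ((∑ i, (d i + 1) + 1 : ℕ) : ℕ∞) ≤
      ((∑ i, w i + 2 * n : ℕ) : ℕ∞) := by
  have hfin := finite_partialUnion hS₀fin hRfin
  choose ρ hρ using fun j ↦ exists_eRk_eq_natCast (M := M) (hfin j)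
  choose γ hγ using fun j ↦ exists_eRk_eq_natCast (M := M) ((hfin j).union hCfin)
  have hsucc (i : Fin (n + 1)) : M.eRk (partialUnion S₀ R i ∪ R i) = ρ (i + 1) := by
    rw [← partialUnion_succ, hρ]
  have hsuccC (i : Fin (n + 1)) : M.eRk (partialUnion S₀ R i ∪ R i ∪ C) = γ (i + 1) := by
    rw [← partialUnion_succ, hγ]
  have hsub (i : Fin (n + 1)) : γ (i + 1) + ρ i ≤ γ i + ρ (i + 1) := by
    have h := eRk_union_union_add_eRk_le (M := M) (partialUnion S₀ R i) (R i) C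
    rw [hsucc, hsuccC, hρ, hγ] at h
    exact_mod_cast h
  have hgain (i : Fin (n + 1)) : ρ (i + 1) ≤ ρ i + w i := by
    have h := (M.eRk_union_le_eRk_add_encard (partialUnion S₀ R i) (R i)).trans
      (add_le_add_right (hw i) _)
    rw [hsucc, hρ] at h
    exact_mod_cast h
  simp only [hρ, hγ, hsucc, hsuccC] at hdrop hn hlast ⊢
  rw [← partialUnion_zero S₀ R, hρ] at hS₀ hS₀C
  rw [hγ] at hS₀C
  norm_cast at hdrop hn hlast hS₀ hS₀C ⊢
  zify [hbn] at hS₀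
  have hchain := chain_inequality_of_two_le hb (d := fun i ↦ (d i : ℤ))
    (w := fun i ↦ (w i : ℤ)) (ρ := fun j ↦ ρ j) (δ := fun j ↦ (γ j : ℤ) - ρ j)
    (fun i ↦ by exact_mod_cast hd i) (fun i j hij ↦ Nat.cast_le.2 (hmono hij))
    (fun i ↦ by exact_mod_cast hgain i) (fun i ↦ by have := hsub i; omega)
    (fun i hi ↦ by exact_mod_cast hdrop i (by have := hsub i; omega)) hS₀ (by omega) (by omega)
    (by omega)
  zify
  linarith

end RankChain

section Monomials

/-- The exponent vectors of the monomials of degree `d` in the variables `x_0, …, x_r`. -/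
abbrev MonomialIndex (r d : ℕ) : Type := {α : Fin (r + 1) →₀ ℕ // α.degree = d}

instance (r d : ℕ) : Fintype (MonomialIndex r d) :=
  have : Finite (MonomialIndex r d) :=
    ((Finsupp.finite_of_degree_le (σ := Fin (r + 1)) d).subset
      fun _ hα ↦ (hα : Finsupp.degree _ = d).le).to_subtype
  Fintype.ofFinite _

variable {r : ℕ}

/-- The value at `c` of the monomial with exponent vector `α`. -/
def monomialValue {R : Type*} [CommSemiring R] (c : Fin (r + 1) → R)
    (α : Fin (r + 1) →₀ ℕ) : R := ∏ i, c i ^ α i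

theorem monomialValue_zero {R : Type*} [CommSemiring R] (c : Fin (r + 1) → R) :
    monomialValue c 0 = 1 := by
  simp [monomialValue]

theorem monomialValue_add {R : Type*} [CommSemiring R] (c : Fin (r + 1) → R)
    (α β : Fin (r + 1) →₀ ℕ) :
    monomialValue c (α + β) = monomialValue c α * monomialValue c β := by
  simp [monomialValue, pow_add, Finset.prod_mul_distrib]

theorem monomialValue_single {R : Type*} [CommSemiring R] (c : Fin (r + 1) → R)
    (i : Fin (r + 1)) : monomialValue c (Finsupp.single i 1) = c i := by
  classical
  simp [monomialValue, Finsupp.single_apply, Finset.prod_ite_eq]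

theorem span_range_pow_le {E R : Type*} [CommSemiring E] [CommSemiring R] [Algebra E R]
    (c : Fin (r + 1) → R) (d : ℕ) : (Submodule.span E (Set.range c)) ^ d ≤
      Submodule.span E (Set.range fun α : MonomialIndex r d ↦ monomialValue c α.1) := by
  induction d with
  | zero =>
    rw [pow_zero, Submodule.one_eq_span, Submodule.span_le]
    rintro _ rfl
    exact Submodule.subset_span ⟨⟨0, map_zero _⟩, monomialValue_zero c⟩
  | succ d ih =>
    rw [pow_succ]
    refine (mul_le_mul' ih le_rfl).trans ?_
    rw [Submodule.span_mul_span, Submodule.span_le]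
    rintro _ ⟨_, ⟨α, rfl⟩, _, ⟨i, rfl⟩, rfl⟩
    refine Submodule.subset_span ⟨⟨α.1 + Finsupp.single i 1, by simp [α.2]⟩, ?_⟩
    simp only [monomialValue_add, monomialValue_single]

theorem monomialValue_mem_adjoin {K R : Type*} [CommSemiring K] [CommSemiring R] [Algebra K R]
    (c : Fin (r + 1) → R) (α : Fin (r + 1) →₀ ℕ) :
    monomialValue c α ∈ Algebra.adjoin K (Set.range c) :=
  Subalgebra.prod_mem _ fun i _ ↦
    Subalgebra.pow_mem _ (Algebra.subset_adjoin (Set.mem_range_self i)) _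

end Monomials

section RankBound

open AlgebraicIndependent Module

variable {K F : Type*} [Field K] [Field F] [Algebra K F]

theorem finrank_span_anti_of_le {E E' : IntermediateField K F} (h : E ≤ E') {X : Set F}
    (hX : X.Finite) :
    finrank E' (Submodule.span E' X) ≤ finrank E (Submodule.span E X) := by
  let _ := (IntermediateField.inclusion h).toAlgebra
  have : IsScalarTower E E' F := IsScalarTower.of_algebraMap_eq fun x ↦ rfl
  obtain ⟨b, hbX, hspan, hli⟩ := exists_linearIndependent E' X
  have hb : Fintype b := (hX.subset hbX).fintype
  have : FiniteDimensional E (Submodule.span E X) := FiniteDimensional.span_of_finite E hX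
  have hliE : LinearIndependent E ((↑) : b → F) := hli.restrict_scalars fun x y hxy ↦
    (algebraMap E E').injective (by simpa only [Algebra.smul_def, mul_one] using hxy)
  calc finrank E' (Submodule.span E' X) = b.toFinset.card := by
        rw [← hspan, finrank_span_set_eq_card hli]
    _ = finrank E (Submodule.span E b) := (finrank_span_set_eq_card hliE).symm
    _ ≤ finrank E (Submodule.span E X) := Submodule.finrank_mono (Submodule.span_mono hbX)

theorem finrank_span_relAlgClosure_anti {S T X : Set F} (hX : X.Finite)
    (hST : S ⊆ (matroid K F).closure T) :
    finrank (relAlgClosure K T) (Submodule.span (relAlgClosure K T) X) ≤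
      finrank (relAlgClosure K S) (Submodule.span (relAlgClosure K S) X) :=
  finrank_span_anti_of_le (fun _ hx ↦ mem_relAlgClosure_iff.2
    ((matroid K F).closure_subset_closure_of_subset_closure hST (mem_relAlgClosure_iff.1 hx))) hX

theorem encard_range_le_card {ι β : Type*} [Fintype ι] (f : ι → β) :
    (Set.range f).encard ≤ Fintype.card ι := by
  rw [← Set.image_univ]
  refine (Set.encard_image_le _ _).trans ?_
  rw [Set.encard_univ, ENat.card_eq_coe_fintype_card]

/-- `S₀` consists of the coefficients expressing `c` through a basis of its span over `L`. -/
theorem exists_finite_subset_eRk_union_range_le {ι : Type*} [Fintype ι] (L : IntermediateField K F)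
    (c : ι → F) :
    ∃ S₀ : Set F, S₀.Finite ∧ S₀ ⊆ L ∧
      (matroid K F).eRk S₀ ≤
        ((Fintype.card ι - finrank L (Submodule.span L (Set.range c))) *
          finrank L (Submodule.span L (Set.range c)) : ℕ) ∧
      (matroid K F).eRk (S₀ ∪ Set.range c) ≤
        (matroid K F).eRk S₀ + finrank L (Submodule.span L (Set.range c)) := by
  classical
  obtain ⟨b, -, -, hspan, hli⟩ :=
    exists_linearIndepOn_extension (linearIndepOn_empty L c) (Set.empty_subset Set.univ)
  rw [Set.image_univ, Set.image_eq_range] at hspan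
  have hrank : finrank L (Submodule.span L (Set.range c)) = b.toFinset.card := by
    rw [(Submodule.span_le.2 hspan).antisymm (Submodule.span_mono (by
      rintro _ ⟨j, rfl⟩
      exact ⟨j, rfl⟩)), finrank_span_eq_card hli, Set.toFinset_card]
  choose g hg using fun k ↦
    (Submodule.mem_span_range_iff_exists_fun L).1 (hspan (Set.mem_range_self k))
  let S₀ : Set F := Set.range fun p : (b.toFinsetᶜ : Finset ι) × b ↦ (g p.1 p.2 : F)
  have hclosure : S₀ ∪ Set.range c ⊆ (matroid K F).closure (S₀ ∪ c '' b.toFinset) := by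
    refine Set.union_subset (Set.subset_union_left.trans ((matroid K F).subset_closure _)) ?_
    rintro _ ⟨k, rfl⟩
    rw [← mem_relAlgClosure_iff]
    by_cases hk : k ∈ b
    · exact subset_relAlgClosure _ (Or.inr ⟨k, by simpa using hk, rfl⟩)
    · rw [← hg k]
      exact sum_mem fun j _ ↦ mul_mem
        (subset_relAlgClosure _ (Or.inl ⟨(⟨k, by simpa using hk⟩, j), rfl⟩))
        (subset_relAlgClosure _ (Or.inr ⟨j, by simp, rfl⟩))
  refine ⟨S₀, Set.finite_range _, ?_, ?_, ?_⟩
  · rintro _ ⟨p, rfl⟩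
    exact (g p.1 p.2).2
  · refine ((matroid K F).eRk_le_encard _).trans ?_
    refine (encard_range_le_card _).trans_eq ?_
    rw [Fintype.card_prod, Fintype.card_coe, Finset.card_compl, hrank, Set.toFinset_card]
  · refine ((matroid K F).eRk_mono hclosure).trans ?_
    rw [(matroid K F).eRk_closure_eq, hrank, ← Set.encard_coe_eq_coe_finsetCard]
    exact ((matroid K F).eRk_union_le_eRk_add_encard _ _).trans
      (add_le_add_right (Set.encard_image_le _ _) _)

variable [IsAlgClosed F] {n b : ℕ}

/-- By Cauchy–Davenport the monomials of degree `d` in the `c i` span a space of dimension at least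
`b * d + 1`. -/
theorem eRk_union_range_add_mul_add_one_le {r d : ℕ} {S : Set F} (hS : S.Finite)
    {c : Fin (r + 1) → F} {f : MonomialIndex r d → F}
    (hb : b + 1 ≤ finrank (relAlgClosure K S) (Submodule.span (relAlgClosure K S) (Set.range c)))
    (h : (matroid K F).eRk (S ∪ Set.range c) + (matroid K F).eRk (S ∪ Set.range f) ≤
      (matroid K F).eRk (S ∪ Set.range f ∪ Set.range c) + (matroid K F).eRk S)
    (hf : ∑ α, f α * monomialValue c α.1 = 0) :
    (matroid K F).eRk (S ∪ Set.range f) + ((b * d + 1 : ℕ) : ℕ∞) ≤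
      (matroid K F).eRk S + Fintype.card (MonomialIndex r d) := by
  let E := relAlgClosure K S
  have hfin : (matroid K F).eRk (S ∪ Set.range f ∪ Set.range c) ≠ ⊤ :=
    ne_top_of_le_ne_top (((hS.union (Set.finite_range f)).union
      (Set.finite_range c)).encard_lt_top.ne) ((matroid K F).eRk_le_encard _)
  have : FiniteDimensional E (Submodule.span E (Set.range c)) :=
    FiniteDimensional.span_of_finite _ (Set.finite_range c)
  have : FiniteDimensional E
      (Submodule.span E (Set.range fun α : MonomialIndex r d ↦ monomialValue c α.1)) :=
    FiniteDimensional.span_of_finite _ (Set.finite_range _)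
  have hmon : b * d + 1 ≤
      finrank E (Submodule.span E (Set.range fun α : MonomialIndex r d ↦ monomialValue c α.1)) :=
    (mul_add_one_le_finrank_pow _ hb d).trans (Submodule.finrank_mono (span_range_pow_le c d))
  exact (add_le_add_right (Nat.cast_le.2 hmon) _).trans
    (eRk_union_range_add_finrank_span_le hfin h
      (fun α ↦ monomialValue_mem_adjoin c α.1) hf)

/-- The codimension estimate away from lines: `c` is a common zero of the forms with coefficients
`f i`, spanning a linear space of projective dimension `b ≥ 2` over the field of definition. -/
theorem eRk_coefficients_add_le (hb : 2 ≤ b) {d : Fin (n + 1) → ℕ} (hd : ∀ i, 1 ≤ d i)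
    (hmono : Monotone d) {c : Fin (n + 1 + 1) → F} {f : ∀ i, MonomialIndex (n + 1) (d i) → F}
    (hf : ∀ i, ∑ α, f i α * monomialValue c α.1 = 0)
    (hlast : (matroid K F).eRk (⋃ i, Set.range (f i)) + 2 ≤
      (matroid K F).eRk ((⋃ i, Set.range (f i)) ∪ Set.range c))
    (hinit : (matroid K F).eRk ((⋃ i : Fin n, Set.range (f i.castSucc)) ∪ Set.range c) ≤
      (matroid K F).eRk (⋃ i : Fin n, Set.range (f i.castSucc)) + 2)
    (hrank : finrank (relAlgClosure K (⋃ i, Set.range (f i)))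
      (Submodule.span (relAlgClosure K (⋃ i, Set.range (f i))) (Set.range c)) = b + 1) :
    (matroid K F).eRk (⋃ i, Set.range (f i)) + ((∑ i, (d i + 1) + 1 : ℕ) : ℕ∞) ≤
      ((∑ i, Fintype.card (MonomialIndex (n + 1) (d i)) + 2 * n : ℕ) : ℕ∞) := by
  set T := ⋃ i, Set.range (f i)
  obtain ⟨S₀, hS₀fin, hS₀T, hS₀rk, hS₀c⟩ :=
    exists_finite_subset_eRk_union_range_le (relAlgClosure K T) c
  let S := partialUnion S₀ fun i ↦ Set.range (f i)
  have hSfin := finite_partialUnion hS₀fin fun i ↦ Set.finite_range (f i)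
  have hbn : b ≤ n + 1 := by
    have := finrank_range_le_card (R := relAlgClosure K T) c
    rw [Set.finrank, hrank, Fintype.card_fin] at this
    omega
  have hS₀cl : S₀ ⊆ (matroid K F).closure T := fun x hx ↦ mem_relAlgClosure_iff.1 (hS₀T hx)
  have hScl (j : ℕ) : S j ⊆ (matroid K F).closure T :=
    Set.union_subset hS₀cl (Set.iUnion_subset fun i ↦ Set.iUnion_subset fun _ ↦
      (Set.subset_iUnion (fun i ↦ Set.range (f i)) i).trans ((matroid K F).subset_closure T))
  have hS_last : S (n + 1) = S₀ ∪ T := partialUnion_self S₀ _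
  have hrk_last : (matroid K F).eRk (S (n + 1)) = (matroid K F).eRk T :=
    (((matroid K F).eRk_mono (hScl _)).trans_eq ((matroid K F).eRk_closure_eq T)).antisymm
      ((matroid K F).eRk_mono (hS_last ▸ Set.subset_union_right))
  rw [hrank] at hS₀rk hS₀c
  rw [← hrk_last]
  refine eRk_partialUnion_add_le hb hbn hd hmono hS₀fin (Set.finite_range c)
    (fun i ↦ Set.finite_range (f i)) (fun i ↦ encard_range_le_card (f i)) (fun i hi ↦ ?_)
    (hS₀rk.trans_eq ?_) hS₀c ?_ ?_
  · exact eRk_union_range_add_mul_add_one_le (hSfin i)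
      (hrank.ge.trans (finrank_span_relAlgClosure_anti (Set.finite_range c) (hScl i))) hi (hf i)
  · rw [Fintype.card_fin, Nat.add_sub_add_right]
  · rw [partialUnion_castSucc, Set.union_comm S₀]
    exact eRk_union_union_le_add (Set.finite_iUnion fun i ↦ Set.finite_range _) S₀ hinit
  · change (matroid K F).eRk (S (n + 1)) + 2 ≤ (matroid K F).eRk (S (n + 1) ∪ Set.range c)
    rw [hrk_last, hS_last]
    exact hlast.trans ((matroid K F).eRk_mono
      (Set.union_subset_union_left _ Set.subset_union_right))

end RankBound

section LinearSections

attribute [local instance] MvPolynomial.gradedAlgebra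

variable {σ κ : Type*} [Field κ]

lemma idealOfVars_eq_ker_constantCoeff :
    idealOfVars σ κ = RingHom.ker (constantCoeff (σ := σ) (R := κ)) := by
  ext p
  rw [← pow_one (idealOfVars σ κ), mem_pow_idealOfVars_iff', RingHom.mem_ker, constantCoeff_eq]
  simp [Finsupp.degree_eq_zero_iff]

lemma isMaximal_idealOfVars : (idealOfVars σ κ).IsMaximal := by
  rw [idealOfVars_eq_ker_constantCoeff]
  exact RingHom.ker_isMaximal_of_surjective _ fun a ↦ ⟨C a, constantCoeff_C _ a⟩

lemma le_idealOfVars_of_isHomogeneous {I : Ideal (MvPolynomial σ κ)}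
    (hI : I.IsHomogeneous (homogeneousSubmodule σ κ)) (hne : I ≠ ⊤) : I ≤ idealOfVars σ κ := by
  intro p hp
  rw [idealOfVars_eq_ker_constantCoeff, RingHom.mem_ker, constantCoeff_eq]
  by_contra h0
  have hC : C (coeff 0 p) ∈ I := by
    simpa only [homogeneousComponent_zero] using homogeneousComponent_mem_of_mem hI hp 0
  exact hne (I.eq_top_of_isUnit_mem hC ((isUnit_iff_ne_zero.2 h0).map C))

lemma eq_of_le_of_ringKrullDim_quotient_le_zero {R : Type*} [CommRing R] {I P Q : Ideal R}
    (hd : ringKrullDim (R ⧸ I) ≤ 0) [hP : P.IsPrime] [hQ : Q.IsPrime] (hIP : I ≤ P) (hPQ : P ≤ Q) :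
    P = Q := by
  by_contra hne
  let P' : PrimeSpectrum.zeroLocus (I : Set R) := ⟨⟨P, hP⟩, hIP⟩
  let Q' : PrimeSpectrum.zeroLocus (I : Set R) := ⟨⟨Q, hQ⟩, hIP.trans hPQ⟩
  have hlt : P' < Q' := lt_of_le_of_ne (show P ≤ Q from hPQ) fun h ↦
    hne (congrArg (fun x ↦ x.1.asIdeal) h)
  rw [ringKrullDim_quotient] at hd
  exact absurd ((Order.one_le_krullDim_iff.2 ⟨P', Q', hlt⟩).trans hd) (by decide)

lemma idealOfVars_le_radical {I : Ideal (MvPolynomial σ κ)}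
    (hI : I.IsHomogeneous (homogeneousSubmodule σ κ))
    (hd : ringKrullDim (MvPolynomial σ κ ⧸ I) ≤ 0) : idealOfVars σ κ ≤ I.radical := by
  rw [Ideal.radical_eq_sInf]
  refine le_sInf fun P ⟨hIP, hP⟩ ↦ ?_
  let Q := (P.homogeneousCore (homogeneousSubmodule σ κ)).toIdeal
  have hQ : Q.IsPrime := Ideal.IsPrime.homogeneousCore hP
  have hIQ : I ≤ Q := by
    rw [← hI.toIdeal_homogeneousCore_eq_self]
    exact Ideal.homogeneousCore_mono _ hIP
  have hQle : Q ≤ idealOfVars σ κ :=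
    le_idealOfVars_of_isHomogeneous (HomogeneousIdeal.isHomogeneous _) hQ.ne_top
  have := (isMaximal_idealOfVars (σ := σ) (κ := κ)).isPrime
  rw [← eq_of_le_of_ringKrullDim_quotient_le_zero hd hIQ hQle]
  exact Ideal.toIdeal_homogeneousCore_le _ _

lemma ringKrullDim_quotient_sup_span_singleton_le {R : Type*} [CommRing R] {I : Ideal R} {x : R}
    {m : ℕ} (hx : ∀ P ∈ I.minimalPrimes, x ∈ P → P.IsMaximal)
    (hd : ringKrullDim (R ⧸ I) ≤ (m + 1 : ℕ)) :
    ringKrullDim (R ⧸ (I ⊔ Ideal.span {x})) ≤ m := by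
  rw [ringKrullDim_quotient] at hd ⊢
  refine iSup_le fun p ↦ ?_
  obtain ⟨P, hPmin, hP⟩ := Ideal.exists_minimalPrimes_le (I := I) (J := p.head.1.asIdeal)
    (le_sup_left.trans p.head.2)
  have hxp : x ∈ p.head.1.asIdeal :=
    p.head.2 (Ideal.mem_sup_right (Ideal.mem_span_singleton_self x))
  by_cases hxP : x ∈ P
  · have hlen : p.length = 0 := by
      by_contra h0
      have hlt : p.head < p.last := p.strictMono (by simp [Fin.lt_def]; omega)
      exact p.last.1.isPrime.ne_top ((hx P hPmin hxP).1.2 _ (lt_of_le_of_lt hP hlt))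
    simp [hlen]
  · let incl (q : PrimeSpectrum.zeroLocus ((I ⊔ Ideal.span {x} : Ideal R) : Set R)) :
        PrimeSpectrum.zeroLocus (I : Set R) :=
      ⟨q.1, (SetLike.coe_subset_coe.2 le_sup_left).trans q.2⟩
    let q : LTSeries (PrimeSpectrum.zeroLocus (I : Set R)) := p.map incl fun a b hab ↦ hab
    have hPlt : (⟨⟨P, hPmin.1.1⟩, hPmin.1.2⟩ : PrimeSpectrum.zeroLocus (I : Set R)) < q.head := by
      refine lt_of_le_of_ne (show P ≤ p.head.1.asIdeal from hP) fun h ↦ hxP ?_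
      have hPeq : P = p.head.1.asIdeal := congrArg (fun y ↦ y.1.asIdeal) h
      exact hPeq ▸ hxp
    have hle := (Order.LTSeries.length_le_krullDim (q.cons _ hPlt)).trans hd
    rw [RelSeries.cons_length] at hle
    have hle' : p.length + 1 ≤ m + 1 := by exact_mod_cast hle
    exact_mod_cast Nat.le_of_succ_le_succ hle'

lemma exists_linearCombination_X_notMem [Fintype σ] (K : Type*) [Field K] [Infinite K]
    [Algebra K κ] {s : Set (Ideal (MvPolynomial σ κ))} (hs : s.Finite)
    (h : ∀ P ∈ s, ¬ idealOfVars σ κ ≤ P) :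
    ∃ v : σ → K, ∀ P ∈ s, Fintype.linearCombination K (X : σ → MvPolynomial σ κ) v ∉ P := by
  classical
  let preimage (P : Ideal (MvPolynomial σ κ)) : Subspace K (σ → K) :=
    (P.restrictScalars K).comap (Fintype.linearCombination K X)
  have htop : ⊤ ∉ hs.toFinset.image preimage := by
    intro hmem
    obtain ⟨P, hP, hPtop⟩ := Finset.mem_image.1 hmem
    refine h P (hs.mem_toFinset.1 hP) (Ideal.span_le.2 ?_)
    rintro _ ⟨i, rfl⟩
    have hi : Pi.single i 1 ∈ preimage P := by rw [hPtop]; trivial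
    simpa [preimage] using hi
  obtain ⟨v, hv⟩ := (Set.ne_univ_iff_exists_notMem _).1
    (Subspace.biUnion_ne_univ_of_top_notMem htop)
  refine ⟨v, fun P hP hmem ↦ hv ?_⟩
  simp only [Set.mem_iUnion]
  exact ⟨_, Finset.mem_image_of_mem _ (hs.mem_toFinset.2 hP), hmem⟩

/-- The ideal generated by the linear forms whose coefficients are the rows of `L`. -/
def linearIdeal {R ι : Type*} [CommRing R] [Fintype σ] (L : Matrix ι σ R) :
    Ideal (MvPolynomial σ R) :=
  Ideal.span (Set.range L.toMvPolynomial)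

lemma map_linearIdeal {R S ι : Type*} [CommRing R] [CommRing S] [Fintype σ] (φ : R →+* S)
    (L : Matrix ι σ R) :
    (linearIdeal L).map (MvPolynomial.map φ) = linearIdeal (L.map φ) := by
  rw [linearIdeal, linearIdeal, Ideal.map_span, ← Set.range_comp]
  congr 2
  ext1 i
  exact (Matrix.toMvPolynomial_map φ L i).symm

lemma isHomogeneous_linearIdeal {R ι : Type*} [CommRing R] [Fintype σ] (L : Matrix ι σ R) :
    (linearIdeal L).IsHomogeneous (homogeneousSubmodule σ R) :=
  Ideal.homogeneous_span _ _ (by rintro _ ⟨i, rfl⟩; exact ⟨1, L.toMvPolynomial_isHomogeneous i⟩)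

lemma linearIdeal_map_vecCons {K : Type*} [Field K] [Algebra K κ] [Fintype σ] {m : ℕ}
    (v : σ → K) (L : Matrix (Fin m) σ K) :
    linearIdeal (Matrix.map (Matrix.vecCons v L) (algebraMap K κ)) =
      Ideal.span {Fintype.linearCombination K X v} ⊔ linearIdeal (L.map (algebraMap K κ)) := by
  rw [linearIdeal, linearIdeal, ← Ideal.span_union]
  congr 1
  have hv : Fintype.linearCombination K (X : σ → MvPolynomial σ κ) v =
      (Matrix.map (Matrix.vecCons v L) (algebraMap K κ)).toMvPolynomial 0 := by
    simp only [Fintype.linearCombination_apply, Matrix.toMvPolynomial, ← C_mul_X_eq_monomial,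
      Algebra.smul_def, MvPolynomial.algebraMap_apply]
    rfl
  rw [hv]
  ext p
  simp only [Set.mem_range, Fin.exists_fin_succ, Set.singleton_union, Set.mem_insert_iff,
    eq_comm (a := p)]
  rfl

/-- Each general linear form drops the dimension by one, until only the vertex of the cone is
left. -/
theorem exists_idealOfVars_pow_le_sup_linearIdeal [Fintype σ] (K : Type*) [Field K] [Infinite K]
    [Algebra K κ] {m : ℕ} {I : Ideal (MvPolynomial σ κ)}
    (hI : I.IsHomogeneous (homogeneousSubmodule σ κ))
    (hd : ringKrullDim (MvPolynomial σ κ ⧸ I) ≤ m) :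
    ∃ (L : Matrix (Fin m) σ K) (N : ℕ),
      idealOfVars σ κ ^ N ≤ I ⊔ linearIdeal (L.map (algebraMap K κ)) := by
  induction m generalizing I with
  | zero =>
    obtain ⟨N, hN⟩ := Ideal.exists_pow_le_of_le_radical_of_fg
      (idealOfVars_le_radical hI (by simpa using hd)) (idealOfVars_fg σ κ)
    exact ⟨0, N, hN.trans le_sup_left⟩
  | succ m ih =>
    have hfin : (I.minimalPrimes \ {P | P.IsMaximal}).Finite :=
      (Ideal.finite_minimalPrimes_of_isNoetherianRing _ I).subset Set.sdiff_subset
    obtain ⟨v, hv⟩ := exists_linearCombination_X_notMem K hfin fun P hP hle ↦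
      hP.2 (isMaximal_idealOfVars.eq_of_le hP.1.1.1.ne_top hle ▸ isMaximal_idealOfVars)
    have hdrop := ringKrullDim_quotient_sup_span_singleton_le
      (fun P hP hvP ↦ by_contra fun hmax ↦ hv P ⟨hP, hmax⟩ hvP) hd
    have hlin : (Fintype.linearCombination K (X : σ → MvPolynomial σ κ) v).IsHomogeneous 1 := by
      rw [Fintype.linearCombination_apply]
      exact IsHomogeneous.sum _ _ _ fun i _ ↦ by
        simpa [Algebra.smul_def] using (isHomogeneous_C σ _).mul (isHomogeneous_X κ i)
    obtain ⟨L, N, hN⟩ := ih (hI.sup (Ideal.homogeneous_span _ _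
      (by rintro _ rfl; exact ⟨1, hlin⟩))) hdrop
    exact ⟨Matrix.vecCons v L, N, by rwa [linearIdeal_map_vecCons, ← sup_assoc]⟩

end LinearSections

section KrullDimension

lemma ringKrullDim_le_of_isIntegral (A B : Type*) [CommRing A] [CommRing B] [Algebra A B]
    [Algebra.IsIntegral A B] : ringKrullDim B ≤ ringKrullDim A :=
  Order.krullDim_le_of_strictMono (PrimeSpectrum.comap (algebraMap A B)) fun a b hab ↦
    Ideal.IsIntegral.comap_lt_comap (R := A) (I := a.asIdeal) (J := b.asIdeal) hab

lemma ringKrullDim_eq_of_isIntegral_of_injective (A B : Type*) [CommRing A] [CommRing B]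
    [Algebra A B] [Algebra.IsIntegral A B] (hinj : Function.Injective (algebraMap A B)) :
    ringKrullDim B = ringKrullDim A := by
  refine (ringKrullDim_le_of_isIntegral A B).antisymm (iSup_le fun p ↦ ?_)
  have : FaithfulSMul A B := (faithfulSMul_iff_algebraMap_injective A B).2 hinj
  obtain ⟨⟨P, hP⟩⟩ := Ideal.nonempty_primesOver (S := B) p.head.asIdeal
  have := hP.1
  have := hP.2
  obtain ⟨q, hq, -⟩ := Ideal.exists_ltSeries_of_hasGoingUp (S := B) p P
  exact hq ▸ Order.LTSeries.length_le_krullDim q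

variable {k B : Type*} [Field k] [CommRing B] [IsDomain B] [Algebra k B] [Algebra.FiniteType k B]

variable (k B) in
theorem exists_isTranscendenceBasis_ringKrullDim_eq :
    ∃ s : ℕ, ringKrullDim B = s ∧ ∃ x : Fin s → B, IsTranscendenceBasis k x := by
  obtain ⟨s, g, hg, hint⟩ := exists_integral_inj_algHom_of_fg k B
  refine ⟨s, ?_, fun i ↦ g (X i), ?_⟩
  · let _ : Algebra (MvPolynomial (Fin s) k) B := g.toRingHom.toAlgebra
    have : Algebra.IsIntegral (MvPolynomial (Fin s) k) B := ⟨hint⟩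
    rw [ringKrullDim_eq_of_isIntegral_of_injective (MvPolynomial (Fin s) k) B hg,
      MvPolynomial.ringKrullDim_of_isNoetherianRing]
    simp
  · have hgX : g = aeval fun i ↦ g (X i) := by ext i; simp
    have hindep : AlgebraicIndependent k fun i ↦ g (X i) := by
      rwa [AlgebraicIndependent, ← hgX]
    rw [hindep.isTranscendenceBasis_iff_isAlgebraic]
    refine ⟨fun b ↦ ?_⟩
    obtain ⟨p, hp, hpb⟩ := hint b
    have hmem (y) : g y ∈ Algebra.adjoin k (Set.range fun i ↦ g (X i)) := by
      rw [Algebra.adjoin_range_eq_range_aeval, ← hgX]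
      exact ⟨y, rfl⟩
    let g' : MvPolynomial (Fin s) k →+* Algebra.adjoin k (Set.range fun i ↦ g (X i)) :=
      (g : MvPolynomial (Fin s) k →+* B).codRestrict _ hmem
    have hb : IsIntegral (Algebra.adjoin k (Set.range fun i ↦ g (X i))) b :=
      ⟨p.map g', hp.map _, by rw [Polynomial.eval₂_map]; exact hpb⟩
    exact hb.isAlgebraic

lemma le_ringKrullDim_of_algebraicIndependent {ι : Type*} [Finite ι] {x : ι → B}
    (hx : AlgebraicIndependent k x) : (Nat.card ι : WithBot ℕ∞) ≤ ringKrullDim B := by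
  obtain ⟨s, hs, y, hy⟩ := exists_isTranscendenceBasis_ringKrullDim_eq k B
  have hx' := hx.lift_cardinalMk_le_trdeg
  have hy' := hy.lift_cardinalMk_eq_trdeg
  have htrdeg : Algebra.trdeg k B = s := Cardinal.lift_injective (by rw [← hy']; simp)
  rw [htrdeg, ← Nat.cast_card] at hx'
  have hle : Nat.card ι ≤ s := by simpa using hx'
  rw [hs]
  exact_mod_cast hle

open AlgebraicIndependent in
lemma ringKrullDim_le_of_eRk_le {F : Type*} [Field F] [Algebra k F] (φ : B →ₐ[k] F)
    (hφ : Function.Injective φ) {T : Set F} (hT : ∀ b, φ b ∈ Algebra.adjoin k T) {n : ℕ}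
    (hn : (matroid k F).eRk T ≤ n) : ringKrullDim B ≤ n := by
  obtain ⟨s, hs, y, hy⟩ := exists_isTranscendenceBasis_ringKrullDim_eq k B
  have hindep : AlgebraicIndependent k fun i ↦ φ (y i) := hy.1.map' hφ
  have hrange : (matroid k F).Indep (Set.range fun i ↦ φ (y i)) := hindep.to_subtype_range
  have hle : (matroid k F).eRk (Set.range fun i ↦ φ (y i)) ≤ n := by
    rw [← Matroid.eRk_closure_eq] at hn
    refine ((matroid k F).eRk_mono ?_).trans hn
    rintro _ ⟨i, rfl⟩
    exact adjoin_subset_matroid_closure T (hT _)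
  rw [hrange.eRk_eq_encard, ← Set.image_univ, hindep.injective.encard_image, Set.encard_univ,
    ENat.card_eq_coe_fintype_card, Fintype.card_fin] at hle
  rw [hs]
  exact_mod_cast hle

end KrullDimension

section NoetherNormalization

attribute [local instance] MvPolynomial.gradedAlgebra

variable {σ ι κ : Type*} [CommRing κ]

lemma mem_pow_idealOfVars_of_isHomogeneous {p : MvPolynomial σ κ} {e : ℕ}
    (hp : p.IsHomogeneous e) : p ∈ idealOfVars σ κ ^ e := by
  rw [mem_pow_idealOfVars_iff']
  exact fun α hα ↦ hp.coeff_eq_zero hα.ne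

lemma homogeneousComponent_succ_mul {p ℓ : MvPolynomial σ κ} (hℓ : ℓ.IsHomogeneous 1) (e : ℕ) :
    homogeneousComponent (e + 1) (p * ℓ) = homogeneousComponent e p * ℓ := by
  have hdec (q : MvPolynomial σ κ) (n) :
      (DirectSum.decompose (homogeneousSubmodule σ κ) q n : MvPolynomial σ κ) =
        homogeneousComponent n q := decomposition.decompose'_apply q n
  have := DirectSum.coe_decompose_mul_of_right_mem_of_le (homogeneousSubmodule σ κ)
    (a := p) (i := 1) (n := e + 1) hℓ (by omega)
  rwa [hdec, hdec] at this

variable [Fintype σ] [Finite ι] {R : Type*} [CommRing R] [Algebra κ R]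
  {I : Ideal (MvPolynomial σ κ)} {L : Matrix ι σ κ} {N : ℕ}

lemma aeval_mem_span_of_pow_le_sup_linearIdeal
    (hI : I.IsHomogeneous (homogeneousSubmodule σ κ)) (hN : idealOfVars σ κ ^ N ≤ I ⊔ linearIdeal L)
    {c : σ → R} (hc : ∀ p ∈ I, aeval c p = 0) {e : ℕ} {p : MvPolynomial σ κ}
    (hp : p.IsHomogeneous e) :
    aeval c p ∈ Submodule.span
      (Algebra.adjoin κ (Set.range fun j ↦ aeval c (L.toMvPolynomial j)))
      ((fun α ↦ aeval c (monomial α (1 : κ))) '' {α | α.degree ≤ N}) := by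
  induction e using Nat.strong_induction_on generalizing p with
  | _ e ih =>
    obtain heN | heN := le_or_gt e N
    · rw [p.as_sum, map_sum]
      refine Submodule.sum_mem _ fun α hα ↦ ?_
      have hαN : α.degree ≤ N := by
        rwa [← not_imp_comm.1 hp.coeff_eq_zero (mem_support_iff.1 hα)] at heN
      rw [← mul_one (coeff α p), ← smul_eq_mul, ← smul_monomial, map_smul]
      exact Submodule.smul_of_tower_mem _ _ (Submodule.subset_span ⟨α, hαN, rfl⟩)
    · obtain ⟨e, rfl⟩ := Nat.exists_eq_succ_of_ne_zero (Nat.ne_zero_of_lt heN)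
      obtain ⟨q, hq, t, ht, hqt⟩ := Submodule.mem_sup.1
        (hN (Ideal.pow_le_pow_right heN.le (mem_pow_idealOfVars_of_isHomogeneous hp)))
      cases nonempty_fintype ι
      obtain ⟨h, rfl⟩ := Ideal.mem_span_range_iff_exists_fun.1 ht
      have hsum : aeval c p =
          ∑ j, aeval c (homogeneousComponent e (h j)) * aeval c (L.toMvPolynomial j) := by
        have := congrArg (fun p ↦ aeval c (homogeneousComponent (e + 1) p)) hqt
        simp only [map_add, map_sum, homogeneousComponent_succ_mul
          (L.toMvPolynomial_isHomogeneous _), map_mul, homogeneousComponent_eq_self hp,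
          hc _ (homogeneousComponent_mem_of_mem hI hq _), zero_add] at this
        exact this.symm
      rw [hsum]
      refine Submodule.sum_mem _ fun j _ ↦ ?_
      rw [mul_comm]
      exact Submodule.smul_mem _
        (⟨_, Algebra.subset_adjoin ⟨j, rfl⟩⟩ :
          Algebra.adjoin κ (Set.range fun j ↦ aeval c (L.toMvPolynomial j)))
        (ih e (by omega) (homogeneousComponent_isHomogeneous e (h j)))

theorem isIntegral_of_pow_le_sup_linearIdeal
    (hI : I.IsHomogeneous (homogeneousSubmodule σ κ)) (hN : idealOfVars σ κ ^ N ≤ I ⊔ linearIdeal L)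
    {c : σ → R} (hc : ∀ p ∈ I, aeval c p = 0) (p : MvPolynomial σ κ) :
    IsIntegral (Algebra.adjoin κ (Set.range fun j ↦ aeval c (L.toMvPolynomial j))) (aeval c p) := by
  set T := Algebra.adjoin κ (Set.range fun j ↦ aeval c (L.toMvPolynomial j))
  let s : Set R := (fun α ↦ aeval c (monomial α (1 : κ))) '' {α | α.degree ≤ N}
  have hs : s.Finite := (Finsupp.finite_of_degree_le N).image _
  have hmem (α : σ →₀ ℕ) : aeval c (monomial α (1 : κ)) ∈ Submodule.span T s :=
    aeval_mem_span_of_pow_le_sup_linearIdeal hI hN hc (isHomogeneous_monomial 1 rfl)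
  have hmul : Submodule.span T s * Submodule.span T s ≤ Submodule.span T s := by
    rw [Submodule.span_mul_span, Submodule.span_le]
    rintro _ ⟨_, ⟨α, -, rfl⟩, _, ⟨β, -, rfl⟩, rfl⟩
    simpa only [← map_mul, monomial_mul, mul_one, SetLike.mem_coe] using hmem (α + β)
  let S : Subalgebra T R := (Submodule.span T s).toSubalgebra
    (by simpa using hmem 0) fun x y hx hy ↦ hmul (Submodule.mul_mem_mul hx hy)
  have hS : S.toSubmodule.FG := ⟨hs.toFinset, by rw [Set.Finite.coe_toFinset]; rfl⟩
  refine IsIntegral.of_mem_of_fg S hS _ ?_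
  rw [p.as_sum, map_sum]
  refine Subalgebra.sum_mem _ fun α _ ↦ ?_
  rw [← mul_one (coeff α p), ← smul_eq_mul, ← smul_monomial, map_smul]
  exact Submodule.smul_of_tower_mem (Submodule.span T s) _ (hmem α)

theorem ringKrullDim_quotient_le_of_pow_le_sup_linearIdeal {κ : Type*} [Field κ]
    {I : Ideal (MvPolynomial σ κ)} {L : Matrix ι σ κ}
    (hI : I.IsHomogeneous (homogeneousSubmodule σ κ))
    (hN : idealOfVars σ κ ^ N ≤ I ⊔ linearIdeal L) :
    ringKrullDim (MvPolynomial σ κ ⧸ I) ≤ Nat.card ι := by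
  let c (i : σ) : MvPolynomial σ κ ⧸ I := Ideal.Quotient.mk I (X i)
  have hc : aeval c = Ideal.Quotient.mkₐ κ I := by ext i; simp [c]
  let T := Algebra.adjoin κ (Set.range fun j ↦ aeval c (L.toMvPolynomial j))
  have : Algebra.IsIntegral T (MvPolynomial σ κ ⧸ I) := by
    refine ⟨fun x ↦ ?_⟩
    obtain ⟨p, rfl⟩ := Ideal.Quotient.mkₐ_surjective κ I x
    rw [← hc]
    exact isIntegral_of_pow_le_sup_linearIdeal hI hN
      (fun q hq ↦ by rw [hc]; exact Ideal.Quotient.eq_zero_iff_mem.2 hq) p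
  calc ringKrullDim (MvPolynomial σ κ ⧸ I)
      ≤ ringKrullDim T := ringKrullDim_le_of_isIntegral T _
    _ ≤ ringKrullDim (MvPolynomial ι κ) := by
      rw [show T = _ from Algebra.adjoin_range_eq_range_aeval κ _]
      exact ringKrullDim_le_of_surjective _ (AlgHom.rangeRestrict_surjective (aeval (R := κ) _))
    _ = Nat.card ι := by simp [MvPolynomial.ringKrullDim_of_isNoetherianRing]

end NoetherNormalization

section Semicontinuity

attribute [local instance] MvPolynomial.gradedAlgebra

variable {A κ : Type*} [CommRing A] [Field κ] (φ : A →+* κ)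

/-- The denominator is the determinant of elements of `M` which specialise to a basis. -/
lemma exists_map_ne_zero_forall_smul_mem {ι : Type*} [Finite ι] (M : Submodule A (ι → A))
    (h : Submodule.span κ ((fun v ↦ φ ∘ v) '' (M : Set (ι → A))) = ⊤) :
    ∃ a : A, φ a ≠ 0 ∧ ∀ v, a • v ∈ M := by
  classical
  cases nonempty_fintype ι
  obtain ⟨f, hf, -, hli⟩ :=
    Submodule.exists_fun_fin_finrank_span_eq κ ((fun v ↦ φ ∘ v) '' (M : Set (ι → A)))
  have hcard : Module.finrank κ (Submodule.span κ ((fun v ↦ φ ∘ v) '' (M : Set (ι → A)))) =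
      Fintype.card ι := by rw [h, finrank_top, Module.finrank_pi]
  let e : ι ≃ Fin _ := Fintype.equivFinOfCardEq hcard.symm
  choose m hmM hmf using hf
  have hdet : φ (Matrix.of (m ∘ e)).det ≠ 0 := by
    have hli' : LinearIndependent κ (φ.mapMatrix (Matrix.of (m ∘ e))).row := by
      rw [show (φ.mapMatrix (Matrix.of (m ∘ e))).row = f ∘ e from funext fun i ↦ hmf (e i)]
      exact hli.comp e e.injective
    rw [RingHom.map_det]
    exact ((Matrix.isUnit_iff_isUnit_det _).1
      (Matrix.linearIndependent_rows_iff_isUnit.1 hli')).ne_zero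
  refine ⟨_, hdet, fun v ↦ ?_⟩
  rw [← Matrix.vecMul_one v, ← Matrix.vecMul_smul, ← Matrix.adjugate_mul, ← Matrix.vecMul_vecMul,
    Matrix.vecMul_eq_sum]
  exact M.sum_mem fun i _ ↦ M.smul_mem _ (hmM (e i))

variable {σ : Type*} {J : Ideal (MvPolynomial σ A)} {N : ℕ}

lemma mem_span_image_of_mem_map {p : MvPolynomial σ κ} (hp : p ∈ J.map (MvPolynomial.map φ)) :
    p ∈ Submodule.span κ (MvPolynomial.map φ '' (J : Set (MvPolynomial σ A))) := by
  suffices ∀ q, q * p ∈ Submodule.span κ (MvPolynomial.map φ '' (J : Set (MvPolynomial σ A))) by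
    simpa using this 1
  induction hp using Submodule.span_induction with
  | mem p hp =>
    intro q
    obtain ⟨x, hx, rfl⟩ := hp
    rw [q.as_sum, Finset.sum_mul]
    refine Submodule.sum_mem _ fun α _ ↦ ?_
    have hα : monomial α (coeff α q) * MvPolynomial.map φ x =
        coeff α q • MvPolynomial.map φ (monomial α 1 * x) := by
      simp [smul_eq_C_mul, ← mul_assoc, C_mul_monomial]
    rw [hα]
    exact Submodule.smul_mem _ _ (Submodule.subset_span ⟨_, J.mul_mem_left _ hx, rfl⟩)
  | zero => simp
  | add p p' _ _ hp hp' => exact fun q ↦ mul_add q p p' ▸ Submodule.add_mem _ (hp q) (hp' q)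
  | smul x p _ hp => exact fun q ↦ by rw [smul_eq_mul, ← mul_assoc]; exact hp _

theorem exists_map_ne_zero_span_singleton_mul_pow_le [Finite σ]
    (hJ : J.IsHomogeneous (homogeneousSubmodule σ A))
    (h : idealOfVars σ κ ^ N ≤ J.map (MvPolynomial.map φ)) :
    ∃ a : A, φ a ≠ 0 ∧ Ideal.span {C a} * idealOfVars σ A ^ N ≤ J := by
  classical
  cases nonempty_fintype σ
  let ι := {α : σ →₀ ℕ // α.degree = N}
  have : Finite ι := ((Finsupp.finite_of_degree_le N).subset fun α hα ↦ le_of_eq hα).to_subtype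
  cases nonempty_fintype ι
  let toForm : (ι → A) →ₗ[A] MvPolynomial σ A :=
    Fintype.linearCombination A fun α ↦ monomial α.1 1
  let coeffs : MvPolynomial σ κ →ₗ[κ] ι → κ := LinearMap.pi fun α ↦ lcoeff κ α.1
  have hform (q : MvPolynomial σ A) :
      toForm (fun α ↦ coeff α.1 q) = homogeneousComponent N q := by
    ext β
    simp only [toForm, Fintype.linearCombination_apply, coeff_sum, coeff_smul, coeff_monomial,
      coeff_homogeneousComponent, smul_eq_mul, mul_ite, mul_one, mul_zero]
    split_ifs with hβ
    · rw [Fintype.sum_eq_single ⟨β, hβ⟩ fun α hα ↦ if_neg fun h ↦ hα (Subtype.ext h), if_pos rfl]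
    · exact Finset.sum_eq_zero fun α _ ↦ if_neg fun (h : α.1 = β) ↦ hβ (h ▸ α.2)
  have hspan : Submodule.span κ ((fun v ↦ φ ∘ v) ''
      ((J.restrictScalars A).comap toForm : Set (ι → A))) = ⊤ := by
    rw [eq_top_iff, ← (Pi.basisFun κ ι).span_eq, Submodule.span_le]
    rintro _ ⟨α, rfl⟩
    have hα : coeffs (monomial α.1 1) = Pi.basisFun κ ι α := by
      ext β
      simp [coeffs, coeff_monomial, Pi.single_apply, Subtype.coe_inj, eq_comm]
    rw [← hα]
    have hmem : monomial α.1 1 ∈ J.map (MvPolynomial.map φ) :=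
      h (mem_pow_idealOfVars_of_isHomogeneous (isHomogeneous_monomial _ α.2))
    have := Submodule.mem_map_of_mem (f := coeffs) (mem_span_image_of_mem_map φ hmem)
    rw [Submodule.map_span, ← Set.image_comp] at this
    refine Submodule.span_mono ?_ this
    rintro _ ⟨q, hq, rfl⟩
    refine ⟨fun α ↦ coeff α.1 q, ?_, ?_⟩
    · change toForm _ ∈ J
      exact hform q ▸ homogeneousComponent_mem_of_mem hJ hq N
    · ext α
      simp [coeffs, coeff_map]
  obtain ⟨a, ha, haJ⟩ := exists_map_ne_zero_forall_smul_mem φ _ hspan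
  refine ⟨a, ha, ?_⟩
  rw [pow_idealOfVars_eq_span, Ideal.span_mul_span', Ideal.span_le]
  rintro _ ⟨_, rfl, _, ⟨α, hα, rfl⟩, rfl⟩
  simpa [toForm, smul_monomial, C_mul_monomial] using haJ (Pi.single (⟨α, hα⟩ : ι) 1)

variable {φ} in
lemma pow_le_map_of_span_singleton_mul_pow_le {a : A} (ha : φ a ≠ 0)
    (h : Ideal.span {C a} * idealOfVars σ A ^ N ≤ J) :
    idealOfVars σ κ ^ N ≤ J.map (MvPolynomial.map φ) := by
  have hunit : Ideal.span {C (σ := σ) (φ a)} = ⊤ :=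
    Ideal.span_singleton_eq_top.2 ((isUnit_iff_ne_zero.2 ha).map C)
  have hvars : (idealOfVars σ A).map (MvPolynomial.map φ) = idealOfVars σ κ := by
    simp [idealOfVars, Ideal.map_span, ← Set.range_comp, Function.comp_def]
  have := Ideal.map_mono (f := MvPolynomial.map φ) h
  rwa [Ideal.map_mul, Ideal.map_pow, Ideal.map_span, Set.image_singleton, map_C, hunit, hvars,
    Ideal.top_mul] at this

lemma isHomogeneous_map (hJ : J.IsHomogeneous (homogeneousSubmodule σ A)) :
    (J.map (MvPolynomial.map φ)).IsHomogeneous (homogeneousSubmodule σ κ) := by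
  obtain ⟨S, rfl⟩ := (Ideal.IsHomogeneous.iff_exists _ _).1 hJ
  rw [Ideal.map_span]
  refine Ideal.homogeneous_span _ _ ?_
  rintro _ ⟨_, ⟨⟨p, e, hp⟩, -, rfl⟩, rfl⟩
  exact ⟨e, IsHomogeneous.map hp φ⟩

section DimensionOfSpecialization

variable {K κ' : Type*} [Field K] [Algebra K A] [Algebra K κ] [Field κ'] [Algebra K κ']
  {m : ℕ}

lemma pow_le_map_sup_linearIdeal [Fintype σ] {a : A} {L : Matrix (Fin m) σ K} {ψ : A →ₐ[K] κ'}
    (ha : ψ a ≠ 0)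
    (h : Ideal.span {C a} * idealOfVars σ A ^ N ≤ J ⊔ linearIdeal (L.map (algebraMap K A))) :
    idealOfVars σ κ' ^ N ≤
      J.map (MvPolynomial.map (ψ : A →+* κ')) ⊔ linearIdeal (L.map (algebraMap K κ')) := by
  have := pow_le_map_of_span_singleton_mul_pow_le (φ := (ψ : A →+* κ')) ha h
  rwa [Ideal.map_sup, map_linearIdeal, Matrix.map_map, ← RingHom.coe_comp,
    AlgHom.comp_algebraMap_of_tower] at this

theorem exists_span_singleton_mul_pow_le_sup_linearIdeal [Fintype σ] [Infinite K] (φ : A →ₐ[K] κ)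
    (hJ : J.IsHomogeneous (homogeneousSubmodule σ A))
    (h : ringKrullDim (MvPolynomial σ κ ⧸ J.map (MvPolynomial.map (φ : A →+* κ))) ≤ m) :
    ∃ (L : Matrix (Fin m) σ K) (N : ℕ) (a : A), φ a ≠ 0 ∧
      Ideal.span {C a} * idealOfVars σ A ^ N ≤ J ⊔ linearIdeal (L.map (algebraMap K A)) := by
  obtain ⟨L, N, hN⟩ :=
    exists_idealOfVars_pow_le_sup_linearIdeal K (isHomogeneous_map (φ : A →+* κ) hJ) h
  refine ⟨L, N, exists_map_ne_zero_span_singleton_mul_pow_le (φ : A →+* κ)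
    (hJ.sup (isHomogeneous_linearIdeal _)) ?_⟩
  rwa [Ideal.map_sup, map_linearIdeal, Matrix.map_map, ← RingHom.coe_comp,
    AlgHom.comp_algebraMap_of_tower]

variable (κ') in
theorem exists_ne_zero_forall_ringKrullDim_quotient_map_le [Finite σ] [Infinite K] (φ : A →ₐ[K] κ)
    (hJ : J.IsHomogeneous (homogeneousSubmodule σ A))
    (h : ringKrullDim (MvPolynomial σ κ ⧸ J.map (MvPolynomial.map (φ : A →+* κ))) ≤ m) :
    ∃ a : A, φ a ≠ 0 ∧ ∀ ψ : A →ₐ[K] κ', ψ a ≠ 0 →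
      ringKrullDim (MvPolynomial σ κ' ⧸ J.map (MvPolynomial.map (ψ : A →+* κ'))) ≤ m := by
  cases nonempty_fintype σ
  obtain ⟨L, N, a, ha, haJ⟩ := exists_span_singleton_mul_pow_le_sup_linearIdeal φ hJ h
  refine ⟨a, ha, fun ψ hψ ↦ ?_⟩
  simpa using ringKrullDim_quotient_le_of_pow_le_sup_linearIdeal
    (isHomogeneous_map (ψ : A →+* κ') hJ) (pow_le_map_sup_linearIdeal hψ haJ)

end DimensionOfSpecialization

end Semicontinuity

section IrreducibleSets

variable {X Y : Type*} [TopologicalSpace X] [TopologicalSpace Y]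

lemma isIrreducible_image_iff_of_isInducing {f : X → Y} (hf : Topology.IsInducing f) {s : Set X} :
    IsIrreducible (f '' s) ↔ IsIrreducible s := by
  refine ⟨fun h ↦ ⟨Set.image_nonempty.1 h.nonempty, fun u v hu hv hsu hsv ↦ ?_⟩,
    fun h ↦ h.image f hf.continuous.continuousOn⟩
  obtain ⟨u', hu', rfl⟩ := hf.isOpen_iff.1 hu
  obtain ⟨v', hv', rfl⟩ := hf.isOpen_iff.1 hv
  have hinter := h.isPreirreducible u' v' hu' hv'
  simp only [← Set.image_inter_preimage, Set.image_nonempty] at hinter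
  exact hinter hsu hsv

lemma exists_maximal_isIrreducible_of_subset {S t : Set X} (ht : t ⊆ S) (hti : IsIrreducible t) :
    ∃ C, t ⊆ C ∧ Maximal (fun t ↦ t ⊆ S ∧ IsIrreducible t) C := by
  have hval := Topology.IsInducing.subtypeVal (t := S)
  obtain ⟨u, hu, htu⟩ := exists_mem_irreducibleComponents_subset_of_isIrreducible
    (Subtype.val ⁻¹' t : Set S) ((isIrreducible_image_iff_of_isInducing hval).1
      (by rwa [Subtype.image_preimage_coe, Set.inter_eq_right.2 ht]))
  refine ⟨Subtype.val '' u, fun x hx ↦ ⟨⟨x, ht hx⟩, htu hx, rfl⟩,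
    ⟨Subtype.coe_image_subset S u, (isIrreducible_image_iff_of_isInducing hval).2 hu.prop⟩, ?_⟩
  rintro v ⟨hvS, hvi⟩ huv x hx
  have hle := hu.le_of_ge (y := Subtype.val ⁻¹' v) ((isIrreducible_image_iff_of_isInducing hval).1
    (by rwa [Subtype.image_preimage_coe, Set.inter_eq_right.2 hvS])) (Set.image_subset_iff.1 huv)
  exact ⟨⟨x, hvS hx⟩, hle hx, rfl⟩

lemma subset_closure_inter_of_maximal_isIrreducible [TopologicalSpace.NoetherianSpace X]
    {S C : Set X} (hC : Maximal (fun t ↦ t ⊆ closure S ∧ IsIrreducible t) C) :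
    C ⊆ closure (C ∩ S) := by
  obtain ⟨T, hTfin, hTclosed, hTirr, hT⟩ :=
    TopologicalSpace.NoetherianSpace.exists_finite_set_isClosed_irreducible
      (isClosed_closure (s := S))
  have hfin : ((fun t ↦ closure (t ∩ S)) '' T).Finite := hTfin.image _
  have hcover : C ⊆ ⋃₀ ((fun t ↦ closure (t ∩ S)) '' T) := by
    refine hC.prop.1.trans (closure_minimal (fun v hv ↦ ?_) ?_)
    · obtain ⟨t, ht, hvt⟩ := hT ▸ subset_closure hv
      exact ⟨_, ⟨t, ht, rfl⟩, subset_closure ⟨hvt, hv⟩⟩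
    · rw [Set.sUnion_image]
      exact hTfin.isClosed_biUnion fun _ _ ↦ isClosed_closure
  obtain ⟨_, hz, hCz⟩ := isIrreducible_iff_sUnion_isClosed.1 hC.prop.2 hfin.toFinset
    (by simp) (by simpa using hcover)
  obtain ⟨t, ht, rfl⟩ := hfin.mem_toFinset.1 hz
  have hCt : C ⊆ t := hCz.trans (closure_minimal Set.inter_subset_left (hTclosed t ht))
  have htC : t ⊆ C := hC.le_of_ge ⟨hT ▸ Set.subset_sUnion_of_mem ht, hTirr t ht⟩ hCt
  rwa [htC.antisymm hCt] at hCz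

lemma dimSet_mono {s t : Set X} (h : s ⊆ t) : dimSet s ≤ dimSet t :=
  (Topology.IsEmbedding.inclusion (closure_mono h)).isInducing.topologicalKrullDim_le

theorem maximal_isIrreducible_and_forall_lt {S L : Set X}
    (hLS : L ⊆ S) (hL : IsIrreducible L)
    (h : ∀ C, Maximal (fun t ↦ t ⊆ S ∧ IsIrreducible t) C → C ⊆ L ∨ dimSet C < dimSet L) :
    Maximal (fun t ↦ t ⊆ S ∧ IsIrreducible t) L ∧
      ∀ C, Maximal (fun t ↦ t ⊆ S ∧ IsIrreducible t) C → C ≠ L → dimSet C < dimSet L := by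
  refine ⟨⟨⟨hLS, hL⟩, fun t ht hLt ↦ ?_⟩, fun C hC hne ↦ (h C hC).resolve_left fun hCL ↦ ?_⟩
  · obtain ⟨C, htC, hC⟩ := exists_maximal_isIrreducible_of_subset ht.1 ht.2
    refine htC.trans ((h C hC).resolve_right fun hlt ↦ ?_)
    exact (dimSet_mono (Set.Subset.trans hLt htC)).not_gt hlt
  · exact hne (hCL.antisymm (hC.le_of_ge ⟨hLS, hL⟩ hCL))

end IrreducibleSets

section ZariskiCharts

variable {X ι K : Type*} [Field K] [TopologicalSpace X] {ev : X ≃ (ι → K)} {s t : Set X}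

/-- The coordinates `ev` identify the topology of `X` with the Zariski topology of an affine
space: the closed sets are the common zero loci of ideals of polynomials in the coordinates. -/
def IsZariskiChart (ev : X ≃ (ι → K)) : Prop :=
  ∀ s : Set X, IsClosed s ↔ ∃ I : Ideal (MvPolynomial ι K), s = ev ⁻¹' zeroLocus K I

/-- The ideal of the polynomials in the coordinates `ev` which vanish on `s`. -/
def chartIdeal (ev : X ≃ (ι → K)) (s : Set X) : Ideal (MvPolynomial ι K) :=
  vanishingIdeal K (ev '' s)

omit [TopologicalSpace X] in
lemma mem_chartIdeal {p : MvPolynomial ι K} :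
    p ∈ chartIdeal ev s ↔ ∀ v ∈ s, aeval (ev v) p = 0 := Set.forall_mem_image

omit [TopologicalSpace X] in
lemma chartIdeal_anti (hst : s ⊆ t) : chartIdeal ev t ≤ chartIdeal ev s :=
  vanishingIdeal_anti_mono (Set.image_mono hst)

omit [TopologicalSpace X] in
lemma chartIdeal_preimage_zeroLocus [Finite ι] [IsAlgClosed K] (P : Ideal (MvPolynomial ι K))
    [P.IsPrime] : chartIdeal ev (ev ⁻¹' zeroLocus K P) = P := by
  rw [chartIdeal, Set.image_preimage_eq _ ev.surjective, IsPrime.vanishingIdeal_zeroLocus]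

namespace IsZariskiChart

variable (h : IsZariskiChart ev)

include h

lemma isClosed_preimage_zeroLocus (I : Ideal (MvPolynomial ι K)) :
    IsClosed (ev ⁻¹' zeroLocus K I) :=
  (h _).2 ⟨I, rfl⟩

lemma closure_eq (s : Set X) : closure s = ev ⁻¹' zeroLocus K (chartIdeal ev s) := by
  refine (closure_minimal ?_ (h.isClosed_preimage_zeroLocus _)).antisymm ?_
  · exact Set.image_subset_iff.1 (zeroLocus_vanishingIdeal_le _)
  · obtain ⟨I, hI⟩ := (h _).1 (isClosed_closure (s := s))
    rw [hI]
    refine Set.preimage_mono (zeroLocus_anti_mono (le_zeroLocus_iff_le_vanishingIdeal.1 ?_))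
    exact Set.image_subset_iff.2 (subset_closure.trans hI.le)

lemma mem_closure_iff {v : X} : v ∈ closure s ↔ ∀ p ∈ chartIdeal ev s, aeval (ev v) p = 0 := by
  rw [h.closure_eq]
  rfl

lemma chartIdeal_le_chartIdeal_iff (ht : IsClosed t) :
    chartIdeal ev t ≤ chartIdeal ev s ↔ s ⊆ t := by
  refine ⟨fun hle v hv ↦ ?_, chartIdeal_anti⟩
  rw [← ht.closure_eq, h.mem_closure_iff]
  exact fun p hp ↦ mem_chartIdeal.1 (hle hp) v hv

lemma chartIdeal_closure (s : Set X) : chartIdeal ev (closure s) = chartIdeal ev s := by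
  rw [h.closure_eq, chartIdeal, Set.image_preimage_eq _ ev.surjective]
  exact (zeroLocus_vanishingIdeal_galoisConnection (k := K) (K := K)).u_l_u_eq_u _

lemma isInducing_pointToPoint :
    Topology.IsInducing fun v ↦ (pointToPoint (ev v) : PrimeSpectrum (MvPolynomial ι K)) := by
  have hpre (I : Ideal (MvPolynomial ι K)) :
      (fun v ↦ (pointToPoint (ev v) : PrimeSpectrum (MvPolynomial ι K))) ⁻¹'
        PrimeSpectrum.zeroLocus I = ev ⁻¹' zeroLocus K I :=
    Set.ext fun _ ↦ forall₂_congr fun p _ ↦ mem_vanishingIdeal_singleton_iff _ p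
  refine ⟨TopologicalSpace.ext_isClosed fun s ↦ ?_⟩
  simp only [isClosed_induced_iff, PrimeSpectrum.isClosed_iff_zeroLocus_ideal]
  constructor
  · intro hs
    obtain ⟨I, rfl⟩ := (h s).1 hs
    exact ⟨_, ⟨I, rfl⟩, hpre I⟩
  · rintro ⟨_, ⟨I, rfl⟩, rfl⟩
    exact (hpre I) ▸ h.isClosed_preimage_zeroLocus I

lemma noetherianSpace [Finite ι] : TopologicalSpace.NoetherianSpace X :=
  h.isInducing_pointToPoint.noetherianSpace

lemma isIrreducible_iff_isPrime : IsIrreducible s ↔ (chartIdeal ev s).IsPrime := by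
  rw [← isIrreducible_image_iff_of_isInducing h.isInducing_pointToPoint,
    PrimeSpectrum.isIrreducible_iff_vanishingIdeal_isPrime, ← Function.comp_def, Set.image_comp,
    vanishingIdeal_pointToPoint, chartIdeal]

theorem dimSet_eq [Finite ι] [IsAlgClosed K] (s : Set X) :
    dimSet s = ringKrullDim (MvPolynomial ι K ⧸ chartIdeal ev s) := by
  have hval : Topology.IsInducing (Subtype.val : closure s → X) := .subtypeVal
  have hclosed (T : TopologicalSpace.IrreducibleCloseds (closure s)) :
      IsClosed (Subtype.val '' (T : Set (closure s))) :=
    isClosed_closure.isClosedMap_subtype_val _ T.isClosed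
  let e : TopologicalSpace.IrreducibleCloseds (closure s) ↪o
      (PrimeSpectrum.zeroLocus (chartIdeal ev s : Set (MvPolynomial ι K)))ᵒᵈ :=
    OrderEmbedding.ofMapLEIff (fun T ↦ OrderDual.toDual
      ⟨⟨chartIdeal ev (Subtype.val '' (T : Set (closure s))), h.isIrreducible_iff_isPrime.1
        ((isIrreducible_image_iff_of_isInducing hval).2 T.isIrreducible)⟩,
        (h.chartIdeal_closure s).ge.trans (chartIdeal_anti (Subtype.coe_image_subset _ _))⟩)
      fun T T' ↦ (h.chartIdeal_le_chartIdeal_iff (hclosed T')).trans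
        (Set.image_subset_image_iff Subtype.val_injective)
  have hsurj : Function.Surjective e := by
    intro P
    obtain ⟨⟨P, hP⟩, hsP⟩ := P
    have hsub : ev ⁻¹' zeroLocus K P ⊆ closure s := by
      rw [h.closure_eq]
      exact Set.preimage_mono (zeroLocus_anti_mono hsP)
    have himage : Subtype.val '' (Subtype.val ⁻¹' (ev ⁻¹' zeroLocus K P) : Set (closure s)) =
        ev ⁻¹' zeroLocus K P := by
      rw [Subtype.image_preimage_coe, Set.inter_eq_right.2 hsub]
    refine ⟨⟨Subtype.val ⁻¹' (ev ⁻¹' zeroLocus K P), ?_, ?_⟩, ?_⟩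
    · rwa [← isIrreducible_image_iff_of_isInducing hval, himage, h.isIrreducible_iff_isPrime,
        chartIdeal_preimage_zeroLocus]
    · exact (h.isClosed_preimage_zeroLocus P).preimage continuous_subtype_val
    · refine congrArg OrderDual.toDual (Subtype.ext (PrimeSpectrum.ext ?_))
      exact (congrArg (chartIdeal ev) himage).trans (chartIdeal_preimage_zeroLocus P)
  rw [dimSet, topologicalKrullDim, ringKrullDim_quotient, ← Order.krullDim_orderDual]
  exact Order.krullDim_eq_of_orderIso
    ⟨Equiv.ofBijective e ⟨e.injective, hsurj⟩, e.le_iff_le⟩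

end IsZariskiChart

end ZariskiCharts

section LinearCharts

variable {K M ι : Type*} [Field K] [AddCommGroup M] [Module K M]

lemma isClosed_zariskiTopology_iff {s : Set M} :
    @IsClosed M (zariskiTopology K M) s ↔ s ∈ zariskiCloseds K M := by
  rw [← @isOpen_compl_iff _ _ (zariskiTopology K M)]
  change sᶜᶜ ∈ _ ↔ _
  rw [compl_compl]

theorem isZariskiChart_linearEquiv [Finite ι] (e : M ≃ₗ[K] (ι → K)) :
    @IsZariskiChart M ι K _ (zariskiTopology K M) e.toEquiv := by
  classical
  cases nonempty_fintype ι
  intro s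
  rw [isClosed_zariskiTopology_iff]
  constructor
  · rintro ⟨S, rfl⟩
    let g : MvPolynomial (M →ₗ[K] K) K →ₐ[K] MvPolynomial ι K :=
      aeval fun φ ↦ ∑ j, C (φ (e.symm (Pi.single j 1))) * X j
    have hg (v : M) (p) : aeval (e v) (g p) = polyEval K M p v := by
      have hcomp : (aeval (e v)).comp g = aeval (fun φ : M →ₗ[K] K ↦ φ v) := by
        ext φ
        simp only [g, AlgHom.comp_apply, aeval_X, map_sum, map_mul, aeval_C]
        conv_rhs => rw [← e.symm_apply_apply v, pi_eq_sum_univ' (e v), map_sum, map_sum]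
        simp [mul_comm]
      exact DFunLike.congr_fun hcomp p
    refine ⟨Ideal.span (g '' S), ?_⟩
    ext v
    simp [zeroLocus_span, ← hg]
  · rintro ⟨I, rfl⟩
    let g : MvPolynomial ι K →ₐ[K] MvPolynomial (M →ₗ[K] K) K :=
      rename fun j ↦ (LinearMap.proj j).comp e.toLinearMap
    have hg (v : M) (p) : polyEval K M (g p) v = aeval (e v) p := by
      simp only [polyEval, g, eval_rename]
      rfl
    refine ⟨g '' I, ?_⟩
    ext v
    simp [hg]

end LinearCharts

section TupleForms

attribute [local instance] MvPolynomial.gradedAlgebra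

variable {r : ℕ} {J : Type*} {d : J → ℕ} {R S : Type*} [CommRing R] [CommRing S]

/-- The coefficients of a tuple of forms of degrees `d` in the variables `x_0, …, x_r` are indexed
by the pairs consisting of a member of the tuple and a monomial of the corresponding degree. -/
abbrev CoeffIndex (r : ℕ) {J : Type*} (d : J → ℕ) : Type _ := Σ i, MonomialIndex r (d i)

/-- The `i`-th form of the tuple of forms with coefficients `f`. -/
def tupleForm (f : CoeffIndex r d → R) (i : J) : MvPolynomial (Fin (r + 1)) R :=
  ∑ α : MonomialIndex r (d i), monomial α.1 (f ⟨i, α⟩)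

lemma isHomogeneous_tupleForm (f : CoeffIndex r d → R) (i : J) :
    (tupleForm f i).IsHomogeneous (d i) :=
  .sum _ _ _ fun α _ ↦ isHomogeneous_monomial _ α.2

lemma coeff_tupleForm (f : CoeffIndex r d → R) (i : J) (α : MonomialIndex r (d i)) :
    coeff α.1 (tupleForm f i) = f ⟨i, α⟩ := by
  classical
  simp [tupleForm, coeff_sum, coeff_monomial, Subtype.coe_inj]

lemma tupleForm_coeff {p : J → MvPolynomial (Fin (r + 1)) R}
    (hp : ∀ i, (p i).IsHomogeneous (d i)) (i : J) :
    tupleForm (fun x : CoeffIndex r d ↦ coeff x.2.1 (p x.1)) i = p i := by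
  ext β
  by_cases hβ : β.degree = d i
  · exact coeff_tupleForm _ i ⟨β, hβ⟩
  · rw [(hp i).coeff_eq_zero hβ, (isHomogeneous_tupleForm _ i).coeff_eq_zero hβ]

lemma map_tupleForm (φ : R →+* S) (f : CoeffIndex r d → R) (i : J) :
    map φ (tupleForm f i) = tupleForm (φ ∘ f) i := by
  simp [tupleForm]

lemma aeval_tupleForm [Algebra R S] (f : CoeffIndex r d → R) (c : Fin (r + 1) → S) (i : J) :
    aeval c (tupleForm f i) = ∑ α, algebraMap R S (f ⟨i, α⟩) * monomialValue c α.1 := by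
  simp [tupleForm, aeval_monomial, monomialValue, Finsupp.prod_fintype]

lemma aeval_comp_X {σ A : Type*} [CommRing A] [Algebra R A] (x : σ → A) :
    ⇑(aeval x : MvPolynomial σ R →ₐ[R] A) ∘ X = x :=
  _root_.funext fun i ↦ aeval_X x i

/-- The ideal generated by the forms with coefficients `f`. -/
def tupleIdeal (f : CoeffIndex r d → R) : Ideal (MvPolynomial (Fin (r + 1)) R) :=
  Ideal.span (Set.range (tupleForm f))

lemma isHomogeneous_tupleIdeal (f : CoeffIndex r d → R) :
    (tupleIdeal f).IsHomogeneous (homogeneousSubmodule (Fin (r + 1)) R) := by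
  refine Ideal.homogeneous_span _ _ ?_
  rintro _ ⟨i, rfl⟩
  exact ⟨d i, isHomogeneous_tupleForm f i⟩

lemma map_tupleIdeal (φ : R →+* S) (f : CoeffIndex r d → R) :
    (tupleIdeal f).map (map φ) = tupleIdeal (φ ∘ f) := by
  rw [tupleIdeal, Ideal.map_span, ← Set.range_comp, tupleIdeal]
  exact congrArg (Ideal.span <| Set.range ·) (funext (map_tupleForm φ f))

/-- The coefficient indices of a subtuple, as coefficient indices of the full tuple. -/
def subtupleIndex {J' : Type*} (ι : J' → J) (x : CoeffIndex r (d ∘ ι)) : CoeffIndex r d :=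
  ⟨ι x.1, x.2⟩

end TupleForms

section TupleSpace

variable (K : Type*) [Field K] (r n : ℕ) (d : Fin n → ℕ)

/-- The coordinates of the affine space of tuples of forms given by the coefficients. -/
def tupleEquiv : tupleSpace K r n d ≃ₗ[K] (CoeffIndex r d → K) where
  toFun F x := coeff x.2.1 (F x.1 : MvPolynomial (Fin (r + 1)) K)
  map_add' F G := by ext x; simp
  map_smul' a F := by ext x; simp
  invFun f i := ⟨tupleForm f i, isHomogeneous_tupleForm f i⟩
  left_inv F := funext fun i ↦ Subtype.ext (tupleForm_coeff (fun i ↦ (F i).2) i)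
  right_inv f := funext fun x ↦ coeff_tupleForm f x.1 x.2

lemma isZariskiChart_tupleEquiv : IsZariskiChart (tupleEquiv K r n d).toEquiv :=
  isZariskiChart_linearEquiv _

variable {K r n d}

lemma tupleForm_tupleEquiv (F : tupleSpace K r n d) (i : Fin n) :
    tupleForm (tupleEquiv K r n d F) i = F i :=
  tupleForm_coeff (fun i ↦ (F i).2) i

end TupleSpace

section Lines

variable {n : ℕ} {J : Type*} {d : J → ℕ} {R S : Type*} [CommRing R] [CommRing S]

/-- Restriction of polynomials to the line through `v` and `w`. The first two variables `x_0` and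
`x_1` serve as homogeneous coordinates on the line: `x_j` is mapped to `v_j x_0 + w_j x_1`. -/
def restrictToLine (v w : Fin (n + 1 + 1) → R) :
    MvPolynomial (Fin (n + 1 + 1)) R →ₐ[R] MvPolynomial (Fin (n + 1 + 1)) R :=
  aeval fun j ↦ C (v j) * X 0 + C (w j) * X 1

lemma restrictToLine_X (v w : Fin (n + 1 + 1) → R) (j : Fin (n + 1 + 1)) :
    restrictToLine v w (X j) = C (v j) * X 0 + C (w j) * X 1 :=
  aeval_X _ j

lemma isHomogeneous_restrictToLine {p : MvPolynomial (Fin (n + 1 + 1)) R} {e : ℕ}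
    (hp : p.IsHomogeneous e) (v w : Fin (n + 1 + 1) → R) :
    (restrictToLine v w p).IsHomogeneous e := by
  have hX (a : R) (j : Fin (n + 1 + 1)) : (C a * X j : MvPolynomial _ R).IsHomogeneous 1 := by
    simpa using (isHomogeneous_C _ a).mul (isHomogeneous_X R j)
  simpa [restrictToLine] using hp.aeval _ fun j ↦ (hX (v j) 0).add (hX (w j) 1)

lemma map_restrictToLine (φ : R →+* S) (v w : Fin (n + 1 + 1) → R)
    (p : MvPolynomial (Fin (n + 1 + 1)) R) :
    map φ (restrictToLine v w p) = restrictToLine (φ ∘ v) (φ ∘ w) (map φ p) := by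
  induction p using MvPolynomial.induction_on with
  | C a => simp [restrictToLine]
  | add p q hp hq => simp [hp, hq]
  | mul_X p j hp => simp [hp, restrictToLine_X]

lemma eval_restrictToLine (v w c : Fin (n + 1 + 1) → R)
    (p : MvPolynomial (Fin (n + 1 + 1)) R) :
    eval c (restrictToLine v w p) = eval (fun j ↦ c 0 * v j + c 1 * w j) p := by
  induction p using MvPolynomial.induction_on with
  | C a => simp [restrictToLine]
  | add p q hp hq => simp [hp, hq]
  | mul_X p j hp => simp [hp, restrictToLine_X, mul_comm]

lemma restrictToLine_linearCombination (v w : Fin (n + 1 + 1) → R) (a b c e : R)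
    (p : MvPolynomial (Fin (n + 1 + 1)) R) :
    restrictToLine (a • v + b • w) (c • v + e • w) p =
      restrictToLine (Fin.cons a fun _ ↦ b) (Fin.cons c fun _ ↦ e) (restrictToLine v w p) := by
  have h1 : (1 : Fin (n + 1 + 1)) = Fin.succ 0 := rfl
  induction p using MvPolynomial.induction_on with
  | C a => simp [restrictToLine]
  | add p q hp hq => simp only [map_add, hp, hq]
  | mul_X p j hp =>
    simp only [map_mul, hp, restrictToLine_X, map_add, algHom_C, algebraMap_eq, Pi.add_apply,
      Pi.smul_apply, smul_eq_mul, h1, Fin.cons_zero, Fin.cons_succ]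
    ring

/-- The forms with coefficients `f` vanish identically on the line through `v` and `w`. This is an
identity of polynomials, so it is preserved by arbitrary extensions of scalars. -/
def VanishesOnLine (f : CoeffIndex (n + 1) d → R) (v w : Fin (n + 1 + 1) → R) : Prop :=
  ∀ i, restrictToLine v w (tupleForm f i) = 0

variable {f : CoeffIndex (n + 1) d → R} {v w : Fin (n + 1 + 1) → R}

namespace VanishesOnLine

lemma map (h : VanishesOnLine f v w) (φ : R →+* S) :
    VanishesOnLine (φ ∘ f) (φ ∘ v) (φ ∘ w) := fun i ↦ by
  rw [← map_tupleForm, ← map_restrictToLine, h i, map_zero]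

lemma linearCombination (h : VanishesOnLine f v w) (a b c e : R) :
    VanishesOnLine f (a • v + b • w) (c • v + e • w) := fun i ↦ by
  rw [restrictToLine_linearCombination, h i, map_zero]

end VanishesOnLine

lemma vanishesOnLine_map_iff {φ : R →+* S} (hφ : Function.Injective φ) :
    VanishesOnLine (φ ∘ f) (φ ∘ v) (φ ∘ w) ↔ VanishesOnLine f v w := by
  refine ⟨fun h i ↦ map_injective φ hφ ?_, fun h ↦ h.map φ⟩
  rw [map_restrictToLine, map_tupleForm, h i, map_zero]

lemma vanishesOnLine_iff_eval [IsDomain R] [Infinite R] :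
    VanishesOnLine f v w ↔ ∀ i (s t : R), eval (fun j ↦ s * v j + t * w j) (tupleForm f i) = 0 := by
  refine ⟨fun h i s t ↦ ?_, fun h i ↦ funext fun c ↦ ?_⟩
  · simpa [eval_restrictToLine] using
      congrArg (eval (Fin.cons s fun _ ↦ t : Fin (n + 1 + 1) → R)) (h i)
  · rw [eval_restrictToLine, h, map_zero]

lemma vanishOnCommonLine_iff {K : Type*} [Field K] [Infinite K] {m : ℕ} {d : Fin m → ℕ}
    (F : tupleSpace K (n + 1) m d) :
    vanishOnCommonLine K F ↔ ∃ v w, LinearIndependent K ![v, w] ∧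
      VanishesOnLine (tupleEquiv K (n + 1) m d F) v w := by
  simp only [vanishOnCommonLine, vanishesOnLine_iff_eval, tupleForm_tupleEquiv]

end Lines

section VariablePermutations

variable {r : ℕ} {J : Type*} {d : J → ℕ}

/-- The action on the coefficient indices of a permutation of the variables. -/
def permuteIndex (σ : Equiv.Perm (Fin (r + 1))) (x : CoeffIndex r d) : CoeffIndex r d :=
  ⟨x.1, x.2.1.mapDomain σ, by rw [Finsupp.degree_mapDomain]; exact x.2.2⟩

lemma permuteIndex_symm_comp {X : Type*} (σ : Equiv.Perm (Fin (r + 1))) (f : CoeffIndex r d → X) :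
    f ∘ permuteIndex σ ∘ permuteIndex σ.symm = f := by
  refine funext fun x ↦ congrArg f (congrArg (Sigma.mk x.1) (Subtype.ext ?_))
  simp [permuteIndex, ← Finsupp.mapDomain_comp]

variable {R : Type*} [CommRing R]

lemma tupleForm_comp_permuteIndex (σ : Equiv.Perm (Fin (r + 1))) (f : CoeffIndex r d → R) (i : J) :
    tupleForm (f ∘ permuteIndex σ) i = rename σ.symm (tupleForm f i) := by
  rw [← tupleForm_coeff (fun i ↦ (isHomogeneous_tupleForm f i).rename_isHomogeneous) i]
  congr 1
  funext x
  have hx : x.2.1 = (x.2.1.mapDomain σ).mapDomain σ.symm := by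
    simp [← Finsupp.mapDomain_comp]
  rw [hx, coeff_rename_mapDomain _ σ.symm.injective]
  exact (coeff_tupleForm f x.1 (permuteIndex σ x).2).symm

lemma VanishesOnLine.comp_permuteIndex {n : ℕ} {f : CoeffIndex (n + 1) d → R}
    {v w : Fin (n + 1 + 1) → R} (h : VanishesOnLine f v w) (σ : Equiv.Perm (Fin (n + 1 + 1))) :
    VanishesOnLine (f ∘ permuteIndex σ) (v ∘ σ) (w ∘ σ) := fun i ↦ by
  rw [tupleForm_comp_permuteIndex, restrictToLine, aeval_rename, ← h i, restrictToLine]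
  congr 2
  funext j
  simp

end VariablePermutations

section NormalizedFrames

variable {n : ℕ} {J : Type*} {d : J → ℕ} {R S F : Type*} [CommRing R] [CommRing S] [Field F]

/-- The submatrix of `![v, w]` formed by the columns `i` and `j` is the identity matrix. -/
structure IsNormalizedAt {ι : Type*} (i j : ι) (v w : ι → R) : Prop where
  fst_left : v i = 1
  fst_right : v j = 0
  snd_left : w i = 0
  snd_right : w j = 1

namespace IsNormalizedAt

variable {ι κ : Type*} {i j : ι} {v w : ι → R}

lemma map (h : IsNormalizedAt i j v w) (φ : R →+* S) : IsNormalizedAt i j (φ ∘ v) (φ ∘ w) := by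
  constructor <;> simp [h.fst_left, h.fst_right, h.snd_left, h.snd_right]

lemma comp {i j : κ} {σ : κ → ι} (h : IsNormalizedAt (σ i) (σ j) v w) :
    IsNormalizedAt i j (v ∘ σ) (w ∘ σ) :=
  ⟨h.fst_left, h.fst_right, h.snd_left, h.snd_right⟩

lemma ne [Nontrivial R] (h : IsNormalizedAt i j v w) : i ≠ j := by
  rintro rfl
  exact one_ne_zero (h.fst_left.symm.trans h.fst_right)

lemma linearIndependent (h : IsNormalizedAt i j v w) : LinearIndependent R ![v, w] := by
  refine LinearIndependent.pair_iff.2 fun s t hst ↦ ⟨?_, ?_⟩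
  · simpa [h.fst_left, h.snd_left] using congrFun hst i
  · simpa [h.fst_right, h.snd_right] using congrFun hst j

end IsNormalizedAt

lemma exists_forall_inv_mul_mem_valuationSubring {ι : Type*} [Finite ι]
    (V : ValuationSubring F) {v : ι → F} (hv : v ≠ 0) :
    ∃ i, v i ≠ 0 ∧ ∀ j, (v i)⁻¹ * v j ∈ V := by
  obtain ⟨k, hk⟩ := Function.ne_iff.1 hv
  have : Nonempty ι := ⟨k⟩
  obtain ⟨i, hi⟩ := Finite.exists_max fun i ↦ V.valuation (v i)
  have h0 : v i ≠ 0 := fun h ↦ hk <| by simpa [h] using hi k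
  refine ⟨i, h0, fun j ↦ ?_⟩
  rw [← V.valuation_le_one_iff, map_mul, map_inv₀, mul_comm, ← div_eq_mul_inv]
  exact div_le_one_of_le₀ (hi j) zero_le

lemma VanishesOnLine.exists_isNormalizedAt {f : CoeffIndex (n + 1) d → F}
    {v w : Fin (n + 1 + 1) → F} (hf : VanishesOnLine f v w) (hli : LinearIndependent F ![v, w])
    (V : ValuationSubring F) : ∃ (v' w' : Fin (n + 1 + 1) → V) (i j : Fin (n + 1 + 1)),
      IsNormalizedAt i j v' w' ∧ VanishesOnLine f (V.subtype ∘ v') (V.subtype ∘ w') := by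
  rw [LinearIndependent.pair_iff] at hli
  obtain ⟨i, hi, hiV⟩ := exists_forall_inv_mul_mem_valuationSubring V (v := v)
    fun h ↦ one_ne_zero (hli 1 0 (by simp [h])).1
  let u : Fin (n + 1 + 1) → F := w - (w i * (v i)⁻¹) • v
  obtain ⟨j, hj, hjV⟩ := exists_forall_inv_mul_mem_valuationSubring V (v := u) fun h ↦
    one_ne_zero (hli (-(w i * (v i)⁻¹)) 1 (by rw [← h]; module)).2
  let v₁ (k) : V := ⟨_, hiV k⟩
  let w' (k) : V := ⟨_, hjV k⟩
  have hv₁ : v₁ i = 1 := by ext; simp [v₁, hi]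
  have hw'i : w' i = 0 := by ext; simp [w', u, hi]
  have hw'j : w' j = 1 := by ext; simp [w', hj]
  refine ⟨v₁ - v₁ j • w', w', i, j, ?_, ?_⟩
  · constructor <;> simp [hv₁, hw'i, hw'j]
  · have h₁ := hf.linearCombination (v i)⁻¹ 0 (-((u j)⁻¹ * (w i * (v i)⁻¹))) (u j)⁻¹
    convert h₁.linearCombination 1 (-((v i)⁻¹ * v j)) 0 1 using 1 <;> funext k <;>
      simp [v₁, w', u] <;> ring

end NormalizedFrames

section VanishingProjection

variable {n : ℕ} {J : Type*} {d : J → ℕ} {R S : Type*} [CommRing R] [CommRing S]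
  {v w : Fin (n + 1 + 1) → R}

lemma IsNormalizedAt.restrictToLine_restrictToLine (h : IsNormalizedAt 0 1 v w)
    (p : MvPolynomial (Fin (n + 1 + 1)) R) :
    restrictToLine v w (restrictToLine v w p) = restrictToLine v w p := by
  induction p using MvPolynomial.induction_on with
  | C a => simp [restrictToLine]
  | add p q hp hq => simp only [map_add, hp, hq]
  | mul_X p j hp =>
    simp [hp, restrictToLine_X, h.fst_left, h.fst_right, h.snd_left, h.snd_right]

/-- The coefficients of the forms `F - F|_ℓ`, where `F` runs through the forms with coefficients
`f` and `ℓ` is the line through `v` and `w`. If `v` and `w` are normalized at the first two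
coordinates, this is a projection onto the space of tuples vanishing on `ℓ`. -/
def vanishingProjection (v w : Fin (n + 1 + 1) → R) (f : CoeffIndex (n + 1) d → R) :
    CoeffIndex (n + 1) d → R :=
  fun x ↦ coeff x.2.1 (tupleForm f x.1 - restrictToLine v w (tupleForm f x.1))

lemma tupleForm_vanishingProjection (v w : Fin (n + 1 + 1) → R) (f : CoeffIndex (n + 1) d → R)
    (i : J) : tupleForm (vanishingProjection v w f) i =
      tupleForm f i - restrictToLine v w (tupleForm f i) :=
  tupleForm_coeff (fun i ↦ (isHomogeneous_tupleForm f i).sub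
    (isHomogeneous_restrictToLine (isHomogeneous_tupleForm f i) v w)) i

lemma comp_vanishingProjection (φ : R →+* S) (v w : Fin (n + 1 + 1) → R)
    (f : CoeffIndex (n + 1) d → R) :
    φ ∘ vanishingProjection v w f = vanishingProjection (φ ∘ v) (φ ∘ w) (φ ∘ f) := by
  funext x
  simp only [vanishingProjection, Function.comp_apply, ← coeff_map, map_sub, map_restrictToLine,
    map_tupleForm]

lemma IsNormalizedAt.vanishesOnLine_vanishingProjection (h : IsNormalizedAt 0 1 v w)
    (f : CoeffIndex (n + 1) d → R) : VanishesOnLine (vanishingProjection v w f) v w := fun i ↦ by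
  rw [tupleForm_vanishingProjection, map_sub, h.restrictToLine_restrictToLine, sub_self]

lemma VanishesOnLine.vanishingProjection_eq {f : CoeffIndex (n + 1) d → R}
    (h : VanishesOnLine f v w) : vanishingProjection v w f = f := by
  funext x
  rw [vanishingProjection, h, sub_zero, coeff_tupleForm]

end VanishingProjection

section GenericLine

variable {n : ℕ} {J : Type*}

/-- The variables of the polynomial ring over which the generic tuple of forms vanishing on a line
is defined: the coefficients of a tuple of forms, and the entries with index at least two of the two
spanning vectors of a line normalized at the first two coordinates. -/
abbrev LineParameter (n : ℕ) (d : J → ℕ) : Type _ :=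
  CoeffIndex (n + 1) d ⊕ Fin n ⊕ Fin n

variable (K : Type*) [Field K] (d : J → ℕ)

/-- The first spanning vector `(1, 0, u_0, …, u_{n-1})` of the generic line. -/
def genericFst : Fin (n + 1 + 1) → MvPolynomial (LineParameter n d) K :=
  Fin.cons 1 (Fin.cons 0 fun j ↦ X (Sum.inr (Sum.inl j)))

/-- The second spanning vector `(0, 1, w_0, …, w_{n-1})` of the generic line. -/
def genericSnd : Fin (n + 1 + 1) → MvPolynomial (LineParameter n d) K :=
  Fin.cons 0 (Fin.cons 1 fun j ↦ X (Sum.inr (Sum.inr j)))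

lemma isNormalizedAt_generic :
    IsNormalizedAt 0 1 (genericFst K d) (genericSnd (n := n) K d) :=
  ⟨rfl, rfl, rfl, rfl⟩

/-- The coefficients of the generic tuple of forms vanishing on the generic line. -/
def genericTuple : CoeffIndex (n + 1) d → MvPolynomial (LineParameter n d) K :=
  vanishingProjection (genericFst K d) (genericSnd K d) fun x ↦ X (Sum.inl x)

lemma vanishesOnLine_genericTuple :
    VanishesOnLine (genericTuple (n := n) K d) (genericFst K d) (genericSnd K d) :=
  (isNormalizedAt_generic K d).vanishesOnLine_vanishingProjection _

/-- The ideal of polynomial relations between the coefficients of the generic tuple of forms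
vanishing on the generic line. -/
def lineLocusIdeal (n : ℕ) : Ideal (MvPolynomial (CoeffIndex (n + 1) d) K) :=
  RingHom.ker (aeval (genericTuple K d) : MvPolynomial _ K →ₐ[K] MvPolynomial (LineParameter n d) K)

variable {K d}

lemma mem_lineLocusIdeal {p : MvPolynomial (CoeffIndex (n + 1) d) K} :
    p ∈ lineLocusIdeal K d n ↔ aeval (genericTuple K d) p = 0 :=
  RingHom.mem_ker

instance isPrime_lineLocusIdeal : (lineLocusIdeal K d n).IsPrime :=
  RingHom.ker_isPrime _

lemma IsNormalizedAt.aeval_eq_zero_of_mem_lineLocusIdeal {R : Type*} [CommRing R] [Algebra K R]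
    {f : CoeffIndex (n + 1) d → R} {v w : Fin (n + 1 + 1) → R} (h : IsNormalizedAt 0 1 v w)
    (hf : VanishesOnLine f v w) {p : MvPolynomial (CoeffIndex (n + 1) d) K}
    (hp : p ∈ lineLocusIdeal K d n) : aeval f p = 0 := by
  let ψ : MvPolynomial (LineParameter n d) K →ₐ[K] R :=
    aeval (Sum.elim f (Sum.elim (fun j ↦ v j.succ.succ) fun j ↦ w j.succ.succ))
  have hv : ψ ∘ genericFst K d = v := funext <|
    Fin.cases (by simp [genericFst, h.fst_left]) <|
      Fin.cases (by simp [genericFst, ← h.fst_right]) fun j ↦ by simp [genericFst, ψ]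
  have hw : ψ ∘ genericSnd K d = w := funext <|
    Fin.cases (by simp [genericSnd, h.snd_left]) <|
      Fin.cases (by simp [genericSnd, ← h.snd_right]) fun j ↦ by simp [genericSnd, ψ]
  have hψ : ψ ∘ genericTuple K d = f := by
    have hX : ψ ∘ (fun x ↦ X (Sum.inl x)) = f := funext fun x ↦ by simp [ψ]
    have hψ := comp_vanishingProjection (ψ : MvPolynomial (LineParameter n d) K →+* R)
      (genericFst K d) (genericSnd K d) fun x ↦ X (Sum.inl x)
    simpa only [genericTuple, RingHom.coe_coe, hv, hw, hX, hf.vanishingProjection_eq] using hψ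
  rw [← hψ, ← map_zero ψ, ← mem_lineLocusIdeal.1 hp]
  exact (comp_aeval_apply _ ψ p).symm

lemma VanishesOnLine.exists_isNormalizedAt_of_minor_ne_zero {F : Type*} [Field F]
    {f : CoeffIndex (n + 1) d → F} {v w : Fin (n + 1 + 1) → F} (hf : VanishesOnLine f v w)
    {i j : Fin (n + 1 + 1)} (h : v i * w j - v j * w i ≠ 0) :
    ∃ v' w', IsNormalizedAt i j v' w' ∧ VanishesOnLine f v' w' := by
  set δ := v i * w j - v j * w i with hδ
  refine ⟨_, _, ?_, hf.linearCombination (δ⁻¹ * w j) (-(δ⁻¹ * v j)) (-(δ⁻¹ * w i)) (δ⁻¹ * v i)⟩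
  constructor <;> simp only [Pi.add_apply, Pi.smul_apply, smul_eq_mul] <;> field_simp <;>
    rw [hδ] <;> ring

variable [Infinite K]

lemma generic_minor_ne_zero {i j : Fin (n + 1 + 1)} (h : i ≠ j) :
    genericFst K d i * genericSnd K d j - genericFst K d j * genericSnd K d i ≠ 0 := by
  have : Infinite {x : K // x ≠ 0} := (Set.finite_singleton (0 : K)).infinite_compl.to_subtype
  let a : Fin n ↪ {x : K // x ≠ 0} := Fin.valEmbedding.trans (Infinite.natEmbedding _)
  refine fun h0 ↦ absurd (congrArg (aeval (Sum.elim 0 (Sum.elim 1 fun j ↦ (a j : K)))) h0) ?_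
  simp only [genericFst, genericSnd, map_sub, map_mul, map_zero]
  revert h
  refine Fin.cases ?_ (Fin.cases ?_ fun i ↦ ?_) i <;>
    refine Fin.cases ?_ (Fin.cases ?_ fun j ↦ ?_) j <;>
    simp [(a _).2, sub_eq_zero, Subtype.coe_inj, @eq_comm _ i]

lemma rename_permuteIndex_mem_lineLocusIdeal (σ : Equiv.Perm (Fin (n + 1 + 1)))
    {p : MvPolynomial (CoeffIndex (n + 1) d) K} (hp : p ∈ lineLocusIdeal K d n) :
    rename (permuteIndex σ) p ∈ lineLocusIdeal K d n := by
  let ι := algebraMap (MvPolynomial (LineParameter n d) K)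
    (FractionRing (MvPolynomial (LineParameter n d) K))
  have hι : Function.Injective ι := IsFractionRing.injective _ _
  obtain ⟨v, w, hN, hvw⟩ := (((vanishesOnLine_genericTuple K d).map ι).comp_permuteIndex
    σ).exists_isNormalizedAt_of_minor_ne_zero (i := 0) (j := 1) <| by
      simpa using hι.ne (generic_minor_ne_zero (d := d) (K := K) (σ.injective.ne zero_ne_one))
  rw [mem_lineLocusIdeal, aeval_rename]
  refine hι ?_
  rw [map_zero, ← hN.aeval_eq_zero_of_mem_lineLocusIdeal hvw hp]
  exact comp_aeval_apply _ (IsScalarTower.toAlgHom K _ _) _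

lemma exists_perm_apply_zero_one {i j : Fin (n + 1 + 1)} (h : i ≠ j) :
    ∃ σ : Equiv.Perm (Fin (n + 1 + 1)), σ 0 = i ∧ σ 1 = j := by
  have h0 : (0 : Fin (n + 1 + 1)) ≠ Equiv.swap 0 i j := fun h' ↦
    h (by simpa using congrArg (Equiv.swap 0 i) h')
  refine ⟨Equiv.swap 0 i * Equiv.swap 1 (Equiv.swap 0 i j), ?_, ?_⟩
  · simp [Equiv.swap_apply_of_ne_of_ne zero_ne_one h0]
  · simp

theorem VanishesOnLine.aeval_eq_zero_of_mem_lineLocusIdeal {F : Type*} [Field F] [Algebra K F]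
    {f : CoeffIndex (n + 1) d → F} {v w : Fin (n + 1 + 1) → F} (hf : VanishesOnLine f v w)
    (hli : LinearIndependent F ![v, w]) {p : MvPolynomial (CoeffIndex (n + 1) d) K}
    (hp : p ∈ lineLocusIdeal K d n) : aeval f p = 0 := by
  obtain ⟨v', w', i, j, hN, hf'⟩ := hf.exists_isNormalizedAt hli ⊤
  obtain ⟨σ, rfl, rfl⟩ := exists_perm_apply_zero_one hN.ne
  have h := (hN.map (ValuationSubring.subtype ⊤)).comp.aeval_eq_zero_of_mem_lineLocusIdeal
    (hf'.comp_permuteIndex σ) (rename_permuteIndex_mem_lineLocusIdeal σ.symm hp)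
  rwa [aeval_rename, Function.comp_assoc, permuteIndex_symm_comp] at h

end GenericLine

section LineLocus

variable {K : Type*} [Field K] {n m : ℕ} {d : Fin m → ℕ}

/-- The locus `L` of tuples of forms vanishing on a common line. -/
def lineLocus (K : Type*) [Field K] (n : ℕ) {m : ℕ} (d : Fin m → ℕ) :
    Set (tupleSpace K (n + 1) m d) :=
  {F | vanishOnCommonLine K F}

section Infinite

variable [Infinite K] {p : MvPolynomial (CoeffIndex (n + 1) d) K}

lemma mem_chartIdeal_lineLocus :
    p ∈ chartIdeal (tupleEquiv K (n + 1) m d).toEquiv (lineLocus K n d) ↔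
      ∀ (f : _ → K) v w, LinearIndependent K ![v, w] → VanishesOnLine f v w → aeval f p = 0 := by
  rw [mem_chartIdeal, (tupleEquiv K (n + 1) m d).toEquiv.forall_congr_left]
  simp [lineLocus, vanishOnCommonLine_iff]

lemma chartIdeal_lineLocus_le :
    chartIdeal (tupleEquiv K (n + 1) m d).toEquiv (lineLocus K n d) ≤ lineLocusIdeal K d n := by
  refine fun p hp ↦ mem_lineLocusIdeal.2 <| MvPolynomial.funext fun c ↦ ?_
  have hc := (isNormalizedAt_generic (n := n) K d).map (eval c)
  have h := mem_chartIdeal_lineLocus.1 hp _ _ _ hc.linearIndependent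
    ((vanishesOnLine_genericTuple K d).map (eval c))
  rw [map_zero, ← h]
  exact comp_aeval_apply _ (aeval c) _

variable (K n d)

theorem chartIdeal_lineLocus :
    chartIdeal (tupleEquiv K (n + 1) m d).toEquiv (lineLocus K n d) = lineLocusIdeal K d n :=
  chartIdeal_lineLocus_le.antisymm fun _ hp ↦ mem_chartIdeal_lineLocus.2 fun _ _ _ hli hf ↦
    hf.aeval_eq_zero_of_mem_lineLocusIdeal hli hp

theorem isIrreducible_lineLocus : IsIrreducible (lineLocus K n d) := by
  rw [(isZariskiChart_tupleEquiv K (n + 1) m d).isIrreducible_iff_isPrime, chartIdeal_lineLocus]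
  exact isPrime_lineLocusIdeal

end Infinite

end LineLocus

section Closedness

variable {n : ℕ} {J : Type*} {d : J → ℕ} {K : Type*} [Field K] [IsAlgClosed K]

lemma IsNormalizedAt.exists_vanishesOnLine_of_algebraMap {B : Type*} [CommRing B] [IsDomain B]
    [Algebra K B] {f : CoeffIndex (n + 1) d → K} {v w : Fin (n + 1 + 1) → B}
    {i j : Fin (n + 1 + 1)} (h : IsNormalizedAt i j v w)
    (hf : VanishesOnLine (algebraMap K B ∘ f) v w) :
    ∃ v w, LinearIndependent K ![v, w] ∧ VanishesOnLine f v w := by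
  let A := Algebra.adjoin K (Set.range v ∪ Set.range w)
  have : Algebra.FiniteType K A := (Subalgebra.fg_iff_finiteType _).1 <| Subalgebra.fg_def.2
    ⟨_, (Set.finite_range _).union (Set.finite_range _), rfl⟩
  obtain ⟨ε, -⟩ := exists_algHom_apply_ne_zero (E := K) (one_ne_zero : (1 : A) ≠ 0)
  let v' (l) : A := ⟨v l, Algebra.subset_adjoin (Or.inl ⟨l, rfl⟩)⟩
  let w' (l) : A := ⟨w l, Algebra.subset_adjoin (Or.inr ⟨l, rfl⟩)⟩
  have hN : IsNormalizedAt i j v' w' := ⟨Subtype.ext h.fst_left, Subtype.ext h.fst_right,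
    Subtype.ext h.snd_left, Subtype.ext h.snd_right⟩
  have hf' : VanishesOnLine (algebraMap K A ∘ f) v' w' :=
    (vanishesOnLine_map_iff (φ := (A.val : A →+* B)) Subtype.val_injective).1 hf
  refine ⟨_, _, (hN.map (ε : A →+* K)).linearIndependent, ?_⟩
  convert hf'.map (ε : A →+* K)
  exact funext fun x ↦ (ε.commutes (f x)).symm

/-- Completeness of the variety of lines: a place of the function field that specializes the forms
also specializes a line on which they vanish. -/
theorem exists_vanishesOnLine_of_specialization {F : Type*} [Field F]
    (φ : MvPolynomial (CoeffIndex (n + 1) d) K →+* F) {f : CoeffIndex (n + 1) d → K}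
    (hφ : ∀ p, φ p = 0 → aeval f p = 0) {v w : Fin (n + 1 + 1) → F}
    (hli : LinearIndependent F ![v, w]) (hf : VanishesOnLine (φ ∘ X) v w) :
    ∃ v w, LinearIndependent K ![v, w] ∧ VanishesOnLine f v w := by
  obtain ⟨V, hV⟩ := exists_valuationSubring_mem_nonunits_iff φ
    (aeval f : MvPolynomial (CoeffIndex (n + 1) d) K →ₐ[K] K).toRingHom fun p ↦ mt (hφ p)
  obtain ⟨v', w', i, j, hN, hf'⟩ := hf.exists_isNormalizedAt hli V
  let φV : MvPolynomial (CoeffIndex (n + 1) d) K →+* V :=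
    φ.codRestrict V.toSubring fun p ↦ (hV p).1
  let π := IsLocalRing.residue V
  let _ : Algebra K (IsLocalRing.ResidueField V) := (π.comp (φV.comp C)).toAlgebra
  have hπ (x) : π (φV (X x)) = algebraMap K _ (f x) := by
    rw [← sub_eq_zero, RingHom.algebraMap_toAlgebra, RingHom.comp_apply, ← map_sub,
      IsLocalRing.residue_eq_zero_iff, ← ValuationSubring.coe_mem_nonunits_iff]
    rw [RingHom.comp_apply, ← map_sub]
    refine (hV _).2.2 ?_
    simp
  have hφV : VanishesOnLine (φV ∘ X) v' w' :=
    (vanishesOnLine_map_iff (φ := V.subtype) Subtype.val_injective).1 hf'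
  refine (hN.map π).exists_vanishesOnLine_of_algebraMap (f := f) ?_
  convert hφV.map π
  exact funext fun x ↦ (hπ x).symm

theorem isClosed_lineLocus (K : Type*) [Field K] [IsAlgClosed K] (n : ℕ) {m : ℕ}
    (d : Fin m → ℕ) : IsClosed (lineLocus K n d) := by
  have : Infinite K := IsAlgClosed.instInfinite
  refine isClosed_of_closure_subset fun F hF ↦ (vanishOnCommonLine_iff F).2 ?_
  rw [(isZariskiChart_tupleEquiv K (n + 1) m d).mem_closure_iff, chartIdeal_lineLocus] at hF
  let ι := algebraMap (MvPolynomial (LineParameter n d) K)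
    (FractionRing (MvPolynomial (LineParameter n d) K))
  have hι : Function.Injective ι := IsFractionRing.injective _ _
  refine exists_vanishesOnLine_of_specialization
    (ι.comp (aeval (genericTuple K d) : _ →ₐ[K] _).toRingHom) (fun p hp ↦ hF p ?_)
    ((isNormalizedAt_generic K d).map ι).linearIndependent ?_
  · exact mem_lineLocusIdeal.2 ((map_eq_zero_iff ι hι).1 hp)
  · refine (congrArg (VanishesOnLine · _ _) (funext fun x ↦ ?_)).mpr
      ((vanishesOnLine_genericTuple K d).map ι)
    simp

end Closedness

section TangentSpace

variable {ι σ R S : Type*} [CommRing R] [CommRing S] [Algebra R S] {q q' : ι → S} {I : Ideal S}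

lemma aeval_sub_aeval_mem (h : ∀ y, q y - q' y ∈ I) (p : MvPolynomial ι R) :
    aeval q p - aeval q' p ∈ I := by
  have hcomp : (Ideal.Quotient.mkₐ R I).comp (aeval q) =
      (Ideal.Quotient.mkₐ R I).comp (aeval q') :=
    algHom_ext fun y ↦ by simpa using Ideal.Quotient.eq.2 (h y)
  exact Ideal.Quotient.eq.1 (DFunLike.congr_fun hcomp p)

lemma aeval_mem_pow (hq : ∀ y, q y ∈ I) {k : ℕ} {p : MvPolynomial ι R}
    (hp : p ∈ idealOfVars ι R ^ k) : aeval q p ∈ I ^ k := by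
  have hle : idealOfVars ι R ≤ I.comap (aeval q : MvPolynomial ι R →ₐ[R] S) :=
    Ideal.span_le.2 <| Set.range_subset_iff.2 fun y ↦ by simpa using hq y
  exact (Ideal.pow_right_mono hle k).trans (Ideal.le_comap_pow _ k) hp

lemma aeval_sub_aeval_mem_pow (hq : ∀ y, q y ∈ I) (hq' : ∀ y, q' y ∈ I)
    (h : ∀ y, q y - q' y ∈ I ^ 2) {k : ℕ} {p : MvPolynomial ι R} (hp : p ∈ idealOfVars ι R ^ k) :
    aeval q p - aeval q' p ∈ I ^ (k + 1) := by
  induction k generalizing p with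
  | zero => exact Ideal.pow_le_pow_right one_le_two (aeval_sub_aeval_mem h p)
  | succ k ih =>
    rw [pow_succ] at hp
    induction hp using Submodule.mul_induction_on' with
    | mem_mul_mem a ha b hb =>
      have hsplit : aeval q (a * b) - aeval q' (a * b) =
          (aeval q a - aeval q' a) * aeval q b + aeval q' a * (aeval q b - aeval q' b) := by
        rw [map_mul, map_mul]; ring
      rw [hsplit]
      refine Ideal.add_mem _ ?_ ?_
      · simpa [pow_succ] using Ideal.mul_mem_mul (ih ha) (aeval_mem_pow hq (k := 1) (by simpa))
      · simpa [pow_succ, mul_assoc] using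
          Ideal.mul_mem_mul (aeval_mem_pow hq' ha) (aeval_sub_aeval_mem h b)
    | add a _ b _ ha hb =>
      rw [map_add, map_add, add_sub_add_comm]
      exact Ideal.add_mem _ ha hb

/-- Polynomials with linearly independent differentials at the origin are algebraically
independent; here the differentials are distinct coordinate functions. -/
theorem algebraicIndependent_of_sub_X_mem_sq {q : ι → MvPolynomial σ R} {e : ι → σ}
    (he : Function.Injective e) (hq : ∀ y, q y - X (e y) ∈ idealOfVars σ R ^ 2) :
    AlgebraicIndependent R q := by
  have hX (s : σ) : X s ∈ idealOfVars σ R := Ideal.subset_span ⟨s, rfl⟩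
  have hqI (y) : q y ∈ idealOfVars σ R :=
    (Submodule.sub_mem_iff_left _ (hX (e y))).1 (Ideal.pow_le_self two_ne_zero (hq y))
  rw [algebraicIndependent_iff]
  intro p hp
  by_contra hne
  obtain ⟨α, hα, hmin⟩ := Finset.exists_min_image p.support Finsupp.degree
    (support_nonempty.2 hne)
  have hrename : rename e p ∈ idealOfVars σ R ^ (α.degree + 1) := by
    have h := aeval_sub_aeval_mem_pow hqI (fun y ↦ hX (e y)) hq
      ((mem_pow_idealOfVars_iff _ _).2 hmin)
    rw [hp, zero_sub, neg_mem_iff] at h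
    rwa [← aeval_X_left_apply (rename e p), aeval_rename]
  have hα' : α.mapDomain e ∈ (rename e p).support := by
    rwa [mem_support_iff, coeff_rename_mapDomain _ he, ← mem_support_iff]
  simpa using (mem_pow_idealOfVars_iff _ _).1 hrename _ hα'

end TangentSpace

section LineMonomials

variable {n : ℕ} {J : Type*} {d : J → ℕ} {R : Type*} [CommRing R]

/-- The monomial `x ^ α` involves only `x_0` and `x_1`, that is, it does not vanish on the
coordinate line `x_2 = ⋯ = x_{n+1} = 0`. -/
def IsLineMonomial (α : Fin (n + 1 + 1) →₀ ℕ) : Prop :=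
  ∀ j : Fin n, α j.succ.succ = 0

lemma degree_eq_of_isLineMonomial {α : Fin (n + 1 + 1) →₀ ℕ} (hα : IsLineMonomial α) :
    α.degree = α 0 + α 1 := by
  rw [Finsupp.degree_eq_sum, Fin.sum_univ_succ, Fin.sum_univ_succ,
    Finset.sum_eq_zero fun j _ ↦ hα j, add_zero, Fin.succ_zero_eq_one]

lemma ext_of_isLineMonomial {e : ℕ} {α β : MonomialIndex (n + 1) e} (hα : IsLineMonomial α.1)
    (hβ : IsLineMonomial β.1) (h : α.1 0 = β.1 0) : α = β := by
  have hdeg := (degree_eq_of_isLineMonomial hα).symm.trans <|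
    α.2.trans <| β.2.symm.trans (degree_eq_of_isLineMonomial hβ)
  exact Subtype.ext <| Finsupp.ext <| Fin.cases h <| Fin.cases (by simpa [h] using hdeg)
    fun j ↦ (hα j).trans (hβ j).symm

lemma card_isLineMonomial_le [Fintype J] :
    Nat.card {x : CoeffIndex (n + 1) d // IsLineMonomial x.2.1} ≤ ∑ i, (d i + 1) := by
  let g (x : {x : CoeffIndex (n + 1) d // IsLineMonomial x.2.1}) : Σ i, Fin (d i + 1) :=
    ⟨x.1.1, x.1.2.1 0, Nat.lt_succ_of_le ((Finsupp.le_degree 0 _).trans_eq x.1.2.2)⟩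
  have hg : Function.Injective g := by
    rintro ⟨⟨i, α⟩, hα⟩ ⟨⟨j, β⟩, hβ⟩ h
    obtain ⟨rfl, h⟩ := Sigma.mk.inj h
    obtain rfl := ext_of_isLineMonomial hα hβ (Fin.mk.inj (eq_of_heq h))
    rfl
  simpa using Nat.card_le_card_of_injective g hg

lemma coeff_restrictToLine_of_not_isLineMonomial (v w : Fin (n + 1 + 1) → R)
    (p : MvPolynomial (Fin (n + 1 + 1)) R) {α : Fin (n + 1 + 1) →₀ ℕ} (hα : ¬IsLineMonomial α) :
    coeff α (restrictToLine v w p) = 0 := by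
  have hmem : restrictToLine v w p ∈ supported R {0, 1} := by
    have hX (a : R) {j : Fin (n + 1 + 1)} (hj : j ∈ ({0, 1} : Set _)) :
        C a * X j ∈ supported R {0, 1} :=
      mul_mem (Subalgebra.algebraMap_mem _ a) (Algebra.subset_adjoin ⟨j, hj, rfl⟩)
    have hle := Algebra.adjoin_le <| Set.range_subset_iff.2 fun j ↦
      add_mem (hX (v j) (.inl rfl)) (hX (w j) (.inr rfl))
    rw [← aeval_range] at hle
    exact hle ⟨p, rfl⟩
  obtain ⟨j, hj⟩ := not_forall.1 hα
  by_contra h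
  have := mem_supported.1 hmem <| Finset.mem_coe.2 <|
    mem_vars_iff_mem_support _ |>.2 ⟨α, mem_support_iff.2 h, Finsupp.mem_support_iff.2 hj⟩
  simp [Fin.ext_iff] at this

lemma vanishesOnLine_single_of_forall_isLineMonomial {f : CoeffIndex (n + 1) d → R}
    (hf : ∀ x, IsLineMonomial x.2.1 → f x = 0) :
    VanishesOnLine f (Pi.single 0 1) (Pi.single 1 1) := fun i ↦ by
  rw [tupleForm, map_sum]
  refine Finset.sum_eq_zero fun α _ ↦ ?_
  by_cases hα : IsLineMonomial α.1
  · rw [hf ⟨i, α⟩ hα, monomial_zero, map_zero]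
  · obtain ⟨j, hj⟩ := not_forall.1 hα
    rw [restrictToLine, aeval_monomial, Finsupp.prod_fintype _ _ (by simp),
      Finset.prod_eq_zero (Finset.mem_univ j.succ.succ) (by simp [hj, Fin.ext_iff]), mul_zero]

lemma restrictToLine_sub_restrictToLine_mem {I : Ideal R} {v w v' w' : Fin (n + 1 + 1) → R}
    (hv : ∀ j, v j - v' j ∈ I) (hw : ∀ j, w j - w' j ∈ I) (p : MvPolynomial (Fin (n + 1 + 1)) R) :
    restrictToLine v w p - restrictToLine v' w' p ∈ I.map C := by
  refine aeval_sub_aeval_mem (fun j ↦ ?_) p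
  have hj : C (v j) * X 0 + C (w j) * X 1 - (C (v' j) * X 0 + C (w' j) * X 1) =
      C (v j - v' j) * X 0 + C (w j - w' j) * (X 1 : MvPolynomial (Fin (n + 1 + 1)) R) := by
    simp only [C_sub]; ring
  rw [hj]
  exact add_mem (Ideal.mul_mem_right _ _ (Ideal.mem_map_of_mem C (hv j)))
    (Ideal.mul_mem_right _ _ (Ideal.mem_map_of_mem C (hw j)))

/-- The restriction of a form to a line is bilinear to first order, so it is of second order when
both the coefficients of the form and the displacement of the line are of first order. -/
lemma coeff_restrictToLine_tupleForm_mem_sq {I : Ideal R} {f : CoeffIndex (n + 1) d → R}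
    {v w v' w' : Fin (n + 1 + 1) → R} (hf : ∀ x, f x ∈ I) (hf' : VanishesOnLine f v' w')
    (hv : ∀ j, v j - v' j ∈ I) (hw : ∀ j, w j - w' j ∈ I) (i : J) (α : Fin (n + 1 + 1) →₀ ℕ) :
    coeff α (restrictToLine v w (tupleForm f i)) ∈ I ^ 2 := by
  suffices h : restrictToLine v w (tupleForm f i) ∈ (I ^ 2).map C from mem_map_C_iff.1 h α
  rw [← sub_zero (restrictToLine v w (tupleForm f i)), ← hf' i, tupleForm, map_sum, map_sum,
    ← Finset.sum_sub_distrib, Ideal.map_pow, sq]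
  refine sum_mem fun α _ ↦ ?_
  have hα : (monomial α.1 (f ⟨i, α⟩) : MvPolynomial (Fin (n + 1 + 1)) R) =
      C (f ⟨i, α⟩) * monomial α.1 1 := by rw [C_mul_monomial, mul_one]
  rw [hα, map_mul, map_mul, algHom_C, algHom_C, ← mul_sub]
  exact Ideal.mul_mem_mul (Ideal.mem_map_of_mem C (hf _))
    (restrictToLine_sub_restrictToLine_mem hv hw _)

end LineMonomials

section LineLocusDimension

variable {n : ℕ} {K : Type*} [Field K] {d : Fin (n + 1) → ℕ}

/-- The forms `-x_0 ^ (d_i - 1) x_{i+2}` for `i < n` and `0` for `i = n`. They vanish on the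
coordinate line `x_2 = ⋯ = x_{n+1} = 0`, and moving this line changes their restriction to it in
the `2n` linearly independent directions `x_0 ^ d_i`, `x_0 ^ (d_i - 1) x_1`. -/
def transversalForm (K : Type*) [Field K] (d : Fin (n + 1) → ℕ) :
    Fin (n + 1) → MvPolynomial (Fin (n + 1 + 1)) K :=
  Fin.lastCases 0 fun j ↦ -(X 0 ^ (d j.castSucc - 1) * X j.succ.succ)

lemma transversalForm_castSucc (j : Fin n) :
    transversalForm K d j.castSucc = -(X 0 ^ (d j.castSucc - 1) * X j.succ.succ) :=
  Fin.lastCases_castSucc j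

lemma isHomogeneous_transversalForm (hd : ∀ i, 1 ≤ d i) (i : Fin (n + 1)) :
    (transversalForm K d i).IsHomogeneous (d i) := by
  refine Fin.lastCases ?_ (fun j ↦ ?_) i
  · simpa [transversalForm] using isHomogeneous_zero _ _ _
  · rw [transversalForm_castSucc]
    simpa [Nat.sub_add_cancel (hd _)] using
      (((isHomogeneous_X K 0).pow (d j.castSucc - 1)).mul (isHomogeneous_X K j.succ.succ)).neg

lemma coeff_transversalForm_of_isLineMonomial (i : Fin (n + 1)) {α : Fin (n + 1 + 1) →₀ ℕ}
    (hα : IsLineMonomial α) : coeff α (transversalForm K d i) = 0 := by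
  classical
  refine Fin.lastCases ?_ (fun j ↦ ?_) i
  · simp [transversalForm]
  · simp [transversalForm_castSucc, coeff_mul_X', hα j]

/-- The coefficients of the transversal forms. -/
def transversalTuple (K : Type*) [Field K] (d : Fin (n + 1) → ℕ) : CoeffIndex (n + 1) d → K :=
  fun x ↦ coeff x.2.1 (transversalForm K d x.1)

/-- The part of the generic tuple involving only monomials that vanish on the coordinate line
`x_2 = ⋯ = x_{n+1} = 0`. -/
def genericNormalTuple (K : Type*) [Field K] (d : Fin (n + 1) → ℕ) :
    CoeffIndex (n + 1) d → MvPolynomial (LineParameter n d) K :=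
  open Classical in fun x ↦ if IsLineMonomial x.2.1 then 0 else X (Sum.inl x)

/-- The generic deformation, inside the line locus, of the transversal tuple. -/
def transversalDeformation (K : Type*) [Field K] (d : Fin (n + 1) → ℕ) :
    CoeffIndex (n + 1) d → MvPolynomial (LineParameter n d) K :=
  vanishingProjection (genericFst K d) (genericSnd K d)
    fun x ↦ C (transversalTuple K d x) + genericNormalTuple K d x

lemma transversalDeformation_apply (hd : ∀ i, 1 ≤ d i) (x : CoeffIndex (n + 1) d) :
    transversalDeformation K d x = C (transversalTuple K d x) -
      coeff x.2.1 (restrictToLine (genericFst K d) (genericSnd K d)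
        (map C (transversalForm K d x.1))) + (genericNormalTuple K d x -
      coeff x.2.1 (restrictToLine (genericFst K d) (genericSnd K d)
        (tupleForm (genericNormalTuple K d) x.1))) := by
  have hform : tupleForm (fun x ↦ C (transversalTuple K d x) + genericNormalTuple K d x) x.1 =
      map C (transversalForm K d x.1) + tupleForm (genericNormalTuple K d) x.1 := by
    rw [← tupleForm_coeff (isHomogeneous_transversalForm hd) x.1, map_tupleForm]
    simp only [tupleForm, ← Finset.sum_add_distrib, map_add]
    rfl
  rw [transversalDeformation, vanishingProjection, hform, map_add, add_sub_add_comm, coeff_add,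
    coeff_sub, coeff_sub, coeff_map, coeff_tupleForm, transversalTuple]

lemma coeff_restrictToLine_genericNormalTuple_mem_sq (i : Fin (n + 1))
    (α : Fin (n + 1 + 1) →₀ ℕ) :
    coeff α (restrictToLine (genericFst K d) (genericSnd K d)
      (tupleForm (genericNormalTuple K d) i)) ∈ idealOfVars (LineParameter n d) K ^ 2 := by
  have hX (y : LineParameter n d) : X y ∈ idealOfVars (LineParameter n d) K :=
    Ideal.subset_span ⟨y, rfl⟩
  refine coeff_restrictToLine_tupleForm_mem_sq (fun x ↦ ?_)
    (vanishesOnLine_single_of_forall_isLineMonomial fun x hx ↦ if_pos hx)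
    (Fin.cases ?_ <| Fin.cases ?_ fun j ↦ ?_) (Fin.cases ?_ <| Fin.cases ?_ fun j ↦ ?_) i α
  · split_ifs
    exacts [zero_mem _, hX _]
  all_goals simp [genericFst, genericSnd, hX, Fin.ext_iff]

/-- The index of the coefficient of `x_0 ^ (d_j - 1) x_k` in the `j`-th form. -/
def transversalIndex (hd : ∀ i, 1 ≤ d i) (j : Fin n) (k : Fin (n + 1 + 1)) :
    CoeffIndex (n + 1) d :=
  ⟨j.castSucc, Finsupp.single 0 (d j.castSucc - 1) + Finsupp.single k 1, by
    rw [map_add, Finsupp.degree_single, Finsupp.degree_single, Nat.sub_add_cancel (hd _)]⟩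

lemma coeff_restrictToLine_transversalForm (hd : ∀ i, 1 ≤ d i) (j : Fin n)
    (k : Fin (n + 1 + 1)) :
    coeff (transversalIndex hd j k).2.1 (restrictToLine (genericFst K d) (genericSnd K d)
      (map C (transversalForm K d (transversalIndex hd j k).1))) = -coeff (Finsupp.single k 1)
        (restrictToLine (genericFst K d) (genericSnd K d) (X j.succ.succ)) := by
  have h0 : restrictToLine (genericFst K d) (genericSnd K d) (X (0 : Fin (n + 1 + 1))) = X 0 := by
    simp [restrictToLine_X, genericFst, genericSnd]
  simp only [transversalIndex, transversalForm_castSucc, map_neg, map_mul, map_pow, map_X, h0,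
    coeff_neg]
  rw [X_pow_eq_monomial, coeff_monomial_mul, one_mul]

lemma transversalDeformation_transversalIndex_sub_mem_sq (hd : ∀ i, 1 ≤ d i) (j : Fin n)
    {k : Fin (n + 1 + 1)} (hk : IsLineMonomial (transversalIndex hd j k).2.1) :
    transversalDeformation K d (transversalIndex hd j k) - coeff (Finsupp.single k 1)
      (restrictToLine (genericFst K d) (genericSnd K d) (X j.succ.succ)) ∈
        idealOfVars (LineParameter n d) K ^ 2 := by
  have hbase : transversalTuple K d (transversalIndex hd j k) = 0 :=
    coeff_transversalForm_of_isLineMonomial _ hk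
  have hnormal : genericNormalTuple K d (transversalIndex hd j k) = 0 := if_pos hk
  rw [transversalDeformation_apply hd, hbase, hnormal, C_0, zero_sub, zero_sub,
    coeff_restrictToLine_transversalForm, neg_neg, add_sub_cancel_left, neg_mem_iff]
  exact coeff_restrictToLine_genericNormalTuple_mem_sq _ _

lemma transversalDeformation_of_not_isLineMonomial (hd : ∀ i, 1 ≤ d i)
    {x : CoeffIndex (n + 1) d} (hx : ¬IsLineMonomial x.2.1) :
    transversalDeformation K d x = C (transversalTuple K d x) + X (Sum.inl x) := by
  rw [transversalDeformation_apply hd, coeff_restrictToLine_of_not_isLineMonomial _ _ _ hx,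
    coeff_restrictToLine_of_not_isLineMonomial _ _ _ hx, sub_zero, sub_zero, genericNormalTuple,
    if_neg hx]

/-- The independent directions of the line locus at the transversal tuple: the coefficients of
monomials vanishing on the coordinate line, and the `2n` parameters of the line. -/
abbrev LineLocusDirection (n : ℕ) (d : Fin (n + 1) → ℕ) : Type :=
  {x : CoeffIndex (n + 1) d // ¬IsLineMonomial x.2.1} ⊕ Fin n ⊕ Fin n

/-- The coefficient that has nonzero derivative in the given direction. -/
def directionIndex (hd : ∀ i, 1 ≤ d i) : LineLocusDirection n d → CoeffIndex (n + 1) d :=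
  Sum.elim Subtype.val <|
    Sum.elim (fun j ↦ transversalIndex hd j 0) fun j ↦ transversalIndex hd j 1

lemma algebraicIndependent_transversalDeformation (hd : ∀ i, 1 ≤ d i) :
    AlgebraicIndependent K fun y ↦ transversalDeformation K d (directionIndex hd y) -
      C (transversalTuple K d (directionIndex hd y)) := by
  refine algebraicIndependent_of_sub_X_mem_sq (e := Sum.map Subtype.val id)
    (Subtype.val_injective.sumMap Function.injective_id) ?_
  have hline0 {j : Fin n} : IsLineMonomial (transversalIndex hd j 0).2.1 := fun i ↦ by
    simp [transversalIndex]
  have hline1 {j : Fin n} : IsLineMonomial (transversalIndex hd j 1).2.1 := fun i ↦ by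
    simp [transversalIndex, Fin.ext_iff]
  have hbase {x : CoeffIndex (n + 1) d} (hx : IsLineMonomial x.2.1) :
      transversalTuple K d x = 0 := coeff_transversalForm_of_isLineMonomial _ hx
  rintro (⟨x, hx⟩ | j | j)
  · simp [directionIndex, transversalDeformation_of_not_isLineMonomial hd hx]
  · have h := transversalDeformation_transversalIndex_sub_mem_sq (K := K) hd j (k := 0) hline0
    simpa [directionIndex, restrictToLine_X, genericFst, genericSnd, hbase hline0] using h
  · have h := transversalDeformation_transversalIndex_sub_mem_sq (K := K) hd j (k := 1) hline1
    simpa [directionIndex, restrictToLine_X, genericFst, genericSnd, hbase hline1] using h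

theorem card_lineLocusDirection_le_dimSet_lineLocus [IsAlgClosed K] (hd : ∀ i, 1 ≤ d i) :
    (Nat.card (LineLocusDirection n d) : WithBot ℕ∞) ≤ dimSet (lineLocus K n d) := by
  have : Infinite K := IsAlgClosed.instInfinite
  rw [(isZariskiChart_tupleEquiv K (n + 1) (n + 1) d).dimSet_eq, chartIdeal_lineLocus]
  let θ : (MvPolynomial (CoeffIndex (n + 1) d) K ⧸ lineLocusIdeal K d n) →ₐ[K]
      MvPolynomial (LineParameter n d) K :=
    Ideal.Quotient.liftₐ _ (aeval (transversalDeformation K d)) fun p hp ↦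
      (isNormalizedAt_generic K d).aeval_eq_zero_of_mem_lineLocusIdeal
        ((isNormalizedAt_generic K d).vanishesOnLine_vanishingProjection _) hp
  refine le_ringKrullDim_of_algebraicIndependent (k := K)
    (x := fun y ↦ Ideal.Quotient.mk _ (X (directionIndex hd y) -
      C (transversalTuple K d (directionIndex hd y)))) (AlgebraicIndependent.of_comp θ ?_)
  convert algebraicIndependent_transversalDeformation (K := K) hd using 2 with y
  change aeval (transversalDeformation K d) _ = _
  rw [map_sub, aeval_X, algHom_C, algebraMap_eq]

theorem sum_card_add_le_card_lineLocusDirection (n : ℕ) (d : Fin (n + 1) → ℕ) :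
    ∑ i, Fintype.card (MonomialIndex (n + 1) (d i)) + 2 * n ≤
      Nat.card (LineLocusDirection n d) + ∑ i, (d i + 1) := by
  classical
  have hline := card_isLineMonomial_le (n := n) (d := d)
  have hsum : Nat.card {x : CoeffIndex (n + 1) d // IsLineMonomial x.2.1} +
      Nat.card {x : CoeffIndex (n + 1) d // ¬IsLineMonomial x.2.1} =
        ∑ i, Fintype.card (MonomialIndex (n + 1) (d i)) := by
    rw [← Nat.card_sum, Nat.card_congr (Equiv.sumCompl _), Nat.card_sigma]
    simp only [Nat.card_eq_fintype_card]
  rw [Nat.card_sum, Nat.card_sum, Nat.card_fin]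
  lia

end LineLocusDimension

section LineLocusClosure

variable {n : ℕ} {F : Type*} [Field F]

lemma IsNormalizedAt.two_le_ringKrullDim_quotient_ker {i j : Fin (n + 1 + 1)}
    {v w : Fin (n + 1 + 1) → F} (h : IsNormalizedAt i j v w) :
    2 ≤ ringKrullDim (MvPolynomial (Fin (n + 1 + 1)) F ⧸ RingHom.ker (restrictToLine v w)) := by
  let mk := Ideal.Quotient.mk (RingHom.ker (restrictToLine v w))
  have hind : AlgebraicIndependent F ![mk (X i), mk (X j)] := by
    refine AlgebraicIndependent.of_comp (Ideal.kerLiftAlg (restrictToLine v w)) ?_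
    have h01 : Function.Injective ![(0 : Fin (n + 1 + 1)), 1] := by
      intro a b; fin_cases a <;> fin_cases b <;> simp
    convert (algebraicIndependent_X (Fin (n + 1 + 1)) F).comp _ h01 using 1
    ext k : 1
    fin_cases k
    · change restrictToLine v w (X i) = X 0
      rw [restrictToLine_X, h.fst_left, h.snd_left]
      simp
    · change restrictToLine v w (X j) = X 1
      rw [restrictToLine_X, h.fst_right, h.snd_right]
      simp
  have : (RingHom.ker (restrictToLine v w)).IsPrime := RingHom.ker_isPrime _
  simpa using le_ringKrullDim_of_algebraicIndependent hind

theorem VanishesOnLine.two_le_ringKrullDim {J : Type*} {d : J → ℕ}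
    {f : CoeffIndex (n + 1) d → F} {v w : Fin (n + 1 + 1) → F} (hf : VanishesOnLine f v w)
    (hli : LinearIndependent F ![v, w]) :
    2 ≤ ringKrullDim (MvPolynomial (Fin (n + 1 + 1)) F ⧸ tupleIdeal f) := by
  obtain ⟨v', w', i, j, hN, hf'⟩ := hf.exists_isNormalizedAt hli ⊤
  have hle : tupleIdeal f ≤ RingHom.ker
      (restrictToLine (ValuationSubring.subtype ⊤ ∘ v') (ValuationSubring.subtype ⊤ ∘ w')) := by
    rw [tupleIdeal, Ideal.span_le]
    rintro _ ⟨i, rfl⟩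
    exact hf' i
  exact (hN.map (ValuationSubring.subtype ⊤)).two_le_ringKrullDim_quotient_ker.trans <|
    ringKrullDim_le_of_surjective (Ideal.Quotient.factor hle) (Ideal.Quotient.factor_surjective hle)

variable (F) (d : Fin (n + 1) → ℕ)

/-- The tuple `x_2 ^ d_0, …, x_{n+1} ^ d_{n-1}, 0` of forms in `x_0, …, x_{n+1}`: it vanishes on the
line `x_2 = ⋯ = x_{n+1} = 0`, which is exactly the zero locus of its first `n` members. -/
def powerTuple (x : CoeffIndex (n + 1) d) : F :=
  coeff x.2.1 (Fin.lastCases (motive := fun _ ↦ MvPolynomial (Fin (n + 1 + 1)) F) 0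
    (fun j ↦ X j.succ.succ ^ d j.castSucc) x.1)

lemma tupleForm_powerTuple (i : Fin (n + 1)) :
    tupleForm (powerTuple F d) i = Fin.lastCases
      (motive := fun _ ↦ MvPolynomial (Fin (n + 1 + 1)) F) 0
      (fun j ↦ X j.succ.succ ^ d j.castSucc) i := by
  refine tupleForm_coeff (fun i ↦ ?_) i
  induction i using Fin.lastCases with
  | last => simpa using isHomogeneous_zero _ _ _
  | cast j => simpa using (isHomogeneous_X F j.succ.succ).pow (d j.castSucc)

variable {d} in
lemma vanishesOnLine_powerTuple (hd : ∀ i, 1 ≤ d i) :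
    VanishesOnLine (powerTuple F d) (Pi.single 0 1) (Pi.single 1 1) := fun i ↦ by
  rw [tupleForm_powerTuple]
  induction i using Fin.lastCases with
  | last => simp
  | cast j =>
    have hj : j.succ.succ ≠ (1 : Fin (n + 1 + 1)) := (Fin.succ_injective _).ne (Fin.succ_ne_zero j)
    rw [Fin.lastCases_castSucc, map_pow, restrictToLine_X, Pi.single_eq_of_ne (Fin.succ_ne_zero _),
      Pi.single_eq_of_ne hj]
    simpa using Nat.one_le_iff_ne_zero.1 (hd j.castSucc)

lemma ringKrullDim_quotient_tupleIdeal_powerTuple_le :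
    ringKrullDim (MvPolynomial (Fin (n + 1 + 1)) F ⧸
      tupleIdeal (powerTuple F d ∘ subtupleIndex Fin.castSucc)) ≤ 2 := by
  let I := tupleIdeal (powerTuple F d ∘ subtupleIndex (Fin.castSucc (n := n)))
  let L : Matrix (Fin 2) (Fin (n + 1 + 1)) F := ![Pi.single 0 1, Pi.single 1 1]
  have hL (j : Fin 2) {i : Fin (n + 1 + 1)} (hi : L j = Pi.single i 1) :
      X i ∈ (I ⊔ linearIdeal L).radical := by
    refine Ideal.le_radical (Ideal.mem_sup_right (Ideal.subset_span ⟨j, ?_⟩))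
    simp [Matrix.toMvPolynomial, hi, Pi.single_apply, apply_ite, X]
  have hrad : idealOfVars (Fin (n + 1 + 1)) F ≤ (I ⊔ linearIdeal L).radical := by
    rw [idealOfVars, Ideal.span_le]
    rintro _ ⟨i, rfl⟩
    induction i using Fin.cases with
    | zero => exact hL 0 rfl
    | succ i =>
      induction i using Fin.cases with
      | zero => exact hL 1 rfl
      | succ j =>
        refine ⟨d j.castSucc, Ideal.mem_sup_left (Ideal.subset_span ⟨j, ?_⟩)⟩
        exact (tupleForm_powerTuple F d j.castSucc).trans (Fin.lastCases_castSucc ..)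
  obtain ⟨N, hN⟩ := Ideal.exists_pow_le_of_le_radical_of_fg hrad (IsNoetherian.noetherian _)
  simpa using ringKrullDim_quotient_le_of_pow_le_sup_linearIdeal
    (isHomogeneous_tupleIdeal _) hN

end LineLocusClosure

section ExcessLocus

attribute [local instance] MvPolynomial.gradedAlgebra

variable {K A κ : Type*} (κ' : Type*) [Field K] [CommRing A] [Field κ] [Field κ']
  [Algebra K A] [Algebra K κ] [Algebra K κ']

theorem exists_ne_zero_forall_ringKrullDim_quotient_tupleIdeal_le [Infinite K] {r m : ℕ}
    {J : Type*} {d : J → ℕ} (φ : A →ₐ[K] κ) (u : CoeffIndex r d → A)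
    (h : ringKrullDim (MvPolynomial (Fin (r + 1)) κ ⧸ tupleIdeal (φ ∘ u)) ≤ m) :
    ∃ a : A, φ a ≠ 0 ∧ ∀ ψ : A →ₐ[K] κ', ψ a ≠ 0 →
      ringKrullDim (MvPolynomial (Fin (r + 1)) κ' ⧸ tupleIdeal (ψ ∘ u)) ≤ m := by
  obtain ⟨a, ha, hdim⟩ := exists_ne_zero_forall_ringKrullDim_quotient_map_le κ' φ
    (isHomogeneous_tupleIdeal u) (by rw [map_tupleIdeal]; exact h)
  refine ⟨a, ha, fun ψ hψ ↦ ?_⟩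
  have := hdim ψ hψ
  rw [map_tupleIdeal] at this
  exact this

variable (K) (n : ℕ) (d : Fin (n + 1) → ℕ)

/-- The locus `Z \ D` of the tuples of `n + 1` forms in `x_0, …, x_{n+1}` whose common zero locus
in projective space has positive dimension, while that of the first `n` forms has dimension at
most `1`. As in `vdimGE`, dimensions are those of the affine cones, hence larger by one. -/
def excessLocus : Set (tupleSpace K (n + 1) (n + 1) d) :=
  {F | 2 ≤ ringKrullDim (MvPolynomial (Fin (n + 1 + 1)) K ⧸
        tupleIdeal (tupleEquiv K (n + 1) (n + 1) d F)) ∧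
      ringKrullDim (MvPolynomial (Fin (n + 1 + 1)) K ⧸
        tupleIdeal (tupleEquiv K (n + 1) (n + 1) d F ∘ subtupleIndex Fin.castSucc)) ≤ 2}

variable {K n d}

lemma sdiff_eq_excessLocus :
    {F | vdimGE (n + 1) (n + 1) (fun i ↦ (F i : MvPolynomial (Fin (n + 1 + 1)) K)) 1} \
      {F | vdimGE (n + 1) n (fun i ↦ (F i.castSucc : MvPolynomial (Fin (n + 1 + 1)) K)) 2} =
    excessLocus K n d := by
  ext F
  have hfull : tupleIdeal (tupleEquiv K (n + 1) (n + 1) d F) =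
      Ideal.span (Set.range fun i ↦ (F i : MvPolynomial (Fin (n + 1 + 1)) K)) := by
    simp only [tupleIdeal, ← tupleForm_tupleEquiv]
  have hinit : tupleIdeal (tupleEquiv K (n + 1) (n + 1) d F ∘ subtupleIndex Fin.castSucc) =
      Ideal.span (Set.range fun i : Fin n ↦ (F i.castSucc : MvPolynomial _ K)) := by
    simp only [tupleIdeal, ← tupleForm_tupleEquiv]
    rfl
  rw [Set.mem_sdiff, Set.mem_ofPred_eq, Set.mem_ofPred_eq, vdimGE, vdimGE, ← hfull, ← hinit]
  exact and_congr Iff.rfl (not_le.trans (ENat.WithBot.lt_add_one_iff (m := 2)))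

variable (K n)

theorem lineLocus_subset_closure_excessLocus [IsAlgClosed K] (hd : ∀ i, 1 ≤ d i) :
    lineLocus K n d ⊆ closure (excessLocus K n d) := by
  have : Infinite K := IsAlgClosed.instInfinite
  have hchart := isZariskiChart_tupleEquiv K (n + 1) (n + 1) d
  let u (x : CoeffIndex (n + 1) (d ∘ Fin.castSucc)) : MvPolynomial (CoeffIndex (n + 1) d) K :=
    X (subtupleIndex Fin.castSucc x)
  have hu (f : CoeffIndex (n + 1) d → K) : aeval f ∘ u = f ∘ subtupleIndex Fin.castSucc :=
    _root_.funext fun _ ↦ aeval_X f _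
  obtain ⟨a, ha, hdim⟩ := exists_ne_zero_forall_ringKrullDim_quotient_tupleIdeal_le (m := 2) K
    (aeval (powerTuple K d)) u (by
      rw [hu]; exact ringKrullDim_quotient_tupleIdeal_powerTuple_le K d)
  have hmem {F : tupleSpace K (n + 1) (n + 1) d} (hF : F ∈ lineLocus K n d)
      (hFa : aeval (tupleEquiv K (n + 1) (n + 1) d F) a ≠ 0) : F ∈ excessLocus K n d := by
    obtain ⟨v, w, hli, hvw⟩ := (vanishOnCommonLine_iff F).1 hF
    exact ⟨hvw.two_le_ringKrullDim hli, hu (tupleEquiv K _ _ d F) ▸ hdim _ hFa⟩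
  have hprime := hchart.isIrreducible_iff_isPrime.1 (isIrreducible_lineLocus K n d)
  rw [← hchart.chartIdeal_le_chartIdeal_iff isClosed_closure, hchart.chartIdeal_closure]
  intro p hp
  refine (hprime.mem_or_mem (y := a) (mem_chartIdeal.2 fun F hF ↦ ?_)).resolve_right fun h ↦ ?_
  · by_cases hFa : aeval (tupleEquiv K (n + 1) (n + 1) d F) a = 0
    · exact (map_mul _ _ _).trans (mul_eq_zero_of_right _ hFa)
    · exact (map_mul _ _ _).trans (mul_eq_zero_of_left (mem_chartIdeal.1 hp F (hmem hF hFa)) _)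
  · rw [chartIdeal_lineLocus] at h
    refine ha ((vanishesOnLine_powerTuple K hd).aeval_eq_zero_of_mem_lineLocusIdeal ?_ h)
    refine LinearIndependent.pair_iff.2 fun s t hst ↦ ⟨?_, ?_⟩
    · simpa using congrFun hst 0
    · simpa using congrFun hst 1

end ExcessLocus

section BaseChange

open AlgebraicIndependent

variable {K F : Type*} [Field K] [Field F] [Algebra K F]

lemma algebraicIndependent_of_card_le_eRk {ι : Type*} [Finite ι] {x : ι → F}
    (h : (Nat.card ι : ℕ∞) ≤ (matroid K F).eRk (Set.range x)) : AlgebraicIndependent K x := by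
  have hcard : (Set.range x).encard = Nat.card ι := by
    refine le_antisymm ?_ (h.trans ((matroid K F).eRk_le_encard _))
    rw [← Set.image_univ, ← ENat.card_eq_coe_natCard, ← Set.encard_univ]
    exact Set.encard_image_le x _
  have hinj : Function.Injective x := by
    rw [← Set.injOn_univ]
    refine Set.finite_univ.injOn_of_encard_image_eq ?_
    rw [Set.image_univ, hcard, Set.encard_univ, ENat.card_eq_coe_natCard]
  have hindep : (matroid K F).Indep (Set.range x) := by
    rw [(matroid K F).indep_iff_eRk_eq_encard_of_finite (Set.finite_range x)]
    exact ((matroid K F).eRk_le_encard _).antisymm (hcard.trans_le h)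
  exact (algebraicIndependent_subtype_range hinj).1 hindep

lemma span_subset_matroid_closure (S : Set F) :
    (Submodule.span K S : Set F) ⊆ (matroid K F).closure S := fun _ hx ↦
  adjoin_subset_matroid_closure S (Algebra.span_le_adjoin K S hx)

theorem eRk_add_eRk_le_eRk_union {κ : Type*} [Field κ] [Algebra K κ] [Algebra κ F]
    [IsScalarTower K κ F] {T : Set F} (hT : T ⊆ Set.range (algebraMap κ F)) (C : Set F) :
    (matroid K F).eRk T + (matroid κ F).eRk C ≤ (matroid K F).eRk (T ∪ C) := by
  obtain ⟨B, hB⟩ := (matroid K F).exists_isBasis T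
  obtain ⟨I, hI⟩ := (matroid κ F).exists_isBasis C
  have hind : AlgebraicIndependent K (Sum.elim ((↑) : I → F) ((↑) : B → F)) :=
    AlgebraicIndependent.sumElim_of_tower hB.indep
      (Subtype.range_coe.trans_subset (hB.subset.trans hT)) hI.indep
  have hunion : (matroid K F).Indep (I ∪ B) := by
    have := hind.to_subtype_range
    rwa [Set.Sum.elim_range, Subtype.range_coe, Subtype.range_coe] at this
  have hdisj : Disjoint B I := by
    refine Set.disjoint_left.2 fun x hxB hxI ↦ ?_
    simpa using hind.injective (a₁ := .inl ⟨x, hxI⟩) (a₂ := .inr ⟨x, hxB⟩) rfl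
  rw [← hB.encard_eq_eRk, ← hI.encard_eq_eRk, ← Set.encard_union_eq hdisj, Set.union_comm,
    ← hunion.eRk_eq_encard, Set.union_comm]
  exact (matroid K F).eRk_mono (Set.union_subset_union hB.subset hI.subset)

theorem matroid_closure_relAlgClosure_subset (T Y : Set F) :
    (matroid (relAlgClosure K T) F).closure Y ⊆ (matroid K F).closure (T ∪ Y) := fun x hx ↦ by
  have hsub : (Algebra.adjoin (relAlgClosure K T) Y : Set F) ⊆ relAlgClosure K (T ∪ Y) :=
    adjoin_relAlgClosure_subset Set.subset_union_left
      (Set.subset_union_right.trans (subset_relAlgClosure _))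
  have halg : IsAlgebraic (relAlgClosure K (T ∪ Y)) x :=
    isAlgebraic_of_forall_exists_algebraMap_eq Subtype.val_injective
      (fun y ↦ ⟨⟨y, hsub y.2⟩, rfl⟩) (mem_matroid_closure_iff.1 hx)
  rw [← mem_relAlgClosure_iff]
  exact mem_algebraicClosure_iff'.2 <| isIntegral_trans
    (A := algebraicClosure (IntermediateField.adjoin K (T ∪ Y)) F) x halg.isIntegral

theorem eRk_union_le_eRk_add_eRk_relAlgClosure (T C : Set F) :
    (matroid K F).eRk (T ∪ C) ≤
      (matroid K F).eRk T + (matroid (relAlgClosure K T) F).eRk C := by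
  obtain ⟨I, hI⟩ := (matroid (relAlgClosure K T) F).exists_isBasis C
  have hcl : T ∪ C ⊆ (matroid K F).closure (T ∪ I) :=
    Set.union_subset (Set.subset_union_left.trans ((matroid K F).subset_closure _))
      (hI.subset_closure.trans (matroid_closure_relAlgClosure_subset T I))
  calc _ ≤ (matroid K F).eRk (T ∪ I) :=
        ((matroid K F).eRk_mono hcl).trans_eq ((matroid K F).eRk_closure_eq _)
    _ ≤ _ := by
        rw [← hI.encard_eq_eRk]
        exact (matroid K F).eRk_union_le_eRk_add_encard _ _

end BaseChange

section GenericPoint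

open AlgebraicIndependent

lemma exists_isPrime_le_ringKrullDim_quotient {R : Type*} [CommRing R] {I : Ideal R} {m : ℕ}
    (h : (m : WithBot ℕ∞) ≤ ringKrullDim (R ⧸ I)) :
    ∃ Q : Ideal R, Q.IsPrime ∧ I ≤ Q ∧ (m : WithBot ℕ∞) ≤ ringKrullDim (R ⧸ Q) := by
  rw [ringKrullDim_quotient] at h
  obtain ⟨l, hl⟩ := Order.le_krullDim_iff.1 h
  refine ⟨(l 0).1.asIdeal, (l 0).1.isPrime, (l 0).2, ?_⟩
  rw [ringKrullDim_quotient, Order.le_krullDim_iff]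
  exact ⟨⟨l.length, fun i ↦ ⟨(l i).1, l.monotone (Fin.zero_le i)⟩, fun i ↦ l.step i⟩, hl⟩

lemma le_eRk_range_of_le_ringKrullDim {κ B F σ : Type*} [Field κ] [CommRing B] [IsDomain B]
    [Algebra κ B] [Field F] [Algebra κ F] [Finite σ] {φ : B →ₐ[κ] F} (hφ : Function.Injective φ)
    {c : σ → B} (hc : Algebra.adjoin κ (Set.range c) = ⊤) {m : ℕ}
    (h : (m : WithBot ℕ∞) ≤ ringKrullDim B) :
    (m : ℕ∞) ≤ (matroid κ F).eRk (Set.range (φ ∘ c)) := by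
  obtain ⟨k, hk⟩ := exists_eRk_eq_natCast (M := matroid κ F) (Set.finite_range (φ ∘ c))
  have : Algebra.FiniteType κ B := ⟨(Set.finite_range c).toFinset, by simpa using hc⟩
  have hdim := ringKrullDim_le_of_eRk_le φ hφ (T := Set.range (φ ∘ c)) (fun b ↦ ?_) hk.le
  · rw [hk]
    exact_mod_cast h.trans hdim
  · rw [Set.range_comp, ← AlgHom.map_adjoin, hc]
    exact ⟨b, trivial, rfl⟩

theorem exists_isAlgClosed_le_eRk_range.{u, v} {κ : Type u} {σ : Type v} [Field κ] [Finite σ]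
    {I : Ideal (MvPolynomial σ κ)} {m : ℕ}
    (h : (m : WithBot ℕ∞) ≤ ringKrullDim (MvPolynomial σ κ ⧸ I)) :
    ∃ (F : Type (max u v)) (_ : Field F) (_ : Algebra κ F), IsAlgClosed F ∧ ∃ c : σ → F,
      (∀ p ∈ I, aeval c p = 0) ∧ (m : ℕ∞) ≤ (matroid κ F).eRk (Set.range c) := by
  obtain ⟨Q, hQ, hIQ, hdim⟩ := exists_isPrime_le_ringKrullDim_quotient h
  let B := MvPolynomial σ κ ⧸ Q
  let φ : B →ₐ[κ] AlgebraicClosure (FractionRing B) := IsScalarTower.toAlgHom κ B _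
  have hφ : Function.Injective φ := by
    change Function.Injective (algebraMap B (AlgebraicClosure (FractionRing B)))
    rw [IsScalarTower.algebraMap_eq B (FractionRing B)]
    exact (algebraMap (FractionRing B) _).injective.comp (IsFractionRing.injective B _)
  let mk := Ideal.Quotient.mkₐ κ Q
  have hmk : mk = aeval (mk ∘ X) := aeval_unique mk
  refine ⟨AlgebraicClosure (FractionRing B), inferInstance, inferInstance, inferInstance,
    φ ∘ mk ∘ X, fun p hp ↦ ?_, le_eRk_range_of_le_ringKrullDim hφ ?_ hdim⟩
  · refine (comp_aeval_apply (mk ∘ X) φ p).symm.trans ?_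
    rw [← hmk, Ideal.Quotient.mkₐ_eq_mk, Ideal.Quotient.eq_zero_iff_mem.2 (hIQ hp), map_zero]
  · rw [Algebra.adjoin_range_eq_range_aeval, ← hmk]
    exact (AlgHom.range_eq_top _).2 (Ideal.Quotient.mkₐ_surjective κ Q)

end GenericPoint

section SpecializationBound

open AlgebraicIndependent

attribute [local instance] MvPolynomial.gradedAlgebra

variable {K κ κ' F : Type*} [Field K] [Field κ] [Field κ'] [Field F] [Algebra K κ] [Algebra K κ']

lemma eRk_range_le_of_pow_le_sup_linearIdeal [Algebra κ F] {σ : Type*} [Fintype σ]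
    {I : Ideal (MvPolynomial σ κ)} {m N : ℕ} {L : Matrix (Fin m) σ κ}
    (hI : I.IsHomogeneous (homogeneousSubmodule σ κ)) (hN : idealOfVars σ κ ^ N ≤ I ⊔ linearIdeal L)
    {c : σ → F} (hc : ∀ p ∈ I, aeval c p = 0) : (matroid κ F).eRk (Set.range c) ≤ m := by
  let ℓ (j : Fin m) : F := aeval c (L.toMvPolynomial j)
  have hcl : Set.range c ⊆ (matroid κ F).closure (Set.range ℓ) := by
    rintro _ ⟨i, rfl⟩
    rw [mem_matroid_closure_iff, ← aeval_X (R := κ) c i]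
    exact (isIntegral_of_pow_le_sup_linearIdeal hI hN hc (X i)).isAlgebraic
  calc (matroid κ F).eRk (Set.range c) ≤ (matroid κ F).eRk (Set.range ℓ) :=
        ((matroid κ F).eRk_mono hcl).trans_eq ((matroid κ F).eRk_closure_eq _)
    _ ≤ (Set.range ℓ).encard := (matroid κ F).eRk_le_encard _
    _ ≤ m := by
        rw [← Set.image_univ]
        exact (Set.encard_image_le ℓ _).trans (by simp)

variable {r m : ℕ} {J : Type*} {d : J → ℕ}

lemma map_aeval_tupleIdeal_X {R : Type*} [CommRing R] [Algebra K R] (u : CoeffIndex r d → R) :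
    (tupleIdeal (X : CoeffIndex r d → MvPolynomial (CoeffIndex r d) K)).map
      (map ((aeval u : MvPolynomial (CoeffIndex r d) K →ₐ[K] R) : _ →+* R)) = tupleIdeal u := by
  rw [map_tupleIdeal]
  exact congrArg tupleIdeal (aeval_comp_X u)

theorem eRk_range_le_of_forall_aeval_eq_zero [Infinite K] [Algebra κ' F]
    {u : CoeffIndex r d → κ'} {g : CoeffIndex r d → κ} {c : Fin (r + 1) → F}
    (hu : ∀ i, aeval c (tupleForm u i) = 0)
    (hug : ∀ p : MvPolynomial (CoeffIndex r d) K, aeval u p = 0 → aeval g p = 0)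
    (hg : ringKrullDim (MvPolynomial (Fin (r + 1)) κ ⧸ tupleIdeal g) ≤ m) :
    (matroid κ' F).eRk (Set.range c) ≤ m := by
  obtain ⟨L, N, a, ha, haJ⟩ := exists_span_singleton_mul_pow_le_sup_linearIdeal (m := m)
    (aeval g : MvPolynomial (CoeffIndex r d) K →ₐ[K] κ) (isHomogeneous_tupleIdeal X) (by
      rwa [map_aeval_tupleIdeal_X])
  have hN := pow_le_map_sup_linearIdeal (ψ := aeval u) (mt (hug a) ha) haJ
  rw [map_aeval_tupleIdeal_X] at hN
  have hker : tupleIdeal u ≤ RingHom.ker (aeval (R := κ') c) := by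
    rw [tupleIdeal, Ideal.span_le]
    rintro _ ⟨i, rfl⟩
    exact hu i
  exact eRk_range_le_of_pow_le_sup_linearIdeal (isHomogeneous_tupleIdeal u) hN fun p hp ↦ hker hp

end SpecializationBound

section SpanningLine

open AlgebraicIndependent Module

variable {E F : Type*} [Field E] [Field F] [Algebra E F] {n : ℕ}

lemma vanishesOnLine_of_algebraicIndependent {J : Type*} {d : J → ℕ}
    {f : CoeffIndex (n + 1) d → E} {v w : Fin (n + 1 + 1) → E} {s t : F}
    (h : AlgebraicIndependent E ![s, t])
    (hf : ∀ i, aeval (fun j ↦ v j • s + w j • t) (tupleForm f i) = 0) :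
    VanishesOnLine f v w := fun i ↦ by
  let φ : MvPolynomial (Fin (n + 1 + 1)) E →ₐ[E] MvPolynomial (Fin 2) E :=
    aeval fun j ↦ C (v j) * X 0 + C (w j) * X 1
  have hφ : (aeval ![s, t]).comp φ = aeval fun j ↦ v j • s + w j • t := by
    ext j
    simp [φ, Algebra.smul_def]
  have hrestrict : restrictToLine v w = (rename ![0, 1]).comp φ := by
    ext j : 1
    simp [φ, restrictToLine_X]
  have hzero : φ (tupleForm f i) = 0 :=
    (injective_iff_map_eq_zero _).1 h _ ((DFunLike.congr_fun hφ _).trans (hf i))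
  rw [hrestrict, AlgHom.comp_apply, hzero, map_zero]

theorem exists_vanishesOnLine_of_finrank_span_le_two {J : Type*} {d : J → ℕ}
    {f : CoeffIndex (n + 1) d → E} {c : Fin (n + 1 + 1) → F}
    (hf : ∀ i, aeval c (tupleForm f i) = 0) (hc : 2 ≤ (matroid E F).eRk (Set.range c))
    (hspan : finrank E (Submodule.span E (Set.range c)) ≤ 2) :
    ∃ v w, LinearIndependent E ![v, w] ∧ VanishesOnLine f v w := by
  let V := Submodule.span E (Set.range c)
  let c' (j : Fin (n + 1 + 1)) : V := ⟨c j, Submodule.subset_span ⟨j, rfl⟩⟩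
  have hc' : Submodule.span E (Set.range c') = ⊤ := by
    rw [eq_top_iff, ← Submodule.span_span_coe_preimage]
    exact Submodule.span_mono fun x ⟨j, hj⟩ ↦ ⟨j, Subtype.ext hj⟩
  have hfin : FiniteDimensional E V := .span_of_finite _ (Set.finite_range c)
  have hrank {m : ℕ} (b : Basis (Fin m) E V) :
      2 ≤ (matroid E F).eRk (Set.range fun k ↦ (b k : F)) := by
    refine hc.trans (((matroid E F).eRk_mono ?_).trans_eq ((matroid E F).eRk_closure_eq _))
    refine Set.Subset.trans ?_ (span_subset_matroid_closure _)
    rintro _ ⟨j, rfl⟩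
    rw [SetLike.mem_coe, ← Submodule.coe_subtype, Set.range_comp', ← Submodule.map_span, b.span_eq]
    exact ⟨c' j, trivial, rfl⟩
  have hdim : finrank E V = 2 := by
    refine hspan.antisymm ?_
    have := (hrank (finBasis E V)).trans ((matroid E F).eRk_le_encard _)
    rw [← Set.image_univ] at this
    simpa using this.trans (Set.encard_image_le _ _)
  let b : Basis (Fin 2) E V := finBasisOfFinrankEq E V hdim
  have hb (j) : b.repr (c' j) 0 • (b 0 : F) + b.repr (c' j) 1 • (b 1 : F) = c j := by
    have := congrArg Subtype.val (b.sum_repr (c' j))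
    rwa [Fin.sum_univ_two] at this
  refine ⟨fun j ↦ b.repr (c' j) 0, fun j ↦ b.repr (c' j) 1, ?_,
    vanishesOnLine_of_algebraicIndependent (s := (b 0 : F)) (t := (b 1 : F)) ?_ (by simpa [hb])⟩
  · refine LinearIndependent.pair_iff.2 fun x y hxy ↦ ?_
    have hzero : x • b.coord 0 + y • b.coord 1 = 0 := by
      refine LinearMap.ext_on_range hc' fun j ↦ ?_
      simpa using congrFun hxy j
    exact ⟨by simpa using DFunLike.congr_fun hzero (b 0),
      by simpa using DFunLike.congr_fun hzero (b 1)⟩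
  · refine algebraicIndependent_of_card_le_eRk ?_
    have hrange : ![(b 0 : F), (b 1 : F)] = fun k ↦ (b k : F) :=
      _root_.funext fun k ↦ by fin_cases k <;> rfl
    simpa [hrange] using hrank b

end SpanningLine

section Codimension

open AlgebraicIndependent Module

variable {K F : Type*} [Field K] [Field F] [Algebra K F]

section

variable {r : ℕ} {J : Type*} {d : J → ℕ}

lemma exists_tuple_relAlgClosure {f : CoeffIndex r d → F} {c : Fin (r + 1) → F}
    (hf : ∀ i, aeval c (tupleForm f i) = 0) :
    ∃ g : CoeffIndex r d → relAlgClosure K (Set.range f), algebraMap _ F ∘ g = f ∧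
      ∀ i, aeval c (tupleForm g i) = 0 := by
  refine ⟨fun x ↦ ⟨f x, subset_relAlgClosure _ ⟨x, rfl⟩⟩, rfl, fun i ↦ ?_⟩
  rw [← hf i, aeval_tupleForm, aeval_tupleForm]
  rfl

theorem eRk_union_range_le_of_forall_aeval_eq_zero [Infinite K] {κ : Type*} [Field κ] [Algebra K κ]
    {m : ℕ} {f : CoeffIndex r d → F} {g : CoeffIndex r d → κ} {c : Fin (r + 1) → F}
    (hf : ∀ i, aeval c (tupleForm f i) = 0)
    (hfg : ∀ p : MvPolynomial (CoeffIndex r d) K, aeval f p = 0 → aeval g p = 0)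
    (hg : ringKrullDim (MvPolynomial (Fin (r + 1)) κ ⧸ tupleIdeal g) ≤ m) :
    (matroid K F).eRk (Set.range f ∪ Set.range c) ≤ (matroid K F).eRk (Set.range f) + m := by
  obtain ⟨u, huf, hu⟩ := exists_tuple_relAlgClosure (K := K) hf
  refine (eRk_union_le_eRk_add_eRk_relAlgClosure _ _).trans ?_
  gcongr
  exact eRk_range_le_of_forall_aeval_eq_zero hu
    (fun p hp ↦ hfg p (by rw [← huf, aeval_algebraMap_apply, hp, map_zero])) hg

end

variable {n : ℕ} {d : Fin (n + 1) → ℕ}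

theorem aeval_eq_zero_or_eRk_range_add_one_le [Infinite K] [IsAlgClosed F] (hd : ∀ i, 1 ≤ d i)
    (hmono : Monotone d) {f : CoeffIndex (n + 1) d → F} {c : Fin (n + 1 + 1) → F}
    (hf : ∀ i, aeval c (tupleForm f i) = 0)
    (hlast : (matroid K F).eRk (Set.range f) + 2 ≤
      (matroid K F).eRk (Set.range f ∪ Set.range c))
    (hinit : (matroid K F).eRk (Set.range (f ∘ subtupleIndex Fin.castSucc) ∪ Set.range c) ≤
      (matroid K F).eRk (Set.range (f ∘ subtupleIndex Fin.castSucc)) + 2) :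
    (∀ p ∈ lineLocusIdeal K d n, aeval f p = 0) ∨
      (matroid K F).eRk (Set.range f) + 1 ≤ Nat.card (LineLocusDirection n d) := by
  let E := relAlgClosure K (Set.range f)
  obtain ⟨k, hk⟩ := exists_eRk_eq_natCast (M := matroid K F) (Set.finite_range f)
  obtain hspan | hspan := le_or_gt (finrank E (Submodule.span E (Set.range c))) 2
  · left
    have hc : 2 ≤ (matroid E F).eRk (Set.range c) := by
      have := hlast.trans (eRk_union_le_eRk_add_eRk_relAlgClosure _ _)
      rwa [hk, ENat.add_le_add_iff_left (ENat.natCast_ne_top k)] at this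
    obtain ⟨g, hgf, hg⟩ := exists_tuple_relAlgClosure (K := K) hf
    obtain ⟨v, w, hli, hvw⟩ := exists_vanishesOnLine_of_finrank_span_le_two hg hc hspan
    intro p hp
    rw [← hgf, aeval_algebraMap_apply, hvw.aeval_eq_zero_of_mem_lineLocusIdeal hli hp, map_zero]
  · right
    have hrange : Set.range f = ⋃ i, Set.range fun α ↦ f ⟨i, α⟩ := Set.range_sigma_eq_iUnion_range f
    have hrange_init : Set.range (f ∘ subtupleIndex Fin.castSucc) =
        ⋃ i : Fin n, Set.range fun α ↦ f ⟨i.castSucc, α⟩ := Set.range_sigma_eq_iUnion_range _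
    have hcodim := eRk_coefficients_add_le (K := K) (c := c) (f := fun i α ↦ f ⟨i, α⟩)
      (b := finrank E (Submodule.span E (Set.range c)) - 1) (by omega) hd hmono
      (fun i ↦ (aeval_tupleForm f c i).symm.trans (hf i)) (hrange ▸ hlast) (hrange_init ▸ hinit)
      (by rw [← hrange]; change finrank E (Submodule.span E (Set.range c)) = _; omega)
    rw [← hrange, hk] at hcodim
    rw [hk]
    norm_cast at hcodim ⊢
    have := sum_card_add_le_card_lineLocusDirection n d
    omega

end Codimension

section GenericTuple

open AlgebraicIndependent

lemma exists_forall_aeval_eq_zero_iff_mem.{u, v} {K : Type u} {ι : Type v} [Field K]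
    (P : Ideal (MvPolynomial ι K)) [P.IsPrime] :
    ∃ (κ : Type (max u v)) (_ : Field κ) (_ : Algebra K κ) (x : ι → κ),
      ∀ p, aeval x p = 0 ↔ p ∈ P := by
  let mk := Ideal.Quotient.mkₐ K P
  refine ⟨FractionRing (MvPolynomial ι K ⧸ P), inferInstance, inferInstance,
    algebraMap _ _ ∘ mk ∘ X, fun p ↦ ?_⟩
  rw [aeval_algebraMap_apply, FaithfulSMul.algebraMap_eq_zero_iff, ← aeval_unique mk]
  exact Ideal.Quotient.eq_zero_iff_mem

variable {K ι : Type*} [Field K]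

lemma ringKrullDim_quotient_le_of_eRk_range_le [Finite ι] {F : Type*} [Field F] [Algebra K F]
    {P : Ideal (MvPolynomial ι K)} {f : ι → F} (hf : ∀ p, aeval f p = 0 ↔ p ∈ P) {m : ℕ}
    (h : (matroid K F).eRk (Set.range f) ≤ m) : ringKrullDim (MvPolynomial ι K ⧸ P) ≤ m := by
  let φ : MvPolynomial ι K →ₐ[K] F := aeval f
  obtain rfl : RingHom.ker φ = P := Ideal.ext hf
  have := RingHom.ker_isPrime φ
  refine ringKrullDim_le_of_eRk_le (Ideal.kerLiftAlg φ) (Ideal.kerLiftAlg_injective φ)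
    (fun b ↦ ?_) h
  obtain ⟨p, rfl⟩ := Ideal.Quotient.mk_surjective b
  rw [Algebra.adjoin_range_eq_range_aeval]
  exact ⟨p, rfl⟩

variable {r n m : ℕ} {d : Fin n → ℕ} {κ : Type*} [Field κ] [Algebra K κ]

theorem exists_mem_ringKrullDim_quotient_tupleIdeal_le [Infinite K] {S : Set (tupleSpace K r n d)}
    {x : CoeffIndex r d → κ} (hx : ∀ p ∈ chartIdeal (tupleEquiv K r n d).toEquiv S, aeval x p = 0)
    (h : ringKrullDim (MvPolynomial (Fin (r + 1)) κ ⧸ tupleIdeal x) ≤ m) :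
    ∃ F ∈ S, ringKrullDim (MvPolynomial (Fin (r + 1)) K ⧸
      tupleIdeal (tupleEquiv K r n d F)) ≤ m := by
  obtain ⟨a, ha, hdim⟩ := exists_ne_zero_forall_ringKrullDim_quotient_tupleIdeal_le K
    (aeval (R := K) x) X (by rwa [aeval_comp_X])
  obtain ⟨F, hF, hFa⟩ : ∃ F ∈ S, aeval (tupleEquiv K r n d F) a ≠ 0 := by
    by_contra! hS
    exact ha (hx a (mem_chartIdeal.2 hS))
  have := hdim _ hFa
  rw [aeval_comp_X] at this
  exact ⟨F, hF, this⟩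

end GenericTuple

section Components

variable {K : Type*} [Field K] [IsAlgClosed K] {n : ℕ} {d : Fin (n + 1) → ℕ}

lemma dimSet_lt_dimSet_lineLocus_of_eRk_range_add_one_le (hd : ∀ i, 1 ≤ d i)
    {C : Set (tupleSpace K (n + 1) (n + 1) d)} {F : Type*} [Field F] [Algebra K F]
    {f : CoeffIndex (n + 1) d → F}
    (hf : ∀ p, aeval f p = 0 ↔ p ∈ chartIdeal (tupleEquiv K (n + 1) (n + 1) d).toEquiv C)
    (h : (AlgebraicIndependent.matroid K F).eRk (Set.range f) + 1 ≤
      Nat.card (LineLocusDirection n d)) :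
    dimSet C < dimSet (lineLocus K n d) := by
  obtain ⟨k, hk⟩ := exists_eRk_eq_natCast (M := AlgebraicIndependent.matroid K F)
    (Set.finite_range f)
  have hcard : k + 1 ≤ Nat.card (LineLocusDirection n d) := by
    rw [hk] at h
    exact_mod_cast h
  refine lt_of_lt_of_le ?_ (card_lineLocusDirection_le_dimSet_lineLocus hd)
  rw [(isZariskiChart_tupleEquiv K (n + 1) (n + 1) d).dimSet_eq]
  exact (ringKrullDim_quotient_le_of_eRk_range_le hf hk.le).trans_lt (by exact_mod_cast hcard)

theorem subset_lineLocus_or_dimSet_lt (hd : ∀ i, 1 ≤ d i) (hmono : Monotone d)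
    {C : Set (tupleSpace K (n + 1) (n + 1) d)} (hC : IsIrreducible C)
    (hCS : C ⊆ closure (C ∩ excessLocus K n d)) :
    C ⊆ lineLocus K n d ∨ dimSet C < dimSet (lineLocus K n d) := by
  have : Infinite K := IsAlgClosed.instInfinite
  have hchart := isZariskiChart_tupleEquiv K (n + 1) (n + 1) d
  have := hchart.isIrreducible_iff_isPrime.1 hC
  obtain ⟨κ, _, _, x, hx⟩ :=
    exists_forall_aeval_eq_zero_iff_mem (chartIdeal (tupleEquiv K (n + 1) (n + 1) d).toEquiv C)
  have hdim : 2 ≤ ringKrullDim (MvPolynomial (Fin (n + 1 + 1)) κ ⧸ tupleIdeal x) := by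
    by_contra! hlt
    obtain ⟨F, hF, hle⟩ := exists_mem_ringKrullDim_quotient_tupleIdeal_le (m := 1)
      (S := C ∩ excessLocus K n d)
      (fun p hp ↦ (hx p).2 (chartIdeal_anti hCS ((hchart.chartIdeal_closure _).ge hp)))
      (ENat.WithBot.lt_add_one_iff.1 hlt)
    exact absurd (hF.2.1.trans hle) (by decide)
  obtain ⟨F, _, _, _, c, hc, hrk⟩ := exists_isAlgClosed_le_eRk_range (m := 2) hdim
  let _ : Algebra K F := ((algebraMap κ F).comp (algebraMap K κ)).toAlgebra
  have : IsScalarTower K κ F := .of_algebraMap_eq' rfl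
  let f := algebraMap κ F ∘ x
  have hf (p) : aeval f p = 0 ↔ p ∈ chartIdeal (tupleEquiv K (n + 1) (n + 1) d).toEquiv C := by
    rw [aeval_algebraMap_apply, FaithfulSMul.algebraMap_eq_zero_iff, hx]
  have hzero (i) : aeval c (tupleForm f i) = 0 := by
    rw [← hc _ (Ideal.subset_span ⟨i, rfl⟩), aeval_tupleForm, aeval_tupleForm]
    rfl
  have hlast := (add_le_add_right hrk _).trans
    (eRk_add_eRk_le_eRk_union (K := K) (Set.range_comp_subset_range x (algebraMap κ F)) _)
  obtain ⟨G, hG⟩ : (C ∩ excessLocus K n d).Nonempty :=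
    closure_nonempty_iff.1 (hC.nonempty.mono hCS)
  have hinit := eRk_union_range_le_of_forall_aeval_eq_zero (K := K) (m := 2)
    (f := f ∘ subtupleIndex Fin.castSucc) (fun i ↦ hzero i.castSucc) (fun p hp ↦ ?_) hG.2.2
  · refine (aeval_eq_zero_or_eRk_range_add_one_le hd hmono hzero hlast hinit).imp
      (fun hline ↦ ?_) fun hcard ↦ ?_
    · rw [← hchart.chartIdeal_le_chartIdeal_iff (isClosed_lineLocus K n d), chartIdeal_lineLocus]
      exact fun p hp ↦ (hf p).1 (hline p hp)
    · exact dimSet_lt_dimSet_lineLocus_of_eRk_range_add_one_le hd hf hcard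
  · have hmem : rename (subtupleIndex Fin.castSucc) p ∈
        chartIdeal (tupleEquiv K (n + 1) (n + 1) d).toEquiv C := by
      rwa [← hf, aeval_rename]
    have := mem_chartIdeal.1 hmem G hG.1
    rwa [aeval_rename] at this

end Components

end

noncomputable section Statement0

open MvPolynomial

variable (K : Type*) [Field K]

/-- For `r ≥ 2` and degrees `1 ≤ d 0 ≤ ⋯ ≤ d (r-1)`, let `Z` be the locus
of `r`-tuples `(F_1, …, F_r)` with `dim V(F_1, …, F_r) ≥ 1`, let `D` be the locus where
`dim V(F_1, …, F_{r-1}) ≥ 2`, and let `L` be the locus of tuples vanishing on a common line.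
Then the Zariski closure of `Z \ D` has a unique irreducible component of maximal dimension,
and this component equals `L`: i.e. `L` is an irreducible component (a maximal irreducible
subset) of `closure (Z \ D)`, and every other irreducible component has strictly smaller
dimension. -/
theorem statement0 [IsAlgClosed K] (r : ℕ) (hr : 2 ≤ r)
    (d : Fin r → ℕ) (hd1 : ∀ i, 1 ≤ d i) (hmono : Monotone d)
    (Z D L : Set (tupleSpace K r r d))
    (hZ : Z = {F | vdimGE r r (fun i => (F i : MvPolynomial (Fin (r + 1)) K)) 1})
    (hD : D = {F | vdimGE r (r - 1)
      (fun i : Fin (r - 1) => (F (Fin.castLE (Nat.sub_le r 1) i) : MvPolynomial (Fin (r + 1)) K)) 2})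
    (hL : L = {F | vanishOnCommonLine K F}) :
    Maximal (fun t => t ⊆ closure (Z \ D) ∧ IsIrreducible t) L ∧
      ∀ C : Set (tupleSpace K r r d),
        Maximal (fun t => t ⊆ closure (Z \ D) ∧ IsIrreducible t) C → C ≠ L →
          dimSet C < dimSet L := by
  obtain ⟨n, rfl⟩ : ∃ n, r = n + 1 := ⟨r - 1, by omega⟩
  have := (isZariskiChart_tupleEquiv K (n + 1) (n + 1) d).noetherianSpace
  obtain rfl : L = lineLocus K n d := hL
  have hZD : Z \ D = excessLocus K n d := by
    rw [hZ, hD]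
    exact sdiff_eq_excessLocus
  rw [hZD]
  refine maximal_isIrreducible_and_forall_lt (lineLocus_subset_closure_excessLocus K n hd1)
    (isIrreducible_lineLocus K n d) fun C hC ↦ ?_
  exact subset_lineLocus_or_dimSet_lt hd1 hmono hC.prop.2
    (subset_closure_inter_of_maximal_isIrreducible hC)

end Statement0
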